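/- arXiv:1606.05443 — 2 statements merged into one kernel-verified Lean document; each statement's English description precedes it below -/
import Mathlib

section
/- Let l, k ∈ {0,1,2,...} ∪ {∞} with k ≤ l, let I ⊆ ℝ be an interval, and let γ : I → ℂ be a locally injective function of class C^l on I. Then the class of nowhere one-sided holomorphically extendable functions f ∈ C^k(γ) — that is, those f for which there exists no pair of a Jordan domain Ω whose boundary contains an arc γ([t1, t2]) for some t1 < t2 in I, and of a continuous function F : Ω ∪ γ((t1, t2)) → ℂ which is holomorphic on Ω and satisfies F = f on γ((t1, t2)) — is a dense and Gδ subset of C^k(γ). -/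
open Set Metric

/-- `γ` is locally injective on `I`: every point of `I` has a relative neighborhood
in `I` on which `γ` is injective. -/
def LocallyInjOn (γ : ℝ → ℂ) (I : Set ℝ) : Prop :=
  ∀ t ∈ I, ∃ ε > 0, Set.InjOn γ (I ∩ Ioo (t - ε) (t + ε))

/-- The space `C^k(γ)` of functions `f : γ(I) → ℂ` (represented by functions
`f : ℂ → ℂ`) such that `f ∘ γ` is `k` times continuously differentiable on `I`. -/
def CkGamma (k : ℕ∞) (I : Set ℝ) (γ : ℝ → ℂ) : Type :=
  {f : ℂ → ℂ // ContDiffOn ℝ k (fun t => f (γ t)) I}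

/-- The topology of `C^k(γ)`: the topology of uniform convergence on compact subsets
of `I` of all derivatives `(f ∘ γ)⁽ʲ⁾`, `j ≤ k`. -/
noncomputable def ckTop (k : ℕ∞) (I : Set ℝ) (γ : ℝ → ℂ) :
    TopologicalSpace (CkGamma k I γ) :=
  TopologicalSpace.induced
    (fun f => fun j : ℕ =>
      UniformOnFun.ofFun {K : Set ↥I | IsCompact K}
        (fun t : ↥I => if (j : ℕ∞) ≤ k then
            iteratedDerivWithin j (fun s => f.1 (γ s)) I (t : ℝ) else 0))
    inferInstance

/-- A Jordan domain: a bounded connected open subset of `ℂ` whose boundary is the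
image of a continuous injective map of the unit circle into `ℂ`. -/
def IsJordanDomain (Ω : Set ℂ) : Prop :=
  IsOpen Ω ∧ IsConnected Ω ∧ Bornology.IsBounded Ω ∧
  ∃ φ : ℂ → ℂ, ContinuousOn φ (sphere (0 : ℂ) 1) ∧ Set.InjOn φ (sphere (0 : ℂ) 1) ∧
    frontier Ω = φ '' sphere (0 : ℂ) 1

/-- `f : γ(I) → ℂ` is somewhere one-sided holomorphically extendable: there are a
Jordan domain `Ω` whose boundary contains an arc `γ([t1, t2])` for some `t1 < t2`
in `I`, and a continuous function `F` on `Ω ∪ γ((t1, t2))`, holomorphic on `Ω`,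
with `F = f` on `γ((t1, t2))`. -/
def SomewhereOneSidedHolExt (I : Set ℝ) (γ : ℝ → ℂ) (f : ℂ → ℂ) : Prop :=
  ∃ Ω : Set ℂ, IsJordanDomain Ω ∧
    ∃ t1 ∈ I, ∃ t2 ∈ I, t1 < t2 ∧
      γ '' Icc t1 t2 ⊆ frontier Ω ∧
      ∃ F : ℂ → ℂ, ContinuousOn F (Ω ∪ γ '' Ioo t1 t2) ∧
        DifferentiableOn ℂ F Ω ∧
        ∀ t ∈ Ioo t1 t2, F (γ t) = f (γ t)

section AuxProof

open Filter Topology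

/-- Homotopy lifting for the exponential. -/
theorem aux_lift {A : Type*} [TopologicalSpace A] (H : unitInterval × A → ℂ) (hH : Continuous H)
    (h0 : ∀ x, H x ≠ 0) (g : A → ℂ) (hg : Continuous g) (hg0 : ∀ a, Complex.exp (g a) = H (0, a)) :
    ∃ G : unitInterval × A → ℂ, Continuous G ∧ (∀ x, Complex.exp (G x) = H x) ∧
      ∀ a, G (0, a) = g a := by
  let H' : C(unitInterval × A, {z : ℂ // z ≠ 0}) := ⟨fun x => ⟨H x, h0 x⟩, by fun_prop⟩
  let g' : C(A, ℂ) := ⟨g, hg⟩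
  have H0 : ∀ a, H' (0, a) = (fun z : ℂ ↦ (⟨_, z.exp_ne_zero⟩ : {z : ℂ // z ≠ 0})) (g' a) := by
    intro a
    apply Subtype.ext
    exact (hg0 a).symm
  refine ⟨Complex.isCoveringMap_exp.liftHomotopy H' g' H0, ContinuousMap.continuous _, ?_, ?_⟩
  · intro x
    have := congrFun (Complex.isCoveringMap_exp.liftHomotopy_lifts H' g' H0) x
    exact congrArg Subtype.val this
  · intro a
    exact Complex.isCoveringMap_exp.liftHomotopy_zero H' g' H0 a

/-- Logarithms of nonvanishing continuous functions on real topological vector spaces. -/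
theorem aux_log {E : Type*} [AddCommGroup E] [Module ℝ E] [TopologicalSpace E]
    [ContinuousSMul ℝ E] (h : E → ℂ) (hc : Continuous h) (h0 : ∀ x, h x ≠ 0) :
    ∃ G : E → ℂ, Continuous G ∧ ∀ x, Complex.exp (G x) = h x := by
  obtain ⟨G, hG, hG1, -⟩ := aux_lift (fun x : unitInterval × E => h ((x.1 : ℝ) • x.2))
    (by fun_prop) (fun x => h0 _) (fun _ => Complex.log (h 0)) continuous_const
    (by intro a; simp [Complex.exp_log (h0 0)])
  refine ⟨fun x => G (1, x), by fun_prop, fun x => ?_⟩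
  rw [hG1]; simp

/-- A continuous function with values in `2πiℤ` on a preconnected set is constant. -/
theorem aux_const {X : Type*} [TopologicalSpace X] {S : Set X} (hS : IsPreconnected S) {f : X → ℂ}
    (hf : ContinuousOn f S) (h1 : ∀ x ∈ S, Complex.exp (f x) = 1) {x y : X} (hx : x ∈ S)
    (hy : y ∈ S) : f x = f y := by
  have hd : ∀ z ∈ S, ∃ n : ℤ, f z = n * (2 * Real.pi * Complex.I) := fun z hz =>
    Complex.exp_eq_one_iff.1 (h1 z hz)
  have hf' : ContinuousOn (fun z => (f z).im / (2 * Real.pi)) S :=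
    (Complex.continuous_im.comp_continuousOn hf).div_const _
  have hpi : (2 * Real.pi) ≠ 0 := by positivity
  choose! n hn using hd
  have hn' : ∀ z ∈ S, (f z).im / (2 * Real.pi) = n z := by
    intro z hz
    have h2 : (f z).im = n z * (2 * Real.pi) := by
      have h3 : f z = ((n z * (2 * Real.pi) : ℝ) : ℂ) * Complex.I := by
        rw [hn z hz]; push_cast; ring
      rw [h3, Complex.mul_I_im, Complex.ofReal_re]
    rw [h2]; field_simp
  have hc : ContinuousOn n S := by
    have : ContinuousOn (fun z => (n z : ℝ)) S := hf'.congr (fun z hz => (hn' z hz).symm)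
    exact (Int.isClosedEmbedding_coe_real.isInducing.continuousOn_iff).2 this
  have : n x = n y := hS.constant hc hx hy
  rw [hn x hx, hn y hy, this]

/-- The exterior of a disc is connected. -/
theorem aux_ext_conn (c : ℂ) {R : ℝ} (hR : 0 ≤ R) : IsPreconnected {z : ℂ | R < ‖z - c‖} := by
  have h1 : IsPreconnected ({0}ᶜ : Set ℂ) :=
    (isConnected_compl_singleton_of_one_lt_rank (by simp) 0).isPreconnected
  have h2 := h1.image (fun y : ℂ => c + (((R + ‖y‖) / ‖y‖ : ℝ) : ℂ) * y) (by
    intro y hy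
    have : ‖y‖ ≠ 0 := by simpa using hy
    apply ContinuousAt.continuousWithinAt
    have h3 : ContinuousAt (fun y : ℂ => (R + ‖y‖) / ‖y‖) y := by
      apply ContinuousAt.div <;> first | fun_prop | assumption
    have h4 : ContinuousAt (fun y : ℂ => (((R + ‖y‖) / ‖y‖ : ℝ) : ℂ)) y :=
      Complex.continuous_ofReal.continuousAt.comp_of_eq h3 rfl
    exact continuousAt_const.add (h4.mul continuousAt_id))
  convert h2 using 1
  ext z
  simp only [mem_ofPred_eq, mem_image, mem_compl_iff, mem_singleton_iff]
  constructor
  · intro hz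
    have hz0 : ‖z - c‖ ≠ 0 := by linarith
    have hz1 : ‖z - c‖ - R ≠ 0 := by linarith
    refine ⟨(((‖z - c‖ - R) / ‖z - c‖ : ℝ) : ℂ) * (z - c), ?_, ?_⟩
    · have : z - c ≠ 0 := by simpa using hz0
      simp only [mul_eq_zero, Complex.ofReal_eq_zero, not_or]
      exact ⟨div_ne_zero hz1 hz0, this⟩
    · have h5 : ‖(((‖z - c‖ - R) / ‖z - c‖ : ℝ) : ℂ) * (z - c)‖ = ‖z - c‖ - R := by
        rw [norm_mul, Complex.norm_real, Real.norm_eq_abs, abs_of_nonneg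
          (div_nonneg (by linarith) (norm_nonneg _))]
        field_simp
      rw [h5, ← mul_assoc, ← Complex.ofReal_mul]
      have : (R + (‖z - c‖ - R)) / (‖z - c‖ - R) * ((‖z - c‖ - R) / ‖z - c‖) = 1 := by
        field_simp; ring
      rw [this]; simp
  · rintro ⟨y, hy, rfl⟩
    have hy0 : 0 < ‖y‖ := by simpa using hy
    rw [add_sub_cancel_left, norm_mul, Complex.norm_real, Real.norm_eq_abs, abs_of_nonneg
      (by positivity)]
    rw [div_mul_cancel₀ _ hy0.ne']; linarith

/-- A disc minus a point is connected. -/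
theorem aux_ball_diff_conn (c a : ℂ) (R : ℝ) : IsPreconnected (ball c R \ {a}) := by
  by_cases ha : a ∈ ball c R
  swap
  · rw [sdiff_singleton_eq_self ha]; exact isPreconnected_ball
  obtain ⟨e, he, hae⟩ := Metric.isOpen_iff.1 isOpen_ball a ha
  have hB := convex_ball c R
  have hmem : ∀ w : ℂ, ‖w‖ < e → a + w ∈ ball c R := fun w hw => hae (by simpa using hw)
  have p1 : IsPreconnected (ball c R ∩ {z | a.re < z.re}) :=
    (hB.inter (convex_halfSpace_re_gt a.re)).isPreconnected
  have p2 : IsPreconnected (ball c R ∩ {z | a.im < z.im}) :=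
    (hB.inter (convex_halfSpace_im_gt a.im)).isPreconnected
  have p3 : IsPreconnected (ball c R ∩ {z | z.re < a.re}) :=
    (hB.inter (convex_halfSpace_re_lt a.re)).isPreconnected
  have p4 : IsPreconnected (ball c R ∩ {z | z.im < a.im}) :=
    (hB.inter (convex_halfSpace_im_lt a.im)).isPreconnected
  have hsmall : ∀ x y : ℝ, |x| = 1 → |y| = 1 → ‖(⟨e / 3 * x, e / 3 * y⟩ : ℂ)‖ < e := by
    intro x y hx hy
    have := Complex.norm_le_abs_re_add_abs_im (⟨e / 3 * x, e / 3 * y⟩ : ℂ)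
    simp only [abs_mul, hx, hy, abs_of_pos (show (0:ℝ) < e / 3 by positivity)] at this
    linarith
  have q1 : IsPreconnected (ball c R ∩ {z | a.re < z.re} ∪ ball c R ∩ {z | a.im < z.im}) :=
    p1.union (a + ⟨e / 3 * 1, e / 3 * 1⟩) ⟨hmem _ (hsmall 1 1 (by simp) (by simp)), by simp; positivity⟩
      ⟨hmem _ (hsmall 1 1 (by simp) (by simp)), by simp; positivity⟩ p2
  have q2 : IsPreconnected ((ball c R ∩ {z | a.re < z.re} ∪ ball c R ∩ {z | a.im < z.im}) ∪
      ball c R ∩ {z | z.re < a.re}) :=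
    q1.union (a + ⟨e / 3 * (-1), e / 3 * 1⟩)
      (Or.inr ⟨hmem _ (hsmall (-1) 1 (by simp) (by simp)), by simp; positivity⟩)
      ⟨hmem _ (hsmall (-1) 1 (by simp) (by simp)), by simp; positivity⟩ p3
  have q3 : IsPreconnected (((ball c R ∩ {z | a.re < z.re} ∪ ball c R ∩ {z | a.im < z.im}) ∪
      ball c R ∩ {z | z.re < a.re}) ∪ ball c R ∩ {z | z.im < a.im}) :=
    q2.union (a + ⟨e / 3 * (-1), e / 3 * (-1)⟩)
      (Or.inr ⟨hmem _ (hsmall (-1) (-1) (by simp) (by simp)), by simp; positivity⟩)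
      ⟨hmem _ (hsmall (-1) (-1) (by simp) (by simp)), by simp; positivity⟩ p4
  convert q3 using 1
  ext z
  simp only [Set.mem_sdiff, mem_singleton_iff, mem_union, mem_inter_iff, mem_ofPred_eq, Complex.ext_iff]
  have h1 : z.re < a.re ∨ a.re < z.re ↔ ¬ z.re = a.re :=
    ⟨fun h => by rcases h with h | h <;> [exact h.ne; exact h.ne'], fun h => lt_or_gt_of_ne h⟩
  have h2 : z.im < a.im ∨ a.im < z.im ↔ ¬ z.im = a.im :=
    ⟨fun h => by rcases h with h | h <;> [exact h.ne; exact h.ne'], fun h => lt_or_gt_of_ne h⟩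
  tauto

/-- `a` and `b` in a preconnected subset of the complement of `K`: the function
`(z - a) / (z - b)` has a logarithm on `K`. -/
theorem aux_log_of_conn {K W : Set ℂ} (hK : IsCompact K) (hW : IsPreconnected W)
    (hWK : Disjoint W K) {a b : ℂ} (ha : a ∈ W) (hb : b ∈ W) :
    ∃ g : ℂ → ℂ, ContinuousOn g K ∧ ∀ z ∈ K, Complex.exp (g z) = (z - a) / (z - b) := by
  let r : ℂ → ℂ → Prop := fun a b =>
    ∃ g : ℂ → ℂ, ContinuousOn g K ∧ ∀ z ∈ K, Complex.exp (g z) = (z - a) / (z - b)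
  have hne : ∀ x ∈ W, ∀ z ∈ K, z - x ≠ 0 := by
    intro x hx z hz h
    rw [sub_eq_zero] at h
    exact (disjoint_left.1 hWK hx) (h ▸ hz)
  have hloc : ∀ x ∈ W, ∀ᶠ y in 𝓝[W] x, r x y ∧ r y x := by
    intro x hx
    have hxK : x ∈ Kᶜ := disjoint_left.1 hWK hx
    obtain ⟨e, he, hball⟩ := Metric.isOpen_iff.1 hK.isClosed.isOpen_compl x hxK
    have key : ∀ p q : ℂ, p ∈ W → q ∈ W → (∀ z ∈ K, ‖p - q‖ < ‖z - q‖) → r p q := by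
      intro p q hp hq h
      refine ⟨fun z => Complex.log ((z - p) / (z - q)), ?_, ?_⟩
      · intro z hz
        have h1 : ContinuousAt (fun z => (z - p) / (z - q)) z := by
          apply ContinuousAt.div <;> first | fun_prop | exact hne q hq z hz
        refine (h1.clog ?_).continuousWithinAt
        suffices hs : ‖(z - p) / (z - q) - 1‖ < 1 by
          simpa using Complex.mem_slitPlane_of_norm_lt_one hs
        have : (z - p) / (z - q) - 1 = (q - p) / (z - q) := by
          have := hne q hq z hz
          field_simp; ring
        rw [this, norm_div, div_lt_one (norm_pos_iff.2 (hne q hq z hz)), norm_sub_rev]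
        exact h z hz
      · intro z hz
        exact Complex.exp_log (div_ne_zero (hne p hp z hz) (hne q hq z hz))
    filter_upwards [self_mem_nhdsWithin, mem_nhdsWithin_of_mem_nhds (ball_mem_nhds x (half_pos he))]
      with y hyW hy
    have hyx : ‖y - x‖ < e / 2 := by simpa [dist_eq_norm] using hy
    have hz : ∀ z ∈ K, e ≤ ‖z - x‖ := by
      intro z hz
      by_contra hlt
      exact hball (show z ∈ ball x e by simpa [dist_eq_norm] using hlt) hz
    refine ⟨key x y hx hyW fun z hzK => ?_, key y x hyW hx fun z hzK => ?_⟩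
    · have h1 := hz z hzK
      have h2 : ‖z - x‖ ≤ ‖z - y‖ + ‖y - x‖ := by
        simpa using norm_add_le (z - y) (y - x)
      rw [norm_sub_rev]; linarith
    · linarith [hz z hzK]
  refine hW.induction₂ r (fun x hx => (hloc x hx).mono fun y hy => hy.1) ?_ ?_ ha hb
  · rintro x y z hx hy hz ⟨g1, h1, h1'⟩ ⟨g2, h2, h2'⟩
    refine ⟨g1 + g2, h1.add h2, fun w hw => ?_⟩
    rw [Pi.add_apply, Complex.exp_add, h1' w hw, h2' w hw, div_mul_div_cancel₀]
    exact hne y hy w hw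
  · rintro x y hx hy ⟨g1, h1, h1'⟩
    refine ⟨-g1, h1.neg, fun w hw => ?_⟩
    rw [Pi.neg_apply, Complex.exp_neg, h1' w hw, inv_div]


theorem aux_frontier_cc {U : Set ℂ} (hU : IsOpen U) (a : ℂ) :
    Disjoint (frontier (connectedComponentIn U a)) U := by
  rw [Set.disjoint_left]
  intro z hz hzU
  have ho : IsOpen (connectedComponentIn U a) := hU.connectedComponentIn
  rw [ho.frontier_eq] at hz
  have h2 : IsOpen (connectedComponentIn U z) := hU.connectedComponentIn
  have hzz : z ∈ connectedComponentIn U z := mem_connectedComponentIn hzU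
  obtain ⟨w, hw1, hw2⟩ := mem_closure_iff.1 hz.1 _ h2 hzz
  have e1 := connectedComponentIn_eq hw1
  have e2 := connectedComponentIn_eq hw2
  rw [e2, ← e1] at hz
  exact hz.2 hzz

theorem aux_T2a {K : Set ℂ} (hK : IsCompact K) {a b : ℂ} (ha : a ∉ K) (g : ℂ → ℂ)
    (hb : b ∉ connectedComponentIn Kᶜ a) (hbK : b ∉ K)
    (hbd : Bornology.IsBounded (connectedComponentIn Kᶜ a))
    (hg : ContinuousOn g K) (hexp : ∀ z ∈ K, Complex.exp (g z) = (z - a) / (z - b)) : False := by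
  classical
  set W := connectedComponentIn Kᶜ a with hW
  have haW : a ∈ W := mem_connectedComponentIn ha
  obtain ⟨g', hg'⟩ := ContinuousMap.exists_restrict_eq (Y := ℂ) hK.isClosed
    ⟨_, continuousOn_iff_continuous_domRestrict.1 hg⟩
  have hg'' : ∀ z ∈ K, g' z = g z := by
    intro z hz
    have := congrArg (fun f => f ⟨z, hz⟩) hg'
    simpa using this
  let h : ℂ → ℂ := fun z => if z ∈ W then (z - b) * Complex.exp (g' z) else z - a
  have hc : Continuous h := by
    apply Continuous.if
    · intro z hz
      have hzK : z ∈ K := by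
        by_contra hzK
        exact Set.disjoint_left.1 (aux_frontier_cc hK.isClosed.isOpen_compl a) hz hzK
      rw [hg'' z hzK, hexp z hzK]
      have : z - b ≠ 0 := by
        intro h0; rw [sub_eq_zero] at h0; exact hbK (h0 ▸ hzK)
      field_simp
    · fun_prop
    · fun_prop
  have h0 : ∀ z, h z ≠ 0 := by
    intro z
    by_cases hz : z ∈ W
    · simp only [h, hz, if_true]
      refine mul_ne_zero ?_ (Complex.exp_ne_zero _)
      intro h0; rw [sub_eq_zero] at h0; exact hb (h0 ▸ hz)
    · simp only [h, hz, if_false]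
      intro h0; rw [sub_eq_zero] at h0; exact hz (h0 ▸ haW)
  obtain ⟨G, hG, hGe⟩ := aux_log h hc h0
  obtain ⟨R0, hR0⟩ := hbd.subset_closedBall a
  set R : ℝ := |R0| + 1 with hR
  have hRpos : 0 < R := by positivity
  have hcirc : ∀ θ : ℝ, a + R * Complex.exp (θ * Complex.I) ∉ W := by
    intro θ hθ
    have := hR0 hθ
    rw [mem_closedBall, dist_eq_norm] at this
    simp only [add_sub_cancel_left, norm_mul, Complex.norm_exp_ofReal_mul_I, mul_one,
      Complex.norm_real, Real.norm_eq_abs, abs_of_pos hRpos] at this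
    have := le_abs_self R0
    linarith
  have := aux_const (S := (univ : Set ℝ)) isPreconnected_univ
    (f := fun θ : ℝ => G (a + R * Complex.exp (θ * Complex.I)) - θ * Complex.I - Complex.log R)
    (by fun_prop) (by
      intro θ _
      rw [Complex.exp_sub, Complex.exp_sub, hGe, Complex.exp_log (by exact_mod_cast hRpos.ne')]
      simp only [h, hcirc θ, if_false]
      have : (R : ℂ) ≠ 0 := by exact_mod_cast hRpos.ne'
      have := Complex.exp_ne_zero (θ * Complex.I)
      field_simp
      ring) (mem_univ 0) (mem_univ (2 * Real.pi))
  have e : Complex.exp (((2 * Real.pi : ℝ) : ℂ) * Complex.I) = 1 := by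
    push_cast; exact Complex.exp_two_pi_mul_I
  simp only [e] at this
  simp at this
  exact Complex.two_pi_I_ne_zero (by linear_combination this)

/-- T2 -/
theorem aux_T2 {K : Set ℂ} (hK : IsCompact K) {a b : ℂ} (ha : a ∉ K) (hb : b ∉ K) (g : ℂ → ℂ)
    (hg : ContinuousOn g K) (hexp : ∀ z ∈ K, Complex.exp (g z) = (z - a) / (z - b)) :
    b ∈ connectedComponentIn Kᶜ a := by
  by_contra hba
  obtain ⟨R, hR0, hR⟩ := hK.isBounded.subset_closedBall_lt 0 0
  have hE := aux_ext_conn 0 hR0.le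
  have hEK : {z : ℂ | R < ‖z - 0‖} ⊆ Kᶜ := by
    intro z hz hzK
    have := hR hzK
    simp at this hz
    linarith
  have key : ∀ x, (connectedComponentIn Kᶜ x ∩ {z : ℂ | R < ‖z - 0‖}).Nonempty ∨
      Bornology.IsBounded (connectedComponentIn Kᶜ x) := by
    intro x
    by_cases h : (connectedComponentIn Kᶜ x ∩ {z : ℂ | R < ‖z - 0‖}).Nonempty
    · exact Or.inl h
    · right
      refine (isBounded_closedBall (x := (0:ℂ)) (r := R)).subset ?_
      intro z hz
      by_contra hz2
      exact h ⟨z, hz, by simpa using hz2⟩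
  rcases key a with ⟨z, hz1, hz2⟩ | h1
  · rcases key b with ⟨w, hw1, hw2⟩ | h2
    · apply hba
      have e1 := connectedComponentIn_eq hz1
      have e2 := connectedComponentIn_eq hw1
      have := hE.subset_connectedComponentIn hz2 hEK hw2
      have e3 := connectedComponentIn_eq this
      rw [e1, e3, ← e2]
      exact mem_connectedComponentIn hb
    · refine aux_T2a hK hb (fun z => - g z) (b := a) ?_ ha h2 hg.neg ?_
      · intro h
        apply hba
        rw [← connectedComponentIn_eq h]
        exact mem_connectedComponentIn hb
      · intro z hz
        rw [Complex.exp_neg, hexp z hz, inv_div]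
  · exact aux_T2a hK ha g hba hb h1 hg hexp


theorem aux_front {s u : Set ℂ} (hs : IsPreconnected s) (hu : IsOpen u)
    (hd : ∀ z ∈ s, z ∉ frontier u) (hne : (s ∩ u).Nonempty) : s ⊆ u := by
  refine IsPreconnected.subset_left_of_subset_union hu (isClosed_closure (s := u)).isOpen_compl
    ?_ ?_ hne hs
  · rw [Set.disjoint_left]
    exact fun z hz h => h (subset_closure hz)
  · intro z hz
    by_cases h : z ∈ u
    · exact Or.inl h
    · right
      intro hc
      exact hd z hz (by rw [hu.frontier_eq]; exact ⟨hc, h⟩)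

theorem aux_inv {X Y : Type*} [TopologicalSpace X] [TopologicalSpace Y] [T2Space Y] [Nonempty X]
    {S : Set X} (hS : IsCompact S) {φ : X → Y} (hφ : ContinuousOn φ S) (hinj : InjOn φ S) :
    ContinuousOn (Function.invFunOn φ S) (φ '' S) := by
  rw [continuousOn_iff_isClosed]
  intro C hC
  refine ⟨φ '' (S ∩ C), ((hS.inter_right hC).image_of_continuousOn
    (hφ.mono inter_subset_left)).isClosed, ?_⟩
  ext z
  constructor
  · rintro ⟨hz1, x, hx, rfl⟩
    rw [mem_preimage, hinj.leftInvOn_invFunOn hx] at hz1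
    exact ⟨⟨x, ⟨hx, hz1⟩, rfl⟩, ⟨x, hx, rfl⟩⟩
  · rintro ⟨⟨x, ⟨hx, hxC⟩, rfl⟩, -⟩
    refine ⟨?_, ⟨x, hx, rfl⟩⟩
    rw [mem_preimage, hinj.leftInvOn_invFunOn hx]
    exact hxC

theorem aux_angle {φ : ℂ → ℂ} (hφ : ContinuousOn φ (sphere (0 : ℂ) 1))
    (hinj : InjOn φ (sphere (0 : ℂ) 1)) {z0 : ℂ} (hz0 : z0 ∈ sphere (0 : ℂ) 1) :
    ∃ Θ : ℂ → ℝ, ContinuousOn Θ (φ '' sphere (0 : ℂ) 1 \ {φ z0}) ∧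
      (∀ z ∈ φ '' sphere (0 : ℂ) 1 \ {φ z0}, Θ z ∈ Ioo (-Real.pi) Real.pi ∧
        φ (-z0 * Complex.exp (Θ z * Complex.I)) = z) ∧
      (∀ θ ∈ Ioo (-Real.pi) Real.pi, Θ (φ (-z0 * Complex.exp (θ * Complex.I))) = θ ∧
        φ (-z0 * Complex.exp (θ * Complex.I)) ∈ φ '' sphere (0 : ℂ) 1 \ {φ z0}) := by
  have hn : ‖z0‖ = 1 := by simpa using hz0
  have hz00 : z0 ≠ 0 := by intro h; simp [h] at hn
  have hmem : ∀ θ : ℝ, -z0 * Complex.exp (θ * Complex.I) ∈ sphere (0 : ℂ) 1 := by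
    intro θ; simp [Complex.norm_exp_ofReal_mul_I, hn]
  set ι := Function.invFunOn φ (sphere (0 : ℂ) 1) with hι
  have hιc := aux_inv (isCompact_sphere (0:ℂ) 1) hφ hinj
  have hιl : ∀ w ∈ sphere (0 : ℂ) 1, ι (φ w) = w := fun w hw => hinj.leftInvOn_invFunOn hw
  have hslit : ∀ w ∈ sphere (0 : ℂ) 1, w ≠ z0 → w / (-z0) ∈ Complex.slitPlane := by
    intro w hw hne
    rw [Complex.mem_slitPlane_iff]
    by_contra hcon
    push Not at hcon
    have hw1 : ‖w / (-z0)‖ = 1 := by simp [hn]; simpa using hw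
    have him := hcon.2
    have hre := hcon.1
    have : w / (-z0) = -1 := by
      have h2 : ((w / (-z0)).re : ℂ) = w / (-z0) := by
        apply Complex.ext <;> simp [him] 
      rw [← h2, Complex.norm_real, Real.norm_eq_abs, abs_of_nonpos hre] at hw1
      rw [← h2, show (w / (-z0)).re = -1 by linarith]; simp
    apply hne
    field_simp at this
    linear_combination -this
  refine ⟨fun z => Complex.arg (ι z / (-z0)), ?_, ?_, ?_⟩
  · intro z hz
    obtain ⟨⟨w, hw, rfl⟩, hne⟩ := hz
    have hne' : w ≠ z0 := by rintro rfl; exact hne rfl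
    have h1 : ContinuousWithinAt (fun z => ι z / (-z0)) (φ '' sphere (0 : ℂ) 1 \ {φ z0}) (φ w) :=
      ((hιc _ ⟨w, hw, rfl⟩).mono sdiff_subset).div_const _
    refine ContinuousAt.comp_continuousWithinAt (g := Complex.arg) ?_ h1
    apply Complex.continuousAt_arg
    rw [hιl w hw]
    exact hslit w hw hne'
  · rintro z ⟨⟨w, hw, rfl⟩, hne⟩
    have hne' : w ≠ z0 := by rintro rfl; exact hne rfl
    have hs := hslit w hw hne'
    rw [Complex.mem_slitPlane_iff_arg] at hs
    simp only [hιl w hw]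
    refine ⟨⟨Complex.neg_pi_lt_arg _, lt_of_le_of_ne (Complex.arg_le_pi _) hs.1⟩, ?_⟩
    congr 1
    have hw1 : ‖w / (-z0)‖ = 1 := by simp [hn]; simpa using hw
    have := Complex.norm_mul_exp_arg_mul_I (w / (-z0))
    rw [hw1] at this
    simp only [Complex.ofReal_one, one_mul] at this
    rw [this]
    field_simp
  · intro θ hθ
    have e1 : ι (φ (-z0 * Complex.exp (θ * Complex.I))) / (-z0) = Complex.exp (θ * Complex.I) := by
      rw [hιl _ (hmem θ)]; field_simp
    have e2 : Complex.arg (Complex.exp (θ * Complex.I)) = θ := by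
      rw [Complex.arg_exp_mul_I]
      exact (toIocMod_eq_self _).2 ⟨hθ.1, by linarith [hθ.2]⟩
    refine ⟨by simp only [e1, e2], ⟨_, hmem θ, rfl⟩, ?_⟩
    intro h
    have h2 := hinj (hmem θ) hz0 h
    have h3 : Complex.exp (θ * Complex.I) = -1 := by
      have : z0 * (Complex.exp (θ * Complex.I) + 1) = 0 := by linear_combination -h2
      rcases mul_eq_zero.1 this with h | h
      · exact absurd h hz00
      · linear_combination h
    rw [h3] at e2
    simp at e2
    linarith [hθ.2]

theorem aux_T6 {φ : ℂ → ℂ} (hφ : ContinuousOn φ (sphere (0 : ℂ) 1))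
    (hinj : InjOn φ (sphere (0 : ℂ) 1)) {x y : ℂ} (hx : x ∉ φ '' sphere (0 : ℂ) 1)
    (hy : y ∉ φ '' sphere (0 : ℂ) 1)
    (hyx : y ∉ connectedComponentIn (φ '' sphere (0 : ℂ) 1)ᶜ x) :
    frontier (connectedComponentIn (φ '' sphere (0 : ℂ) 1)ᶜ x) = φ '' sphere (0 : ℂ) 1 := by
  set J := φ '' sphere (0 : ℂ) 1 with hJ
  have hJc : IsCompact J := (isCompact_sphere (0:ℂ) 1).image_of_continuousOn hφ
  set W := connectedComponentIn Jᶜ x with hW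
  have hWo : IsOpen W := hJc.isClosed.isOpen_compl.connectedComponentIn
  have hsub : frontier W ⊆ J := by
    intro z hz
    by_contra hzK
    exact Set.disjoint_left.1 (aux_frontier_cc hJc.isClosed.isOpen_compl x) hz hzK
  refine hsub.antisymm ?_
  rintro p ⟨z0, hz0, rfl⟩
  by_contra hp
  obtain ⟨Θ, hΘc, hΘ1, hΘ2⟩ := aux_angle hφ hinj hz0
  have hn : ‖z0‖ = 1 := by simpa using hz0
  have hmem : ∀ θ : ℝ, -z0 * Complex.exp (θ * Complex.I) ∈ sphere (0 : ℂ) 1 := by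
    intro θ; simp [Complex.norm_exp_ofReal_mul_I, hn]
  have hψ : Continuous (fun θ : ℝ => φ (-z0 * Complex.exp (θ * Complex.I))) :=
    hφ.comp_continuous (by fun_prop) hmem
  have hnex : ∀ z ∈ J, z - x ≠ 0 := fun z hz h => hx (sub_eq_zero.1 h ▸ hz)
  have hney : ∀ z ∈ J, z - y ≠ 0 := fun z hz h => hy (sub_eq_zero.1 h ▸ hz)
  obtain ⟨G, hG, hGe⟩ := aux_log (fun θ : ℝ => (φ (-z0 * Complex.exp (θ * Complex.I)) - x) /
      (φ (-z0 * Complex.exp (θ * Complex.I)) - y))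
    ((hψ.sub continuous_const).div (hψ.sub continuous_const) (fun θ => hney _ ⟨_, hmem θ, rfl⟩))
    (fun θ => div_ne_zero (hnex _ ⟨_, hmem θ, rfl⟩) (hney _ ⟨_, hmem θ, rfl⟩))
  have hKJ : frontier W ⊆ J \ {φ z0} := fun z hz => ⟨hsub hz, fun h => hp (h ▸ hz)⟩
  have hT := aux_T2 (K := frontier W) (hJc.of_isClosed_subset isClosed_frontier hsub)
    (a := x) (b := y) (fun h => hx (hsub h)) (fun h => hy (hsub h)) (fun z => G (Θ z))
    (hG.comp_continuousOn (hΘc.mono hKJ)) (by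
      intro z hz
      rw [hGe, (hΘ1 z (hKJ hz)).2])
  have hcc : IsPreconnected (connectedComponentIn (frontier W)ᶜ x) :=
    isPreconnected_connectedComponentIn
  exact hyx (aux_front hcc hWo (fun z hz h => connectedComponentIn_subset _ _ hz h)
      ⟨x, mem_connectedComponentIn (fun h => hx (hsub h)), mem_connectedComponentIn hx⟩ hT)


theorem aux_arg45 {e : ℝ} (he : 0 < e) (he1 : e ≤ 1) :
    Real.pi / 4 ≤ (Complex.log (e + Complex.I)).im ∧
    (Complex.log (e - Complex.I)).im = - (Complex.log (e + Complex.I)).im := by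
  rw [Complex.log_im, Complex.log_im]
  constructor
  · by_contra! h
    have hre : 0 < ((e:ℂ) + Complex.I).re := by simpa using he
    have h1 := Complex.abs_arg_lt_pi_div_two_iff.2 (Or.inl hre)
    rw [abs_lt] at h1
    have := Real.strictMonoOn_tan ⟨h1.1, h1.2⟩ ⟨by linarith [Real.pi_pos], by linarith [Real.pi_pos]⟩ h
    rw [Real.tan_pi_div_four, Complex.tan_arg] at this
    simp at this
    have h2 := one_le_inv_iff₀.2 ⟨he, he1⟩
    linarith
  · have : (e : ℂ) - Complex.I = (starRingEnd ℂ) (e + Complex.I) := by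
      simp [sub_eq_add_neg]
    rw [this, Complex.arg_conj, if_neg]
    intro h
    have h1 := (Complex.arg_eq_pi_iff.1 h).2
    simp at h1

theorem aux_T5 {A : Set ℂ} (hA : IsCompact A) (hAc : IsPreconnected A) {w a : ℂ} (hw : w ∈ A)
    (ha : a ∈ A) (hl : (w + a) / 2 ∉ A) :
    ∃ e0 > (0 : ℝ), ∀ e : ℝ, 0 < e → e < e0 → ∀ S : Set ℂ, IsPreconnected S →
      Disjoint S (A ∪ segment ℝ w a) →
      (w + a) / 2 + Complex.I * e * ((a - w) / 2) ∈ S →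
      (w + a) / 2 - Complex.I * e * ((a - w) / 2) ∈ S → False := by
  set ℓ := (w + a) / 2 with hℓ
  set u := (a - w) / 2 with hu
  have hu0 : u ≠ 0 := by
    intro h
    apply hl
    have : a = w := by
      have : a - w = 0 := by simpa [hu] using h
      exact sub_eq_zero.1 this
    rw [hℓ, this]; convert hw using 1; ring
  have hun : 0 < ‖u‖ := norm_pos_iff.2 hu0
  obtain ⟨d, hd, hdA⟩ : ∃ d > (0:ℝ), ∀ z ∈ A, d ≤ ‖z - ℓ‖ := by
    obtain ⟨d, hd, h⟩ := Metric.isOpen_iff.1 hA.isClosed.isOpen_compl ℓ hl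
    refine ⟨d, hd, fun z hz => ?_⟩
    by_contra! h2
    exact h (by rw [mem_ball, dist_eq_norm]; exact h2) hz
  refine ⟨min 1 (d / (3 * ‖u‖)), by positivity, ?_⟩
  intro e he he1 S hS hSd hxp hxm
  have he2 : e ≤ 1 := (he1.trans_le (min_le_left _ _)).le
  have he3 : 3 * e * ‖u‖ < d := by
    have := he1.trans_le (min_le_right _ _)
    rw [lt_div_iff₀ (by positivity)] at this
    linarith
  have hsegc : IsCompact (segment ℝ w a) := by
    rw [segment_eq_image]
    exact isCompact_Icc.image (by fun_prop)
  obtain ⟨g, hg, hge⟩ := aux_log_of_conn (hA.union hsegc) hS hSd hxp hxm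
  -- on A
  have hden : ∀ z ∈ A, 2 * e * ‖u‖ < ‖z - (ℓ - Complex.I * e * u)‖ := by
    intro z hz
    have h1 := hdA z hz
    have h2 : z - ℓ = (z - (ℓ - Complex.I * e * u)) - Complex.I * e * u := by ring
    have h3 : ‖Complex.I * e * u‖ = e * ‖u‖ := by simp [abs_of_pos he]
    have h4 := norm_sub_le (z - (ℓ - Complex.I * e * u)) (Complex.I * e * u)
    rw [← h2, h3] at h4
    linarith
  have hden0 : ∀ z ∈ A, z - (ℓ - Complex.I * e * u) ≠ 0 := by
    intro z hz h
    have := hden z hz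
    rw [h, norm_zero] at this
    have : 0 < 2 * e * ‖u‖ := by positivity
    linarith
  have hre : ∀ z ∈ A, 0 < ((z - (ℓ + Complex.I * e * u)) / (z - (ℓ - Complex.I * e * u))).re := by
    intro z hz
    have h1 : (z - (ℓ + Complex.I * e * u)) / (z - (ℓ - Complex.I * e * u)) =
        1 - 2 * (Complex.I * e * u) / (z - (ℓ - Complex.I * e * u)) := by
      have := hden0 z hz
      field_simp
      ring
    have h2 : ‖2 * (Complex.I * e * u) / (z - (ℓ - Complex.I * e * u))‖ < 1 := by
      rw [norm_div, div_lt_one (norm_pos_iff.2 (hden0 z hz))]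
      have := hden z hz
      simpa [abs_of_pos he, mul_assoc] using this
    have h3 := (Complex.re_le_norm (2 * (Complex.I * e * u) / (z - (ℓ - Complex.I * e * u)))).trans_lt h2
    rw [h1, Complex.sub_re, Complex.one_re]
    linarith
  have hAcst := aux_const hAc (f := fun z => g z - Complex.log
      ((z - (ℓ + Complex.I * e * u)) / (z - (ℓ - Complex.I * e * u))))
    ((hg.mono subset_union_left).sub (ContinuousOn.clog
      ((continuousOn_id.sub continuousOn_const).div (continuousOn_id.sub continuousOn_const) hden0)
      (fun z hz => Or.inl (hre z hz)))) (by
      intro z hz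
      have hq : (z - (ℓ + Complex.I * e * u)) / (z - (ℓ - Complex.I * e * u)) ≠ 0 := by
        intro h; have := hre z hz; rw [h] at this; simp at this
      rw [Complex.exp_sub, hge z (Or.inl hz), Complex.exp_log hq, div_self hq]) ha hw
  have hslit : ∀ s : ℝ, (e : ℂ) + s * Complex.I ∈ Complex.slitPlane := fun s => Or.inl (by simpa using he)
  have hslit' : ∀ s : ℝ, (e : ℂ) - s * Complex.I ∈ Complex.slitPlane := fun s => Or.inl (by simpa using he)
  have hP : ∀ s ∈ Icc (-1:ℝ) 1, ℓ + s * u ∈ segment ℝ w a := by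
    intro s hs
    refine ⟨(1 - s) / 2, (1 + s) / 2, by linarith [hs.2], by linarith [hs.1], by ring, ?_⟩
    simp only [Complex.real_smul, hℓ, hu]
    push_cast
    ring
  have hScst := aux_const (S := Icc (-1 : ℝ) 1) isPreconnected_Icc
    (f := fun s : ℝ => g (ℓ + s * u) - (Complex.log (e + s * Complex.I) -
      Complex.log (e - s * Complex.I) + Real.pi * Complex.I))
    (ContinuousOn.sub (ContinuousOn.comp (t := A ∪ segment ℝ w a) hg (by fun_prop)
        (fun s hs => Or.inr (hP s hs))) (ContinuousOn.add (ContinuousOn.sub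
        (ContinuousOn.clog (by fun_prop) (fun s _ => hslit s))
        (ContinuousOn.clog (by fun_prop) (fun s _ => hslit' s))) continuousOn_const)) (by
      intro s hs
      have n1 := Complex.slitPlane_ne_zero (hslit s)
      have n2 := Complex.slitPlane_ne_zero (hslit' s)
      rw [Complex.exp_sub, hge _ (Or.inr (hP s hs)), Complex.exp_add, Complex.exp_sub,
        Complex.exp_log n1, Complex.exp_log n2, Complex.exp_pi_mul_I]
      have e1 : ℓ + s * u - (ℓ + Complex.I * e * u) = -Complex.I * u * (e + s * Complex.I) := by
        linear_combination (u * s) * Complex.I_sq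
      have e2 : ℓ + s * u - (ℓ - Complex.I * e * u) = Complex.I * u * (e - s * Complex.I) := by
        linear_combination (u * s) * Complex.I_sq
      rw [e1, e2]
      have := Complex.I_ne_zero
      generalize (e : ℂ) + s * Complex.I = p at n1
      generalize (e : ℂ) - s * Complex.I = m at n2
      field_simp) (x := 1) (y := -1) (by simp) (by simp)
  have ea : ℓ + ((1:ℝ):ℂ) * u = a := by simp only [hℓ, hu]; push_cast; ring
  have ew : ℓ + ((-1:ℝ):ℂ) * u = w := by simp only [hℓ, hu]; push_cast; ring
  simp only [ea, ew] at hScst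
  simp only [Complex.ofReal_one, one_mul, Complex.ofReal_neg, neg_mul, sub_neg_eq_add,
    ← sub_eq_add_neg] at hScst
  have him1 := congrArg Complex.im hAcst
  have him2 := congrArg Complex.im hScst
  obtain ⟨hb1, hb2⟩ := aux_arg45 he he2
  simp only [Complex.sub_im, Complex.add_im] at him1 him2
  rw [hb2] at him2
  have r1 := Complex.abs_arg_lt_pi_div_two_iff.2 (Or.inl (hre a ha))
  have r2 := Complex.abs_arg_lt_pi_div_two_iff.2 (Or.inl (hre w hw))
  rw [abs_lt] at r1 r2
  simp only [Complex.log_im] at him1 him2 hb1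
  linarith [r1.1, r1.2, r2.1, r2.2]


theorem aux_T7 {φ : ℂ → ℂ} (hφ : ContinuousOn φ (sphere (0 : ℂ) 1))
    (hinj : InjOn φ (sphere (0 : ℂ) 1)) {γ : ℝ → ℂ} {t1 t2 : ℝ} (ht : t1 < t2)
    (hγ : ContinuousOn γ (Icc t1 t2)) (hγi : InjOn γ (Icc t1 t2))
    (hsub : γ '' Icc t1 t2 ⊆ φ '' sphere (0 : ℂ) 1) :
    (∀ p s q, t1 < p → p < s → s < q → q < t2 → ∃ r > (0:ℝ),
      ball (γ s) r ∩ φ '' sphere (0 : ℂ) 1 ⊆ γ '' Ioo p q) ∧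
    (∀ p q, t1 < p → p ≤ q → q < t2 →
      IsPreconnected (φ '' sphere (0 : ℂ) 1 \ γ '' Icc p q)) := by
  obtain ⟨z0, hz0, hz0e⟩ := hsub ⟨t1, left_mem_Icc.2 ht.le, rfl⟩
  obtain ⟨Θ, hΘc, hΘ1, hΘ2⟩ := aux_angle hφ hinj hz0
  set J := φ '' sphere (0 : ℂ) 1 with hJ
  rw [hz0e] at hΘc hΘ1 hΘ2
  have hmemJ : ∀ t ∈ Ioc t1 t2, γ t ∈ J \ {γ t1} := by
    intro t ht'
    refine ⟨hsub ⟨t, ⟨ht'.1.le, ht'.2⟩, rfl⟩, fun h => ?_⟩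
    exact ht'.1.ne' (hγi ⟨ht'.1.le, ht'.2⟩ (left_mem_Icc.2 ht.le) h)
  have hh : ContinuousOn (fun t => Θ (γ t)) (Ioc t1 t2) :=
    hΘc.comp (hγ.mono Ioc_subset_Icc_self) hmemJ
  have hhi : InjOn (fun t => Θ (γ t)) (Ioc t1 t2) := by
    intro s hs t ht' h
    apply hγi ⟨hs.1.le, hs.2⟩ ⟨ht'.1.le, ht'.2⟩
    rw [← (hΘ1 _ (hmemJ s hs)).2, ← (hΘ1 _ (hmemJ t ht')).2]
    simp only at h
    rw [h]
  constructor
  · intro p s q hp hps hsq hq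
    have hIcc : Icc p q ⊆ Ioc t1 t2 := fun x hx => ⟨hp.trans_le hx.1, hx.2.trans hq.le⟩
    have hs : s ∈ Ioc t1 t2 := hIcc ⟨hps.le, hsq.le⟩
    have hnb : ∃ a b, a < Θ (γ s) ∧ Θ (γ s) < b ∧ Ioo a b ⊆ (fun t => Θ (γ t)) '' Ioo p q := by
      rcases ContinuousOn.strictMonoOn_of_injOn_Icc' (hps.trans hsq).le (hh.mono hIcc)
        (hhi.mono hIcc) with h | h
      · exact ⟨_, _, h ⟨le_rfl, (hps.trans hsq).le⟩ ⟨hps.le, hsq.le⟩ hps,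
          h ⟨hps.le, hsq.le⟩ ⟨(hps.trans hsq).le, le_rfl⟩ hsq,
          intermediate_value_Ioo (hps.trans hsq).le (hh.mono hIcc)⟩
      · exact ⟨_, _, h ⟨hps.le, hsq.le⟩ ⟨(hps.trans hsq).le, le_rfl⟩ hsq,
          h ⟨le_rfl, (hps.trans hsq).le⟩ ⟨hps.le, hsq.le⟩ hps,
          intermediate_value_Ioo' (hps.trans hsq).le (hh.mono hIcc)⟩
    obtain ⟨a, b, ha, hb, hab⟩ := hnb
    have hev := (hΘc _ (hmemJ s hs)) (Ioo_mem_nhds ha hb)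
    obtain ⟨r, hr, hrs⟩ := Metric.mem_nhdsWithin_iff.1 hev
    have hne : 0 < dist (γ s) (γ t1) := dist_pos.2 (hmemJ s hs).2
    refine ⟨min r (dist (γ s) (γ t1)), lt_min hr hne, ?_⟩
    rintro z ⟨hz1, hz2⟩
    rw [mem_ball, lt_min_iff] at hz1
    have hz3 : z ∈ J \ {γ t1} := by
      refine ⟨hz2, ?_⟩
      rintro rfl
      have := hz1.2
      rw [dist_comm] at this
      exact lt_irrefl _ this
    obtain ⟨t, htt, hte⟩ := hab (hrs ⟨hz1.1, hz3⟩)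
    refine ⟨t, htt, ?_⟩
    rw [← (hΘ1 z hz3).2, ← (hΘ1 _ (hmemJ t (hIcc (Ioo_subset_Icc_self htt)))).2]
    simp only at hte
    rw [hte]
  · intro p q hp hpq hq
    have hIcc : Icc p q ⊆ Ioc t1 t2 := fun x hx => ⟨hp.trans_le hx.1, hx.2.trans hq.le⟩
    have hcon : IsConnected ((fun t => Θ (γ t)) '' Icc p q) :=
      (isConnected_Icc hpq).image _ (hh.mono hIcc)
    have hcomp : IsCompact ((fun t => Θ (γ t)) '' Icc p q) :=
      isCompact_Icc.image_of_continuousOn (hh.mono hIcc)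
    have hEq := eq_Icc_of_connected_compact hcon hcomp
    set c := sInf ((fun t => Θ (γ t)) '' Icc p q)
    set d := sSup ((fun t => Θ (γ t)) '' Icc p q)
    have hcd : c ≤ d := by
      have := hcon.nonempty
      rw [hEq] at this
      exact nonempty_Icc.1 this
    have hsubI : Icc c d ⊆ Ioo (-Real.pi) Real.pi := by
      rw [← hEq]
      rintro _ ⟨t, ht', rfl⟩
      exact (hΘ1 _ (hmemJ t (hIcc ht'))).1
    have hc := hsubI (left_mem_Icc.2 hcd)
    have hd := hsubI (right_mem_Icc.2 hcd)
    have hn : ‖z0‖ = 1 := by simpa using hz0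
    have hmem : ∀ θ : ℝ, -z0 * Complex.exp (θ * Complex.I) ∈ sphere (0 : ℂ) 1 := by
      intro θ; simp [Complex.norm_exp_ofReal_mul_I, hn]
    set ψ : ℝ → ℂ := fun θ => φ (-z0 * Complex.exp (θ * Complex.I)) with hψd
    have hψ : Continuous ψ := hφ.comp_continuous (by fun_prop) hmem
    have hpi : ψ Real.pi = γ t1 := by
      simp only [hψd, Complex.exp_pi_mul_I, ← hz0e]; congr 1; ring
    have hpi' : ψ (-Real.pi) = γ t1 := by
      simp only [hψd, ← hz0e]; congr 1
      rw [Complex.ofReal_neg, neg_mul (Real.pi : ℂ), Complex.exp_neg, Complex.exp_pi_mul_I]; norm_num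
    have key : J \ γ '' Icc p q = ψ '' Ico (-Real.pi) c ∪ ψ '' Ioc d Real.pi := by
      ext z
      constructor
      · rintro ⟨hz1, hz2⟩
        by_cases hz : z = γ t1
        · left; exact ⟨-Real.pi, ⟨le_rfl, hc.1⟩, by rw [hz, hpi']⟩
        · have hz3 : z ∈ J \ {γ t1} := ⟨hz1, hz⟩
          obtain ⟨h1, h2⟩ := hΘ1 z hz3
          have hnot : Θ z ∉ Icc c d := by
            rw [← hEq]
            rintro ⟨t, ht', hte⟩
            apply hz2
            refine ⟨t, ht', ?_⟩
            rw [← h2, ← (hΘ1 _ (hmemJ t (hIcc ht'))).2]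
            simp only at hte
            rw [hte]
          rcases lt_or_ge (Θ z) c with h | h
          · left; exact ⟨Θ z, ⟨h1.1.le, h⟩, h2⟩
          · right; exact ⟨Θ z, ⟨lt_of_not_ge (fun h' => hnot ⟨h, h'⟩), h1.2.le⟩, h2⟩
      · have aux : ∀ θ ∈ Icc (-Real.pi) Real.pi, θ ∉ Icc c d → ψ θ ∈ J \ γ '' Icc p q := by
          intro θ hθ hθn
          refine ⟨⟨_, hmem θ, rfl⟩, ?_⟩
          rintro ⟨t, ht', hte⟩
          by_cases hθ' : θ ∈ Ioo (-Real.pi) Real.pi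
          · apply hθn
            rw [← hEq]
            refine ⟨t, ht', ?_⟩
            simp only [hte]
            exact (hΘ2 θ hθ').1
          · have : ψ θ = γ t1 := by
              by_cases h1 : θ = Real.pi
              · rw [h1, hpi]
              · by_cases h2 : θ = -Real.pi
                · rw [h2, hpi']
                · exact absurd ⟨lt_of_le_of_ne hθ.1 (Ne.symm h2), lt_of_le_of_ne hθ.2 h1⟩ hθ'
            exact (hmemJ t (hIcc ht')).2 (hte.trans this)
        rintro (⟨θ, hθ, rfl⟩ | ⟨θ, hθ, rfl⟩)
        · exact aux θ ⟨hθ.1, (hθ.2.trans hc.2).le⟩ (fun h => not_le.2 hθ.2 h.1)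
        · exact aux θ ⟨(hd.1.trans hθ.1).le, hθ.2⟩ (fun h => not_le.2 hθ.1 h.2)
    rw [key]
    exact (isPreconnected_Ico.image _ hψ.continuousOn).union (γ t1) ⟨-Real.pi, ⟨le_rfl, hc.1⟩, hpi'⟩
      ⟨Real.pi, ⟨hd.2, le_rfl⟩, hpi⟩ (isPreconnected_Ioc.image _ hψ.continuousOn)


theorem aux_T8 {Ω : Set ℂ} (hΩ : IsOpen Ω) {p : ℂ} {r : ℝ} (hr : 0 < r) (hp : p ∈ frontier Ω)
    (hne : ∀ a, ∃ z ∈ frontier Ω ∩ ball p r, z ≠ a) :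
    ∃ x ∈ Ω ∩ ball p r, ∃ a ∈ frontier Ω ∩ ball p (2 * r), ∃ b ∈ frontier Ω ∩ ball p (2 * r),
      a ≠ b ∧ (∀ s ∈ Ico (0:ℝ) 1, x + s * (a - x) ∈ Ω) ∧
        (∀ s ∈ Ico (0:ℝ) 1, x + s * (b - x) ∈ Ω) := by
  by_contra hcon
  have hJne : (frontier Ω).Nonempty := ⟨p, hp⟩
  have hdisj : ∀ z ∈ Ω, z ∉ frontier Ω := fun z hz h => by
    rw [hΩ.frontier_eq] at h; exact h.2 hz
  have hex : ∀ x, ∃ y ∈ frontier Ω, infDist x (frontier Ω) = dist x y :=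
    fun x => isClosed_frontier.exists_infDist_eq_dist hJne x
  choose n hnJ hn using hex
  have hballΩ : ∀ x ∈ Ω, ball x (dist x (n x)) ⊆ Ω := by
    intro x hx
    by_cases h0 : 0 < dist x (n x)
    · refine aux_front isPreconnected_ball hΩ ?_ ⟨x, mem_ball_self h0, hx⟩
      intro z hz hzJ
      have := infDist_le_dist_of_mem (x := x) hzJ
      rw [hn, dist_comm x z] at this
      exact not_lt.2 this hz
    · rw [ball_eq_empty.2 (not_lt.1 h0)]; exact empty_subset _
  have hnb : ∀ x ∈ ball p r, n x ∈ ball p (2 * r) := by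
    intro x hx
    have h1 := infDist_le_dist_of_mem (x := x) hp
    rw [hn] at h1
    rw [mem_ball] at hx ⊢
    have := dist_triangle_left (n x) p x
    linarith
  have hseg : ∀ x1 ∈ Ω, ∀ x2 ∈ ball x1 (dist x1 (n x1)), ∀ s ∈ Ico (0:ℝ) 1,
      x2 + s * (n x1 - x2) ∈ Ω := by
    intro x1 hx1 x2 hx2 s hs
    apply hballΩ x1 hx1
    rw [mem_ball, dist_eq_norm] at hx2 ⊢
    have e : x2 + s * (n x1 - x2) - x1 = ((1 - s : ℝ) : ℂ) * (x2 - x1) + (s : ℂ) * (n x1 - x1) := by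
      push_cast; ring
    rw [e]
    refine (norm_add_le _ _).trans_lt ?_
    rw [norm_mul, norm_mul, Complex.norm_real, Complex.norm_real, Real.norm_eq_abs,
      Real.norm_eq_abs, abs_of_nonneg hs.1, abs_of_pos (by linarith [hs.2] : (0:ℝ) < 1 - s)]
    have h3 : dist x1 (n x1) = ‖n x1 - x1‖ := by rw [dist_comm, dist_eq_norm]
    rw [h3] at hx2 ⊢
    have h4 : (1 - s) * ‖x2 - x1‖ < (1 - s) * ‖n x1 - x1‖ :=
      mul_lt_mul_of_pos_left hx2 (by linarith [hs.2])
    linarith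
  have hpos : ∀ x ∈ Ω, 0 < dist x (n x) := fun x hx =>
    dist_pos.2 (fun h => hdisj x hx (h ▸ hnJ x))
  have hlc : ∀ x1 ∈ Ω ∩ ball p r, ∀ x2 ∈ ball p r, x2 ∈ ball x1 (dist x1 (n x1)) → n x1 = n x2 := by
    intro x1 hx1 x2 hx2 h12
    by_contra hab
    have hx2Ω := hballΩ x1 hx1.1 h12
    exact hcon ⟨x2, ⟨hx2Ω, hx2⟩, n x1, ⟨hnJ _, hnb _ hx1.2⟩, n x2, ⟨hnJ _, hnb _ hx2⟩, hab,
      hseg x1 hx1.1 x2 h12, hseg x2 hx2Ω x2 (mem_ball_self (hpos x2 hx2Ω))⟩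
  obtain ⟨x0, hx0b, hx0⟩ := mem_closure_iff.1 (frontier_subset_closure hp) _ isOpen_ball
    (mem_ball_self hr)
  have hUo : IsOpen (Ω ∩ ball p r) := hΩ.inter isOpen_ball
  set V := connectedComponentIn (Ω ∩ ball p r) x0 with hV
  have hVsub : V ⊆ Ω ∩ ball p r := connectedComponentIn_subset _ _
  have hx0V : x0 ∈ V := mem_connectedComponentIn ⟨hx0, hx0b⟩
  have hopen : ∀ S : Set ℂ, IsOpen {z | z ∈ Ω ∩ ball p r ∧ n z ∈ S} := by
    intro S
    rw [Metric.isOpen_iff]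
    rintro z ⟨hz, hzS⟩
    obtain ⟨e, he, hes⟩ := Metric.isOpen_iff.1 hUo z hz
    refine ⟨min e (dist z (n z)), lt_min he (hpos z hz.1), ?_⟩
    intro w hw
    have hw1 := hes (ball_subset_ball (min_le_left _ _) hw)
    refine ⟨hw1, ?_⟩
    rw [← hlc z hz w hw1.2 (ball_subset_ball (min_le_right _ _) hw)]
    exact hzS
  have hVn : ∀ z ∈ V, n z = n x0 := by
    have := IsPreconnected.subset_left_of_subset_union (hopen {n x0}) (hopen {n x0}ᶜ)
      (s := V) (by
        rw [Set.disjoint_left]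
        rintro z ⟨_, h1⟩ ⟨_, h2⟩
        exact h2 h1) (by
        intro z hz
        by_cases h : n z = n x0
        · exact Or.inl ⟨hVsub hz, h⟩
        · exact Or.inr ⟨hVsub hz, h⟩) ⟨x0, hx0V, ⟨hx0, hx0b⟩, rfl⟩ isPreconnected_connectedComponentIn
    exact fun z hz => (this hz).2
  have hfr : ∀ z ∈ ball p r \ {n x0}, z ∉ frontier V := by
    rintro z ⟨hz, hza⟩ hzf
    apply hza
    have hzU : z ∉ Ω := fun h =>
      Set.disjoint_left.1 (aux_frontier_cc hUo x0) hzf ⟨h, hz⟩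
    have hzJ : z ∈ frontier Ω := by
      rw [hΩ.frontier_eq]
      exact ⟨closure_mono (fun w hw => (hVsub hw).1) (frontier_subset_closure hzf), hzU⟩
    have hle : ∀ w ∈ V, dist w (n x0) ≤ dist w z := by
      intro w hw
      have := infDist_le_dist_of_mem (x := w) hzJ
      rwa [hn, hVn w hw] at this
    have : dist z (n x0) ≤ dist z z :=
      closure_minimal (t := {w | dist w (n x0) ≤ dist w z}) hle
        (isClosed_le (by fun_prop) (by fun_prop)) (frontier_subset_closure hzf)
    rw [dist_self] at this
    exact dist_le_zero.1 this
  have hfin := aux_front (aux_ball_diff_conn p (n x0) r) (hUo.connectedComponentIn) hfr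
    ⟨x0, ⟨hx0b, fun h => hdisj x0 hx0 (by rw [show x0 = n x0 from h]; exact hnJ x0)⟩, hx0V⟩
  obtain ⟨z, ⟨hzJ, hzb⟩, hza⟩ := hne (n x0)
  exact hdisj z (hVsub (hfin ⟨hzb, hza⟩)).1 hzJ


theorem aux_loop {ψ : ℝ → ℂ} (hψ : Continuous ψ) (h03 : ψ 0 = ψ 3) (hi : InjOn ψ (Ico 0 3)) :
    ∃ φ : ℂ → ℂ, ContinuousOn φ (sphere (0 : ℂ) 1) ∧ InjOn φ (sphere (0 : ℂ) 1) ∧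
      φ '' sphere (0 : ℂ) 1 = ψ '' Icc 0 3 := by
  classical
  have : Fact ((0:ℝ) < 3) := ⟨by norm_num⟩
  let f0 : AddCircle (3:ℝ) → ℂ := AddCircle.liftIco 3 0 ψ
  have hf0 : Continuous f0 := AddCircle.liftIco_continuous (by simpa using h03) hψ.continuousOn
  have hcoe : ∀ y : AddCircle (3:ℝ), ∃ x ∈ Ico (0:ℝ) 3, (x : AddCircle (3:ℝ)) = y ∧ f0 y = ψ x := by
    intro y
    have h := (AddCircle.equivIco (3:ℝ) 0 y).2
    have h2 := (AddCircle.equivIco (3:ℝ) 0).symm_apply_apply y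
    have h3 : ((AddCircle.equivIco (3:ℝ) 0 y : ℝ) : AddCircle (3:ℝ)) = y := h2
    refine ⟨_, by simpa using h, h3, ?_⟩
    conv_lhs => rw [← h3]
    exact AddCircle.liftIco_coe_apply h
  have hf0i : Function.Injective f0 := by
    intro y1 y2 h
    obtain ⟨x1, hx1, e1, e1'⟩ := hcoe y1
    obtain ⟨x2, hx2, e2, e2'⟩ := hcoe y2
    rw [← e1, ← e2, hi hx1 hx2 (by rw [← e1', ← e2', h])]
  let e := AddCircle.homeomorphCircle (T := (3:ℝ)) (by norm_num)
  let f : Circle → ℂ := fun z => f0 (e.symm z)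
  have hfc : Continuous f := hf0.comp e.symm.continuous
  have hfi : Function.Injective f := hf0i.comp e.symm.injective
  refine ⟨fun z => if h : z ∈ sphere (0 : ℂ) 1 then f ⟨z, by simpa [Submonoid.unitSphere] using h⟩ else 0,
    ?_, ?_, ?_⟩
  · rw [continuousOn_iff_continuous_domRestrict]
    have : Continuous (fun z : sphere (0:ℂ) 1 =>
      f ⟨z.1, by have := z.2; simpa [Submonoid.unitSphere] using this⟩) := by
      apply hfc.comp
      exact Continuous.subtype_mk continuous_subtype_val _
    convert this using 1
    ext z
    simp only [Set.domRestrict_apply, z.2, dif_pos]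
  · intro z hz w hw h
    simp only [hz, hw, dif_pos] at h
    exact congrArg Subtype.val (hfi h)
  · ext z
    constructor
    · rintro ⟨w, hw, rfl⟩
      simp only [hw, dif_pos]
      obtain ⟨x, hx, -, h⟩ := hcoe (e.symm ⟨w, by simpa [Submonoid.unitSphere] using hw⟩)
      exact ⟨x, ⟨hx.1, hx.2.le⟩, h.symm⟩
    · have key : ∀ x ∈ Ico (0:ℝ) 3, ∃ w ∈ sphere (0:ℂ) 1,
          (if h : w ∈ sphere (0 : ℂ) 1 then f ⟨w, by simpa [Submonoid.unitSphere] using h⟩ else 0) = ψ x := by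
        intro x hx
        refine ⟨(e x : Circle), by rw [mem_sphere_zero_iff_norm]; exact Circle.norm_coe _, ?_⟩
        have hm : ((e x : Circle) : ℂ) ∈ sphere (0:ℂ) 1 := by
          rw [mem_sphere_zero_iff_norm]; exact Circle.norm_coe _
        simp only [hm, dif_pos]
        have : f (e x) = f0 x := by simp [f]
        refine Eq.trans this ?_
        exact AddCircle.liftIco_coe_apply (by simpa using hx)
      rintro ⟨x, hx, rfl⟩
      by_cases hx3 : x = 3
      · obtain ⟨w, hw, h⟩ := key 0 (by simp)
        exact ⟨w, hw, by rw [hx3, ← h03]; exact h⟩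
      · obtain ⟨w, hw, h⟩ := key x ⟨hx.1, lt_of_le_of_ne hx.2 hx3⟩
        exact ⟨w, hw, h⟩

theorem aux_jordan {γ : ℝ → ℂ} {s1 s2 : ℝ} (hs : s1 < s2) (hγ : ContinuousOn γ (Icc s1 s2))
    (hγi : InjOn γ (Icc s1 s2)) {x : ℂ}
    (h1 : ∀ s ∈ Ico (0:ℝ) 1, x + s * (γ s1 - x) ∉ γ '' Icc s1 s2)
    (h2 : ∀ s ∈ Ico (0:ℝ) 1, x + s * (γ s2 - x) ∉ γ '' Icc s1 s2) :
    ∃ φ : ℂ → ℂ, ContinuousOn φ (sphere (0 : ℂ) 1) ∧ InjOn φ (sphere (0 : ℂ) 1) ∧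
      φ '' sphere (0 : ℂ) 1 = γ '' Icc s1 s2 ∪ segment ℝ (γ s2) x ∪ segment ℝ x (γ s1) := by
  let γ' : ℝ → ℂ := IccExtend hs.le (fun t => γ t)
  have hγ' : Continuous γ' := by
    apply Continuous.Icc_extend'
    exact continuousOn_iff_continuous_domRestrict.1 hγ
  have hγe : ∀ t ∈ Icc s1 s2, γ' t = γ t := fun t ht => IccExtend_of_mem _ _ ht
  let ψ : ℝ → ℂ := fun t => if t ≤ 1 then γ' (s1 + t * (s2 - s1)) else
    if t ≤ 2 then γ s2 + ((t - 1 : ℝ) : ℂ) * (x - γ s2) else x + ((t - 2 : ℝ) : ℂ) * (γ s1 - x)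
  have hψ : Continuous ψ := by
    apply Continuous.if_le (by fun_prop) _ continuous_id continuous_const
    · rintro t rfl
      rw [if_pos (by norm_num)]
      simp [hγe s2 (right_mem_Icc.2 hs.le)]
    · apply Continuous.if_le (by fun_prop) (by fun_prop) continuous_id continuous_const
      rintro t rfl
      norm_num
  have hA : ∀ t ∈ Icc (0:ℝ) 1, ψ t = γ (s1 + t * (s2 - s1)) ∧ s1 + t * (s2 - s1) ∈ Icc s1 s2 := by
    intro t ht
    have : s1 + t * (s2 - s1) ∈ Icc s1 s2 := ⟨by nlinarith [ht.1], by nlinarith [ht.2]⟩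
    refine ⟨?_, this⟩
    simp only [ψ, if_pos ht.2, hγe _ this]
  have hB : ∀ t ∈ Icc (1:ℝ) 2, ψ t = x + ((2 - t : ℝ) : ℂ) * (γ s2 - x) := by
    intro t ht
    rcases ht.1.eq_or_lt with h | h
    · rw [← h, (hA 1 (by simp)).1]; norm_num
    · simp only [ψ, if_neg (not_le.2 h), if_pos ht.2]; push_cast; ring
  have hC : ∀ t ∈ Icc (2:ℝ) 3, ψ t = x + ((t - 2 : ℝ) : ℂ) * (γ s1 - x) := by
    intro t ht
    rcases ht.1.eq_or_lt with h | h
    · rw [← h, hB 2 (by norm_num)]; norm_num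
    · have : 1 < t := by linarith
      simp only [ψ, if_neg (not_le.2 h), if_neg (not_le.2 this)]
  have hm1 : γ s1 ∈ γ '' Icc s1 s2 := ⟨s1, left_mem_Icc.2 hs.le, rfl⟩
  have hm2 : γ s2 ∈ γ '' Icc s1 s2 := ⟨s2, right_mem_Icc.2 hs.le, rfl⟩
  have hxn : x ∉ γ '' Icc s1 s2 := by simpa using h1 0 (by simp)
  have hn1 : γ s1 - x ≠ 0 := fun h => hxn (sub_eq_zero.1 h ▸ hm1)
  have hn2 : γ s2 - x ≠ 0 := fun h => hxn (sub_eq_zero.1 h ▸ hm2)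
  obtain ⟨φ, p1, p2, p3⟩ := aux_loop hψ (by
    rw [(hA 0 (by simp)).1, hC 3 (by norm_num)]; norm_num) (by
    have AA : ∀ s ∈ Icc (0:ℝ) 1, ∀ t ∈ Icc (0:ℝ) 1, ψ s = ψ t → s = t := by
      intro s hs' t ht h
      rw [(hA s hs').1, (hA t ht).1] at h
      have := hγi (hA s hs').2 (hA t ht).2 h
      have h3 : (s - t) * (s2 - s1) = 0 := by linarith
      rcases mul_eq_zero.1 h3 with h | h <;> linarith
    have BB : ∀ s ∈ Icc (1:ℝ) 2, ∀ t ∈ Icc (1:ℝ) 2, ψ s = ψ t → s = t := by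
      intro s hs' t ht h
      rw [hB s hs', hB t ht] at h
      have h3 := mul_right_cancel₀ hn2 (add_left_cancel h)
      have h4 : 2 - s = 2 - t := by exact_mod_cast h3
      linarith
    have CC : ∀ s ∈ Icc (2:ℝ) 3, ∀ t ∈ Icc (2:ℝ) 3, ψ s = ψ t → s = t := by
      intro s hs' t ht h
      rw [hC s hs', hC t ht] at h
      have h3 := mul_right_cancel₀ hn1 (add_left_cancel h)
      have h4 : s - 2 = t - 2 := by exact_mod_cast h3
      linarith
    have AB : ∀ s ∈ Icc (0:ℝ) 1, ∀ t ∈ Ioc (1:ℝ) 2, ψ s = ψ t → False := by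
      intro s hs' t ht h
      rw [(hA s hs').1, hB t ⟨ht.1.le, ht.2⟩] at h
      exact h2 (2 - t) ⟨by linarith [ht.2], by linarith [ht.1]⟩ ⟨_, (hA s hs').2, h⟩
    have AC : ∀ s ∈ Icc (0:ℝ) 1, ∀ t ∈ Ico (2:ℝ) 3, ψ s = ψ t → False := by
      intro s hs' t ht h
      rw [(hA s hs').1, hC t ⟨ht.1, ht.2.le⟩] at h
      exact h1 (t - 2) ⟨by linarith [ht.1], by linarith [ht.2]⟩ ⟨_, (hA s hs').2, h⟩
    have BC : ∀ s ∈ Ioc (1:ℝ) 2, ∀ t ∈ Ioo (2:ℝ) 3, ψ s = ψ t → False := by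
      intro s hs' t ht h
      rw [hB s ⟨hs'.1.le, hs'.2⟩, hC t ⟨ht.1.le, ht.2.le⟩] at h
      have h := add_left_cancel h
      have a1 : 0 ≤ 2 - s := by linarith [hs'.2]
      have a2 : 2 - s < 1 := by linarith [hs'.1]
      have b1 : 0 < t - 2 := by linarith [ht.1]
      have b2 : t - 2 < 1 := by linarith [ht.2]
      set σ := 2 - s
      set τ := t - 2
      have hτ : (τ : ℂ) ≠ 0 := by exact_mod_cast b1.ne'
      rcases lt_or_ge σ τ with hlt | hle
      · apply h2 (σ / τ) ⟨by positivity, (div_lt_one b1).2 hlt⟩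
        refine ⟨s1, left_mem_Icc.2 hs.le, ?_⟩
        push_cast
        field_simp
        linear_combination -h
      · have hσ0 : 0 < σ := b1.trans_le hle
        have hσ : (σ : ℂ) ≠ 0 := by exact_mod_cast hσ0.ne'
        rcases hle.eq_or_lt with he | hlt
        · rw [he] at h
          have := mul_left_cancel₀ hσ h
          have := hγi (right_mem_Icc.2 hs.le) (left_mem_Icc.2 hs.le) (sub_left_inj.1 this)
          exact hs.ne' this
        · apply h1 (τ / σ) ⟨by positivity, (div_lt_one hσ0).2 hlt⟩
          refine ⟨s2, right_mem_Icc.2 hs.le, ?_⟩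
          push_cast
          field_simp
          linear_combination h
    intro s hs' t ht h
    rcases le_or_gt s 1 with u1 | u1
    · rcases le_or_gt t 1 with v1 | v1
      · exact AA s ⟨hs'.1, u1⟩ t ⟨ht.1, v1⟩ h
      · rcases le_or_gt t 2 with v2 | v2
        · exact (AB s ⟨hs'.1, u1⟩ t ⟨v1, v2⟩ h).elim
        · exact (AC s ⟨hs'.1, u1⟩ t ⟨v2.le, ht.2⟩ h).elim
    · rcases le_or_gt s 2 with u2 | u2
      · rcases le_or_gt t 1 with v1 | v1
        · exact (AB t ⟨ht.1, v1⟩ s ⟨u1, u2⟩ h.symm).elim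
        · rcases le_or_gt t 2 with v2 | v2
          · exact BB s ⟨u1.le, u2⟩ t ⟨v1.le, v2⟩ h
          · exact (BC s ⟨u1, u2⟩ t ⟨v2, ht.2⟩ h).elim
      · rcases le_or_gt t 1 with v1 | v1
        · exact (AC t ⟨ht.1, v1⟩ s ⟨u2.le, hs'.2⟩ h.symm).elim
        · rcases le_or_gt t 2 with v2 | v2
          · exact (BC t ⟨v1, v2⟩ s ⟨u2, hs'.2⟩ h.symm).elim
          · exact CC s ⟨u2.le, hs'.2.le⟩ t ⟨v2.le, ht.2.le⟩ h)
  refine ⟨φ, p1, p2, ?_⟩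
  rw [p3]
  ext z
  constructor
  · rintro ⟨t, ht, rfl⟩
    rcases le_or_gt t 1 with v1 | v1
    · exact Or.inl (Or.inl ⟨_, (hA t ⟨ht.1, v1⟩).2, (hA t ⟨ht.1, v1⟩).1.symm⟩)
    · rcases le_or_gt t 2 with v2 | v2
      · left; right
        rw [hB t ⟨v1.le, v2⟩]
        refine ⟨2 - t, t - 1, by linarith, by linarith, by ring, ?_⟩
        simp only [Complex.real_smul]; push_cast; ring
      · right
        rw [hC t ⟨v2.le, ht.2⟩]
        refine ⟨3 - t, t - 2, by linarith [ht.2], by linarith, by ring, ?_⟩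
        simp only [Complex.real_smul]; push_cast; ring
  · rintro ((⟨t, ht, rfl⟩ | ⟨a, b, ha, hb, hab, rfl⟩) | ⟨a, b, ha, hb, hab, rfl⟩)
    · have h21 : 0 < s2 - s1 := by linarith
      have hm : (t - s1) / (s2 - s1) ∈ Icc (0:ℝ) 1 :=
        ⟨div_nonneg (by linarith [ht.1]) h21.le, (div_le_one h21).2 (by linarith [ht.2])⟩
      refine ⟨(t - s1) / (s2 - s1), ⟨hm.1, by linarith [hm.2]⟩, ?_⟩
      rw [(hA _ hm).1]
      congr 1
      field_simp
      ring
    · refine ⟨1 + b, ⟨by linarith, by linarith⟩, ?_⟩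
      rw [hB _ ⟨by linarith, by linarith⟩]
      have : a = 1 - b := by linarith
      rw [this]
      simp only [Complex.real_smul]; push_cast; ring
    · refine ⟨2 + b, ⟨by linarith, by linarith⟩, ?_⟩
      rw [hC _ ⟨by linarith, by linarith⟩]
      have : a = 1 - b := by linarith
      rw [this]
      simp only [Complex.real_smul]; push_cast; ring


theorem aux_T9a {Ω : Set ℂ} (hΩ : IsOpen Ω) {φ : ℂ → ℂ} (hφ : ContinuousOn φ (sphere (0 : ℂ) 1))
    (hφi : InjOn φ (sphere (0 : ℂ) 1)) (hJ : frontier Ω = φ '' sphere (0 : ℂ) 1)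
    {γ : ℝ → ℂ} {T1 T2 p q : ℝ} (hT : T1 < T2)
    (hγ : ContinuousOn γ (Icc T1 T2)) (hγi : InjOn γ (Icc T1 T2))
    (hsub : γ '' Icc T1 T2 ⊆ frontier Ω) (hp : T1 < p) (hq : q < T2)
    {c : ℂ} {ρ : ℝ} (hBJ : ball c ρ ∩ frontier Ω ⊆ γ '' Ioo p q)
    {x : ℂ} (hx : x ∈ Ω ∩ ball c ρ) {s1 s2 : ℝ} (hs : s1 < s2) (hs1 : p < s1) (hs2 : s2 < q)
    (hsB : γ '' Icc s1 s2 ⊆ ball c ρ)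
    (h1 : ∀ s ∈ Ico (0:ℝ) 1, x + s * (γ s1 - x) ∈ Ω)
    (h2 : ∀ s ∈ Ico (0:ℝ) 1, x + s * (γ s2 - x) ∈ Ω) :
    connectedComponentIn (ball c ρ \ γ '' Icc p q) x ⊆ Ω ∧
    ∃ Ω', IsJordanDomain Ω' ∧ Ω' ⊆ connectedComponentIn (ball c ρ \ γ '' Icc p q) x ∧
      γ '' Icc s1 s2 ⊆ frontier Ω' := by
  have hdisj : ∀ z ∈ Ω, z ∉ frontier Ω := fun z hz h => by
    rw [hΩ.frontier_eq] at h; exact h.2 hz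
  have hpq : Icc p q ⊆ Icc T1 T2 := Icc_subset_Icc hp.le hq.le
  have hss : Icc s1 s2 ⊆ Icc p q := Icc_subset_Icc hs1.le hs2.le
  have hssT : Icc s1 s2 ⊆ Icc T1 T2 := hss.trans hpq
  have hΓJ : γ '' Icc p q ⊆ frontier Ω := (image_mono hpq).trans hsub
  have hsJ : γ '' Icc s1 s2 ⊆ frontier Ω := (image_mono hssT).trans hsub
  have hT1B : γ T1 ∉ ball c ρ := by
    intro h
    obtain ⟨t, ht, hte⟩ := hBJ ⟨h, hsub ⟨T1, left_mem_Icc.2 hT.le, rfl⟩⟩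
    have := hγi (hpq ⟨ht.1.le, ht.2.le⟩) (left_mem_Icc.2 hT.le) hte
    linarith [ht.1]
  have hΓc : IsCompact (γ '' Icc p q) := isCompact_Icc.image_of_continuousOn (hγ.mono hpq)
  have hUo : IsOpen (ball c ρ \ γ '' Icc p q) := isOpen_ball.sdiff hΓc.isClosed
  set V := connectedComponentIn (ball c ρ \ γ '' Icc p q) x with hV
  have hVo : IsOpen V := hUo.connectedComponentIn
  have hVs : V ⊆ ball c ρ \ γ '' Icc p q := connectedComponentIn_subset _ _
  have hxV : x ∈ V := mem_connectedComponentIn ⟨hx.2, fun h => hdisj x hx.1 (hΓJ h)⟩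
  refine ⟨?_, ?_⟩
  · refine aux_front isPreconnected_connectedComponentIn hΩ ?_ ⟨x, hxV, hx.1⟩
    intro z hz hzJ
    exact (hVs hz).2 (image_mono Ioo_subset_Icc_self (hBJ ⟨(hVs hz).1, hzJ⟩))
  set a := γ s1 with ha
  set b := γ s2 with hb
  have haγ : a ∈ γ '' Icc s1 s2 := ⟨s1, left_mem_Icc.2 hs.le, rfl⟩
  have hbγ : b ∈ γ '' Icc s1 s2 := ⟨s2, right_mem_Icc.2 hs.le, rfl⟩
  have hab : a ≠ b := fun h => hs.ne
    (hγi (hssT (left_mem_Icc.2 hs.le)) (hssT (right_mem_Icc.2 hs.le)) h)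
  obtain ⟨φ', p1, p2, p3⟩ := aux_jordan hs (hγ.mono hssT) (hγi.mono hssT) (x := x)
    (fun s hs' h => hdisj _ (h1 s hs') (hsJ h)) (fun s hs' h => hdisj _ (h2 s hs') (hsJ h))
  set J' := φ' '' sphere (0 : ℂ) 1 with hJ'
  have hJ'c : IsCompact J' := (isCompact_sphere (0:ℂ) 1).image_of_continuousOn p1
  have hsegc : ∀ y z : ℂ, IsCompact (segment ℝ y z) := by
    intro y z
    rw [segment_eq_image]
    exact isCompact_Icc.image (by fun_prop)
  -- points on segments
  have hsegΩ : ∀ y, (∀ s ∈ Ico (0:ℝ) 1, x + s * (y - x) ∈ Ω) → ∀ z ∈ segment ℝ x y, z = y ∨ z ∈ Ω := by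
    rintro y hy z ⟨α, β, hα, hβ, hαβ, rfl⟩
    rcases eq_or_lt_of_le (show β ≤ 1 by linarith) with h | h
    · left
      have : α = 0 := by linarith
      simp [this, h]
    · right
      have := hy β ⟨hβ, h⟩
      convert this using 1
      have : α = 1 - β := by linarith
      rw [this]
      simp only [Complex.real_smul]; push_cast; ring
  have hJJ' : ∀ z ∈ J', z ∈ frontier Ω → z ∈ γ '' Icc s1 s2 := by
    intro z hz hzJ
    rw [p3] at hz
    rcases hz with (hz | hz) | hz
    · exact hz
    · rw [segment_symm] at hz
      rcases hsegΩ b h2 z hz with h | h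
      · rw [h]; exact hbγ
      · exact absurd hzJ (hdisj z h)
    · rcases hsegΩ a h1 z hz with h | h
      · rw [h]; exact haγ
      · exact absurd hzJ (hdisj z h)
  have haB := hsB haγ
  have hbB := hsB hbγ
  have hJ'B : J' ⊆ ball c ρ := by
    rw [p3]
    exact union_subset (union_subset hsB ((convex_ball c ρ).segment_subset hbB hx.2))
      ((convex_ball c ρ).segment_subset hx.2 haB)
  set A := γ '' Icc s1 s2 ∪ segment ℝ b x with hA
  have hAc : IsCompact A :=
    (isCompact_Icc.image_of_continuousOn (hγ.mono hssT)).union (hsegc _ _)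
  have hApre : IsPreconnected A :=
    (isPreconnected_Icc.image γ (hγ.mono hssT)).union b hbγ (left_mem_segment ℝ b x)
      (convex_segment b x).isPreconnected
  set ℓ := (x + a) / 2 with hℓ
  have hℓΩ : ℓ ∈ Ω := by
    have := h1 (1/2) (by norm_num)
    convert this using 1
    rw [hℓ]; push_cast; ring
  have hlA : ℓ ∉ A := by
    rintro (h | ⟨α, β, hα, hβ, hαβ, h⟩)
    · exact hdisj _ hℓΩ (hsJ h)
    · have e : β = 1 - α := by linarith
      rw [e] at h
      simp only [Complex.real_smul] at h
      push_cast at h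
      have h' : a - x = 2 * α * (b - x) := by
        rw [hℓ] at h
        linear_combination (-2) * h
      rcases lt_trichotomy (2 * α) 1 with h3 | h3 | h3
      · have := h2 (2 * α) ⟨by linarith, h3⟩
        apply hdisj _ this
        push_cast
        rw [← h']
        convert hsJ haγ using 1; ring
      · apply hab
        have h4 : (2 * α : ℂ) = 1 := by exact_mod_cast h3
        rw [h4] at h'
        linear_combination h'
      · have := h1 (1 / (2 * α)) ⟨by positivity, by rw [div_lt_one (by linarith)]; exact h3⟩
        apply hdisj _ this
        have hα0 : (α : ℂ) ≠ 0 := by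
          intro h0
          have : α = 0 := by exact_mod_cast h0
          linarith
        rw [h']
        convert hsJ hbγ using 1
        push_cast
        field_simp
        ring
  have hxA : x ∈ A := Or.inr (right_mem_segment ℝ b x)
  have haA : a ∈ A := Or.inl haγ
  obtain ⟨e0, he0, hT5⟩ := aux_T5 hAc hApre hxA haA hlA
  rw [← hℓ] at hT5
  set u := (a - x) / 2 with hu
  have hu0 : u ≠ 0 := by
    intro h
    have : a = x := by
      have : a - x = 0 := by simpa [hu] using h
      exact sub_eq_zero.1 this
    exact hdisj x hx.1 (this ▸ hsJ haγ)
  have hℓV : ℓ ∈ V := by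
    have hpre : IsPreconnected (segment ℝ x ℓ) := (convex_segment x ℓ).isPreconnected
    refine hpre.subset_connectedComponentIn (left_mem_segment ℝ x ℓ) ?_ (right_mem_segment ℝ x ℓ)
    have hℓB : ℓ ∈ ball c ρ := by
      refine (convex_ball c ρ).segment_subset hx.2 haB ⟨1/2, 1/2, by norm_num, by norm_num, by norm_num, ?_⟩
      simp only [Complex.real_smul, hℓ]; push_cast; ring
    intro z hz
    refine ⟨(convex_ball c ρ).segment_subset hx.2 hℓB hz, fun hzΓ => ?_⟩
    obtain ⟨α, β, hα, hβ, hαβ, rfl⟩ := hz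
    have := h1 (β / 2) ⟨by linarith, by linarith⟩
    apply hdisj _ this
    convert hΓJ hzΓ using 1
    have : α = 1 - β := by linarith
    rw [this]
    simp only [Complex.real_smul, hℓ]; push_cast; ring
  have hVA : IsOpen (V ∩ Aᶜ) := hVo.inter hAc.isClosed.isOpen_compl
  have hcont : Tendsto (fun e : ℝ => ℓ + Complex.I * e * u) (𝓝[>] 0) (𝓝 ℓ) := by
    have : Continuous (fun e : ℝ => ℓ + Complex.I * e * u) := by fun_prop
    have := this.tendsto 0
    simp only [Complex.ofReal_zero, mul_zero, zero_mul, add_zero] at this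
    exact this.mono_left nhdsWithin_le_nhds
  have hcont' : Tendsto (fun e : ℝ => ℓ - Complex.I * e * u) (𝓝[>] 0) (𝓝 ℓ) := by
    have : Continuous (fun e : ℝ => ℓ - Complex.I * e * u) := by fun_prop
    have := this.tendsto 0
    simp only [Complex.ofReal_zero, mul_zero, zero_mul, sub_zero] at this
    exact this.mono_left nhdsWithin_le_nhds
  have hlt : ∀ᶠ e : ℝ in 𝓝[>] 0, e < e0 := nhdsWithin_le_nhds (Iio_mem_nhds he0)
  obtain ⟨e, ⟨⟨hep, hem⟩, hee⟩, hepos⟩ := (((hcont.eventually (hVA.mem_nhds ⟨hℓV, hlA⟩)).and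
    (hcont'.eventually (hVA.mem_nhds ⟨hℓV, hlA⟩))).and hlt |>.and self_mem_nhdsWithin).exists
  have hepos : 0 < e := hepos
  have hep : ℓ + Complex.I * e * u ∈ V ∩ Aᶜ := hep
  have hem : ℓ - Complex.I * e * u ∈ V ∩ Aᶜ := hem
  have hoff : ∀ τ : ℝ, τ ≠ 0 → ℓ + Complex.I * τ * u ∉ segment ℝ x a := by
    rintro τ hτ ⟨α, β, hα, hβ, hαβ, h⟩
    have e : β = 1 - α := by linarith
    rw [e] at h
    simp only [Complex.real_smul] at h
    push_cast at h
    have h' : u * ((1 - 2 * α : ℝ) - Complex.I * τ) = 0 := by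
      rw [hℓ] at h; push_cast; linear_combination h + (1 - 2 * α) * hu
    rcases mul_eq_zero.1 h' with h'' | h''
    · exact hu0 h''
    · have := congrArg Complex.im h''
      simp at this
      exact hτ this
  have hxp : ℓ + Complex.I * e * u ∉ J' := by
    rw [p3]
    rintro (h | h)
    · exact hep.2 h
    · exact hoff e hepos.ne' h
  have hxm : ℓ - Complex.I * e * u ∉ J' := by
    rw [p3]
    rintro (h | h)
    · exact hem.2 h
    · apply hoff (-e) (neg_ne_zero.2 hepos.ne')
      convert h using 1
      push_cast; ring
  have hρ : 0 < ρ := pos_of_mem_ball hx.2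
  obtain ⟨R, hR, hJ'R⟩ := exists_pos_lt_subset_ball hρ hJ'c.isClosed hJ'B
  have hE := aux_ext_conn c hR.1.le
  have hEJ : {z : ℂ | R < ‖z - c‖} ⊆ J'ᶜ := by
    intro z hz hzJ
    have := hJ'R hzJ
    rw [mem_ball, dist_eq_norm] at this
    exact lt_asymm this hz
  -- separation
  have hsep : ℓ - Complex.I * e * u ∉ connectedComponentIn J'ᶜ (ℓ + Complex.I * e * u) := by
    intro h
    refine hT5 e hepos hee _ isPreconnected_connectedComponentIn ?_ (mem_connectedComponentIn hxp) h
    rw [← p3, Set.disjoint_left]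
    exact fun z hz => connectedComponentIn_subset _ _ hz
  have hmain : ∃ y y', y ∈ V ∧ y ∉ J' ∧ y' ∉ J' ∧ y' ∉ connectedComponentIn J'ᶜ y ∧
      Disjoint (connectedComponentIn J'ᶜ y) {z : ℂ | R < ‖z - c‖} := by
    by_cases hd : Disjoint (connectedComponentIn J'ᶜ (ℓ + Complex.I * e * u)) {z : ℂ | R < ‖z - c‖}
    · exact ⟨_, _, hep.1, hxp, hxm, hsep, hd⟩
    · refine ⟨_, ℓ + Complex.I * e * u, hem.1, hxm, hxp, ?_, ?_⟩
      · intro h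
        apply hsep
        rw [← connectedComponentIn_eq h]
        exact mem_connectedComponentIn hxm
      · by_contra hd2
        rw [not_disjoint_iff] at hd hd2
        obtain ⟨z, hz1, hz2⟩ := hd
        obtain ⟨w, hw1, hw2⟩ := hd2
        apply hsep
        have f1 := connectedComponentIn_eq hz1
        have f2 := connectedComponentIn_eq hw1
        have f3 := connectedComponentIn_eq (hE.subset_connectedComponentIn hz2 hEJ hw2)
        rw [f1, f3, ← f2]
        exact mem_connectedComponentIn hxm
  obtain ⟨y, y', hyV, hyJ, hyJ', hyy, hyE⟩ := hmain
  set W := connectedComponentIn J'ᶜ y with hW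
  have hWo : IsOpen W := hJ'c.isClosed.isOpen_compl.connectedComponentIn
  have hWf : frontier W = J' := aux_T6 p1 p2 hyJ hyJ' hyy
  have hyW : y ∈ W := mem_connectedComponentIn hyJ
  have hWB : W ⊆ ball c ρ := by
    intro z hz
    by_contra hzB
    rw [mem_ball, dist_eq_norm, not_lt] at hzB
    exact Set.disjoint_left.1 hyE hz (hR.2.trans_le hzB)
  have hWJ' : W ⊆ J'ᶜ := connectedComponentIn_subset _ _
  have hWJ : ∀ z ∈ W, z ∉ frontier Ω := by
    intro z hz hzJ
    have hzγ : z ∉ γ '' Icc s1 s2 := fun h => hWJ' hz (by rw [p3]; exact Or.inl (Or.inl h))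
    have hpre := (aux_T7 hφ hφi hT hγ hγi (hJ ▸ hsub)).2 s1 s2 (hp.trans hs1) hs.le (hs2.trans hq)
    rw [← hJ] at hpre
    have := aux_front hpre hWo (by
      intro v hv hvW
      rw [hWf] at hvW
      exact hv.2 (hJJ' v hvW hv.1)) ⟨z, ⟨hzJ, hzγ⟩, hz⟩
    apply hT1B
    apply hWB
    apply this
    refine ⟨hsub ⟨T1, left_mem_Icc.2 hT.le, rfl⟩, ?_⟩
    rintro ⟨t, ht, hte⟩
    have := hγi (hssT ht) (left_mem_Icc.2 hT.le) hte
    linarith [ht.1]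
  refine ⟨W, ⟨hWo, ⟨⟨y, hyW⟩, isPreconnected_connectedComponentIn⟩, isBounded_ball.subset hWB,
    φ', p1, p2, hWf⟩, ?_, ?_⟩
  · rw [hV, connectedComponentIn_eq hyV]
    exact isPreconnected_connectedComponentIn.subset_connectedComponentIn hyW
      (fun z hz => ⟨hWB hz, fun h => hWJ z hz (hΓJ h)⟩)
  · rw [hWf, p3]
    exact fun z hz => Or.inl (Or.inl hz)


/-- The component of `x` in the ball minus the arc. -/
def auxV (γ : ℝ → ℂ) (c : ℂ) (ρ p q : ℝ) (x : ℂ) : Set ℂ :=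
  connectedComponentIn (ball c ρ \ γ '' Icc p q) x

/-- Good data. -/
def AuxGood (I : Set ℝ) (γ : ℝ → ℂ) (c : ℂ) (ρ p q : ℝ) (x : ℂ) : Prop :=
  Icc p q ⊆ I ∧ InjOn γ (Icc p q) ∧ ∃ Ω s1 s2, IsJordanDomain Ω ∧ Ω ⊆ auxV γ c ρ p q x ∧
    s1 < s2 ∧ p ≤ s1 ∧ s2 ≤ q ∧ γ '' Icc s1 s2 ⊆ frontier Ω ∧ γ '' Icc s1 s2 ⊆ ball c ρ

/-- Functions extendable with bound `M`. -/
def AuxE (γ : ℝ → ℂ) (c : ℂ) (ρ p q : ℝ) (x : ℂ) (M : ℝ) (f : ℂ → ℂ) : Prop :=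
  ∃ F : ℂ → ℂ, DifferentiableOn ℂ F (auxV γ c ρ p q x) ∧ (∀ z ∈ auxV γ c ρ p q x, ‖F z‖ ≤ M) ∧
    ContinuousOn F (closure (auxV γ c ρ p q x) ∩ ball c ρ) ∧
    ∀ t ∈ Icc p q, γ t ∈ closure (auxV γ c ρ p q x) ∩ ball c ρ → F (γ t) = f (γ t)

theorem aux_top_conv {I : Set ℝ} {γ : ℝ → ℂ} {c : ℂ} {ρ p q : ℝ} {x : ℂ} {M : ℝ} {f : ℂ → ℂ}
    (hg : AuxGood I γ c ρ p q x) (hE : AuxE γ c ρ p q x M f) : SomewhereOneSidedHolExt I γ f := by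
  obtain ⟨hI, -, Ω, s1, s2, hΩ, hΩV, hs, hp, hq, hf, hb⟩ := hg
  obtain ⟨F, h1, -, h3, h4⟩ := hE
  have hmem : ∀ t ∈ Icc s1 s2, γ t ∈ closure (auxV γ c ρ p q x) ∩ ball c ρ := fun t ht =>
    ⟨closure_mono hΩV (frontier_subset_closure (hf ⟨t, ht, rfl⟩)), hb ⟨t, ht, rfl⟩⟩
  refine ⟨Ω, hΩ, s1, hI ⟨hp, hs.le.trans hq⟩, s2, hI ⟨hp.trans hs.le, hq⟩, hs, hf, F, ?_, ?_, ?_⟩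
  · apply h3.mono
    rintro z (hz | ⟨t, ht, rfl⟩)
    · exact ⟨subset_closure (hΩV hz), (connectedComponentIn_subset _ _ (hΩV hz)).1⟩
    · exact hmem t ⟨ht.1.le, ht.2.le⟩
  · exact h1.mono hΩV
  · intro t ht
    exact h4 t ⟨hp.trans ht.1.le, ht.2.le.trans hq⟩ (hmem t ⟨ht.1.le, ht.2.le⟩)

theorem aux_closureV {γ : ℝ → ℂ} {c : ℂ} {ρ p q : ℝ} {x : ℂ} (hγ : ContinuousOn γ (Icc p q)) :
    closure (auxV γ c ρ p q x) ∩ ball c ρ ⊆ auxV γ c ρ p q x ∪ γ '' Icc p q := by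
  have hU : IsOpen (ball c ρ \ γ '' Icc p q) :=
    isOpen_ball.sdiff (isCompact_Icc.image_of_continuousOn hγ).isClosed
  rintro z ⟨hz, hzb⟩
  by_cases h : z ∈ auxV γ c ρ p q x
  · exact Or.inl h
  · right
    by_contra h2
    refine Set.disjoint_left.1 (aux_frontier_cc hU x) ?_ ⟨hzb, h2⟩
    rw [hU.connectedComponentIn.frontier_eq]
    exact ⟨hz, h⟩

theorem aux_top {I : Set ℝ} (hI : I.OrdConnected) {γ : ℝ → ℂ} (hγ : ContinuousOn γ I)
    (hloc : LocallyInjOn γ I) {f : ℂ → ℂ} (hf : SomewhereOneSidedHolExt I γ f) :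
    ∃ (i : ℕ) (ρ p q : ℚ) (j M : ℕ),
      AuxGood I γ (TopologicalSpace.denseSeq ℂ i) ρ p q (TopologicalSpace.denseSeq ℂ j) ∧
      AuxE γ (TopologicalSpace.denseSeq ℂ i) ρ p q (TopologicalSpace.denseSeq ℂ j) M f := by
  obtain ⟨Ω, ⟨hΩo, hΩc, hΩb, φ, hφ, hφi, hJ⟩, t1, ht1, t2, ht2, ht, hsub, F, hFc, hFd, hFf⟩ := hf
  set m := (t1 + t2) / 2 with hm
  have hIcc : Icc t1 t2 ⊆ I := hI.out ht1 ht2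
  obtain ⟨ε, hε, hinj⟩ := hloc m (hIcc ⟨by linarith, by linarith⟩)
  obtain ⟨T1, hT1a, hT1m⟩ := exists_between (show max t1 (m - ε) < m from max_lt (by linarith) (by linarith))
  obtain ⟨T2, hT2m, hT2a⟩ := exists_between (show m < min t2 (m + ε) from lt_min (by linarith) (by linarith))
  rw [max_lt_iff] at hT1a
  rw [lt_min_iff] at hT2a
  have hT : T1 < T2 := hT1m.trans hT2m
  have hTt : Icc T1 T2 ⊆ Icc t1 t2 := Icc_subset_Icc hT1a.1.le hT2a.1.le
  have hγT : ContinuousOn γ (Icc T1 T2) := hγ.mono (hTt.trans hIcc)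
  have hγi : InjOn γ (Icc T1 T2) := hinj.mono (by
    intro t h
    exact ⟨hIcc (hTt h), by linarith [h.1], by linarith [h.2]⟩)
  have hsubT : γ '' Icc T1 T2 ⊆ frontier Ω := (image_mono hTt).trans hsub
  obtain ⟨p, hp1, hp2⟩ := exists_rat_btwn hT1m
  obtain ⟨q, hq1, hq2⟩ := exists_rat_btwn hT2m
  have h7 := (aux_T7 hφ hφi hT hγT hγi (hJ ▸ hsubT)).1
  rw [← hJ] at h7
  obtain ⟨r0, hr0, hr0s⟩ := h7 p m q hp1 hp2 hq1 hq2
  have hmI : γ m ∈ Ω ∪ γ '' Ioo t1 t2 := Or.inr ⟨m, ⟨by linarith, by linarith⟩, rfl⟩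
  have hFn : ∀ᶠ z in 𝓝[Ω ∪ γ '' Ioo t1 t2] (γ m), ‖F z‖ < ‖F (γ m)‖ + 1 :=
    (hFc _ hmI).norm.eventually (gt_mem_nhds (lt_add_one _))
  obtain ⟨r', hr', hr's⟩ := Metric.mem_nhdsWithin_iff.1 hFn
  set r := min r0 r' with hr
  have hrpos : 0 < r := lt_min hr0 hr'
  obtain ⟨i, hi⟩ := (TopologicalSpace.denseRange_denseSeq ℂ).exists_dist_lt (γ m)
    (show 0 < r / 4 by positivity)
  set c := TopologicalSpace.denseSeq ℂ i with hc
  obtain ⟨ρ, hρ1, hρ2⟩ := exists_rat_btwn (show r / 4 < r / 2 by linarith)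
  have hmB : γ m ∈ ball c ρ := by rw [mem_ball]; linarith
  have hBr : ball c ρ ⊆ ball (γ m) r := by
    intro z hz
    rw [mem_ball] at hz ⊢
    have := dist_triangle_right z (γ m) c
    linarith
  have hBJ : ball c ρ ∩ frontier Ω ⊆ γ '' Ioo (p:ℝ) q := fun z hz =>
    hr0s ⟨ball_subset_ball (min_le_left _ _) (hBr hz.1), hz.2⟩
  have hcm : ContinuousAt γ m := hγT.continuousAt (Icc_mem_nhds hT1m hT2m)
  obtain ⟨δ0, hδ0, hδs⟩ := Metric.mem_nhds_iff.1 (hcm (isOpen_ball.mem_nhds hmB))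
  obtain ⟨δ, hδ1, hδ2⟩ := exists_between (show 0 < min δ0 (min (m - p) (q - m)) from
    lt_min hδ0 (lt_min (by linarith) (by linarith)))
  rw [lt_min_iff, lt_min_iff] at hδ2
  obtain ⟨hδ2, hδ3, hδ4⟩ := hδ2
  obtain ⟨r2, hr2, hr2s⟩ := h7 (m - δ) m (m + δ) (by linarith) (by linarith) (by linarith) (by linarith)
  obtain ⟨r3, hr3, hr3s⟩ := Metric.isOpen_iff.1 isOpen_ball _ hmB
  set r1 := min r2 r3 / 2 with hr1
  have hr1pos : 0 < r1 := by positivity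
  have hmJ : γ m ∈ frontier Ω := hsubT ⟨m, ⟨hT1m.le, hT2m.le⟩, rfl⟩
  obtain ⟨x, hx, a, ha, b, hb, hab, hsa, hsb⟩ := aux_T8 hΩo hr1pos hmJ (by
    intro a
    by_cases hma : γ m = a
    · have h1 : ∀ᶠ t in 𝓝[≠] m, γ t ∈ ball (γ m) r1 :=
        (hcm.tendsto.mono_left nhdsWithin_le_nhds).eventually (ball_mem_nhds _ hr1pos)
      have h2 : ∀ᶠ t in 𝓝[≠] m, t ∈ Icc T1 T2 := nhdsWithin_le_nhds (Icc_mem_nhds hT1m hT2m)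
      obtain ⟨t, ⟨h1, h2⟩, h3⟩ := ((h1.and h2).and self_mem_nhdsWithin).exists
      refine ⟨γ t, ⟨hsubT ⟨t, h2, rfl⟩, h1⟩, ?_⟩
      rw [← hma]
      exact fun h => h3 (hγi h2 ⟨hT1m.le, hT2m.le⟩ h)
    · exact ⟨γ m, ⟨hmJ, mem_ball_self hr1pos⟩, hma⟩)
  have h2r : 2 * r1 = min r2 r3 := by rw [hr1]; ring
  rw [h2r] at ha hb
  obtain ⟨sa, hsa1, rfl⟩ := hr2s ⟨ball_subset_ball (min_le_left _ _) ha.2, ha.1⟩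
  obtain ⟨sb, hsb1, rfl⟩ := hr2s ⟨ball_subset_ball (min_le_left _ _) hb.2, hb.1⟩
  have hxB : x ∈ Ω ∩ ball c ρ := ⟨hx.1, hr3s (by
    have := hx.2
    rw [mem_ball] at this ⊢
    have h4 : r1 < min r2 r3 := by rw [← h2r]; linarith
    exact this.trans (h4.trans_le (min_le_right _ _)))⟩
  have hδB : ∀ s1 s2, m - δ < s1 → s2 < m + δ → γ '' Icc s1 s2 ⊆ ball c ρ := by
    rintro s1 s2 h1 h2 _ ⟨t, ht, rfl⟩
    apply hδs
    rw [mem_ball, Real.dist_eq, abs_lt]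
    constructor <;> linarith [ht.1, ht.2]
  have main : ∃ s1 s2, s1 < s2 ∧ m - δ < s1 ∧ s2 < m + δ ∧
      (∀ s ∈ Ico (0:ℝ) 1, x + s * (γ s1 - x) ∈ Ω) ∧ (∀ s ∈ Ico (0:ℝ) 1, x + s * (γ s2 - x) ∈ Ω) := by
    rcases lt_trichotomy sa sb with h | h | h
    · exact ⟨sa, sb, h, hsa1.1, hsb1.2, hsa, hsb⟩
    · exact absurd (by rw [h]) hab
    · exact ⟨sb, sa, h, hsb1.1, hsa1.2, hsb, hsa⟩
  obtain ⟨s1, s2, hs, hs1, hs2, hg1, hg2⟩ := main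
  obtain ⟨hVΩ, Ω', hΩ', hΩ'V, hΩ'f⟩ := aux_T9a hΩo hφ hφi hJ hT hγT hγi hsubT hp1 hq2 hBJ hxB hs
    (by linarith : (p:ℝ) < s1) (by linarith : s2 < (q:ℝ)) (hδB s1 s2 hs1 hs2) hg1 hg2
  have hpqT : Icc (p:ℝ) q ⊆ Icc T1 T2 := Icc_subset_Icc hp1.le hq2.le
  have hUo : IsOpen (ball c ρ \ γ '' Icc (p:ℝ) q) :=
    isOpen_ball.sdiff (isCompact_Icc.image_of_continuousOn (hγT.mono hpqT)).isClosed
  obtain ⟨z, hz⟩ := hΩ'.2.1.nonempty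
  obtain ⟨j, hj⟩ := (TopologicalSpace.denseRange_denseSeq ℂ).exists_mem_open
    (hUo.connectedComponentIn (x := x)) ⟨z, hΩ'V hz⟩
  have hVeq := connectedComponentIn_eq hj
  obtain ⟨M, hM⟩ := exists_nat_gt (‖F (γ m)‖ + 1)
  refine ⟨i, ρ, p, q, j, M, ⟨?_, ?_, Ω', s1, s2, hΩ', ?_, hs, by linarith, by linarith, hΩ'f,
    hδB s1 s2 hs1 hs2⟩, F, ?_, ?_, ?_, ?_⟩
  · exact hpqT.trans (hTt.trans hIcc)
  · exact hγi.mono hpqT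
  · rw [auxV, ← hVeq]; exact hΩ'V
  · rw [auxV, ← hVeq]; exact hFd.mono hVΩ
  · rw [auxV, ← hVeq]
    intro w hw
    have := hr's ⟨ball_subset_ball (min_le_right _ _) (hBr (connectedComponentIn_subset _ _ hw).1),
      Or.inl (hVΩ hw)⟩
    exact (lt_trans this hM).le
  · apply hFc.mono
    intro w hw
    rcases aux_closureV (hγT.mono hpqT) hw with h | ⟨t, htt, rfl⟩
    · rw [auxV, ← hVeq] at h
      exact Or.inl (hVΩ h)
    · exact Or.inr ⟨t, ⟨by linarith [htt.1], by linarith [htt.2]⟩, rfl⟩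
  · intro t htt _
    exact hFf t ⟨by linarith [htt.1], by linarith [htt.2]⟩


theorem aux_maxlim {U : Set ℂ} (hU : IsOpen U) (hb : Bornology.IsBounded U) {g : ℂ → ℂ}
    (hg : DifferentiableOn ℂ g U) {K : ℝ}
    (hK : ∀ ζ ∈ frontier U, ∀ K' > K, ∀ᶠ z in 𝓝[U] ζ, ‖g z‖ ≤ K') :
    ∀ z ∈ U, ‖g z‖ ≤ K := by
  intro z0 hz0
  by_contra! hlt
  obtain ⟨K', hK1, hK2⟩ := exists_between hlt
  set U' := U ∩ g ⁻¹' {w | K' < ‖w‖} with hU'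
  have hU'o : IsOpen U' := hg.continuousOn.isOpen_inter_preimage hU
    (isOpen_lt continuous_const continuous_norm)
  have hcl : closure U' ⊆ U := by
    intro ζ hζ
    by_contra hζU
    have hζf : ζ ∈ frontier U := by
      rw [hU.frontier_eq]; exact ⟨closure_mono inter_subset_left hζ, hζU⟩
    have := hK ζ hζf K' hK1
    obtain ⟨N, hN, hNs⟩ := mem_nhdsWithin_iff_exists_mem_nhds_inter.1 this
    obtain ⟨w, hw1, hw2⟩ := mem_closure_iff_nhds.1 hζ N hN
    have h3 : ‖g w‖ ≤ K' := hNs ⟨hw1, hw2.1⟩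
    have h4 : K' < ‖g w‖ := hw2.2
    exact not_le.2 h4 h3
  have hd : DiffContOnCl ℂ g U' :=
    ⟨hg.mono inter_subset_left, hg.continuousOn.mono hcl⟩
  have := Complex.norm_le_of_forall_mem_frontier_norm_le (hb.subset inter_subset_left) hd
    (C := K') (by
      intro ζ hζ
      rw [hU'o.frontier_eq] at hζ
      by_contra! h
      exact hζ.2 ⟨hcl hζ.1, h⟩) (subset_closure ⟨hz0, hK2⟩)
  linarith

theorem aux_two {U : Set ℂ} (hU : IsOpen U) (hb : Bornology.IsBounded U) {f F : ℂ → ℂ}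
    (hf : DifferentiableOn ℂ f U) (hF : DifferentiableOn ℂ F U) {M m κ ε : ℝ}
    (hM : ∀ z ∈ U, ‖F z‖ ≤ M) (hm : ∀ z ∈ U, ‖f z‖ ≤ m) (hm0 : 0 ≤ m) (hκ : 0 ≤ κ)
    (hbd : ∀ ζ ∈ frontier U, (∀ κ' > κ, ∀ᶠ z in 𝓝[U] ζ, ‖f z‖ ≤ κ') ∨
      (∀ ε' > ε, ∀ᶠ z in 𝓝[U] ζ, ‖F z‖ ≤ ε')) (n : ℕ) :
    ∀ z ∈ U, ‖f z‖ ^ n * ‖F z‖ ≤ max (κ ^ n * M) (m ^ n * ε) := by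
  have key := aux_maxlim hU hb (g := fun z => f z ^ n * F z) ((hf.pow n).mul hF)
    (K := max (κ ^ n * M) (m ^ n * ε)) (by
      intro ζ hζ K' hK'
      have hUev : ∀ᶠ z in 𝓝[U] ζ, z ∈ U := self_mem_nhdsWithin
      rcases hbd ζ hζ with h | h
      · have hlt : κ ^ n * M < K' := (le_max_left _ _).trans_lt hK'
        have hc : Tendsto (fun κ' : ℝ => κ' ^ n * M) (𝓝[>] κ) (𝓝 (κ ^ n * M)) := by
          have : Continuous (fun κ' : ℝ => κ' ^ n * M) := by fun_prop
          exact (this.tendsto κ).mono_left nhdsWithin_le_nhds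
        obtain ⟨κ', h1, h2⟩ := ((hc.eventually (gt_mem_nhds hlt)).and self_mem_nhdsWithin).exists
        filter_upwards [h κ' h2, hUev] with z hz hzU
        rw [norm_mul, norm_pow]
        refine le_trans ?_ h1.le
        exact mul_le_mul (pow_le_pow_left₀ (norm_nonneg _) hz n) (hM z hzU) (norm_nonneg _)
          (pow_nonneg (hκ.trans (le_of_lt h2)) n)
      · have hlt : m ^ n * ε < K' := (le_max_right _ _).trans_lt hK'
        have hc : Tendsto (fun ε' : ℝ => m ^ n * ε') (𝓝[>] ε) (𝓝 (m ^ n * ε)) := by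
          have : Continuous (fun ε' : ℝ => m ^ n * ε') := by fun_prop
          exact (this.tendsto ε).mono_left nhdsWithin_le_nhds
        obtain ⟨ε', h1, h2⟩ := ((hc.eventually (gt_mem_nhds hlt)).and self_mem_nhdsWithin).exists
        filter_upwards [h ε' h2, hUev] with z hz hzU
        rw [norm_mul, norm_pow]
        refine le_trans ?_ h1.le
        exact mul_le_mul (pow_le_pow_left₀ (norm_nonneg _) (hm z hzU) n) hz (norm_nonneg _)
          (pow_nonneg hm0 n))
  intro z hz
  have := key z hz
  rwa [norm_mul, norm_pow] at this

/-- the barrier -/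
theorem aux_barrier {γ : ℝ → ℂ} {t t' : ℝ} (hγ : ContinuousOn γ (uIcc t' t)) (hne : γ t ≠ γ t') :
    ∃ f : ℂ → ℂ, DifferentiableOn ℂ f (γ '' uIcc t' t)ᶜ ∧ (∀ z ∉ γ '' uIcc t' t, f z ≠ 0) ∧
      (∀ z ∉ γ '' uIcc t' t, ‖f z‖ ≤ ‖2 * (2 * z - γ t - γ t') / (γ t' - γ t)‖ + 1) ∧
      (∀ z, (∀ w ∈ γ '' uIcc t' t, ‖w - γ t'‖ < ‖z - γ t'‖) → ‖f z‖ < 1) ∧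
      Tendsto (fun z => ‖f z‖) (𝓝[(γ '' uIcc t' t)ᶜ] (γ t)) (𝓝 1) := by
  classical
  set C := γ '' uIcc t' t with hC
  set y := γ t with hy
  set y' := γ t' with hy'
  have hyC : y ∈ C := ⟨t, right_mem_uIcc, rfl⟩
  have hyC' : y' ∈ C := ⟨t', left_mem_uIcc, rfl⟩
  have hCc : IsCompact C := isCompact_uIcc.image_of_continuousOn hγ
  have hCo : IsOpen Cᶜ := hCc.isClosed.isOpen_compl
  have hPm : ∀ τ : unitInterval, t' + (τ : ℝ) * (t - t') ∈ uIcc t' t := by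
    intro τ
    have h := (convex_uIcc t' t).segment_subset left_mem_uIcc right_mem_uIcc
      (show t' + (τ : ℝ) * (t - t') ∈ segment ℝ t' t from
        ⟨1 - τ, τ, by linarith [τ.2.2], τ.2.1, by ring, by simp only [smul_eq_mul]; ring⟩)
    exact h
  have hP : Continuous (fun τ : unitInterval => γ (t' + (τ : ℝ) * (t - t'))) :=
    hγ.comp_continuous (by fun_prop) hPm
  have hne0 : ∀ w ∈ C, ∀ z ∉ C, z - w ≠ 0 := fun w hw z hz h => hz (sub_eq_zero.1 h ▸ hw)
  obtain ⟨G, hG, hGe, hG0⟩ := aux_lift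
    (fun v : unitInterval × (Cᶜ : Set ℂ) => ((v.2 : ℂ) - γ (t' + (v.1 : ℝ) * (t - t'))) / (v.2 - y'))
    (by
      apply Continuous.div
      · exact (by fun_prop : Continuous fun v : unitInterval × (Cᶜ : Set ℂ) => (v.2 : ℂ)).sub
          (hP.comp continuous_fst)
      · fun_prop
      · exact fun v => hne0 _ hyC' _ v.2.2)
    (fun v => div_ne_zero (hne0 _ ⟨_, hPm v.1, rfl⟩ _ v.2.2) (hne0 _ hyC' _ v.2.2))
    (fun _ => 0) continuous_const (by
      intro a
      simp only [Complex.exp_zero, Icc.coe_zero, zero_mul, add_zero]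
      exact (div_self (hne0 _ hyC' _ a.2)).symm)
  let σ : ℂ → ℂ := fun z => if h : z ∈ Cᶜ then Complex.exp (G (1, ⟨z, h⟩) / 2) else 1
  have hσ2 : ∀ z ∉ C, σ z ^ 2 = (z - y) / (z - y') := by
    intro z hz
    have hz' : z ∈ Cᶜ := hz
    simp only [σ, hz', dif_pos]
    rw [← Complex.exp_nat_mul]
    have := hGe (1, ⟨z, hz⟩)
    simp only [Icc.coe_one, one_mul, add_sub_cancel] at this
    rw [← this]
    congr 1
    push_cast
    ring
  have hσ0 : ∀ z ∉ C, σ z ≠ 0 := by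
    intro z hz
    have hz' : z ∈ Cᶜ := hz
    simp only [σ, hz', dif_pos]
    exact Complex.exp_ne_zero _
  have hσc : ContinuousOn σ Cᶜ := by
    rw [continuousOn_iff_continuous_domRestrict]
    have : Continuous (fun z : (Cᶜ : Set ℂ) => Complex.exp (G (1, z) / 2)) := by fun_prop
    convert this using 1
    ext z
    simp only [Set.domRestrict_apply, σ, z.2, dif_pos]
  have hσd : DifferentiableOn ℂ σ Cᶜ := by
    intro z0 hz0
    apply DifferentiableAt.differentiableWithinAt
    have hQ : DifferentiableAt ℂ (fun z => (z - y) / (z - y')) z0 := by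
      have h0 := hne0 _ hyC' _ hz0
      fun_prop (disch := assumption)
    have hQ' := hQ.hasDerivAt
    rw [hasDerivAt_iff_tendsto_slope] at hQ'
    have hσt : Tendsto σ (𝓝[≠] z0) (𝓝 (σ z0)) :=
      ((hσc z0 hz0).continuousAt (hCo.mem_nhds hz0)).tendsto.mono_left nhdsWithin_le_nhds
    have h2 : σ z0 + σ z0 ≠ 0 := by
      rw [← two_mul]; exact mul_ne_zero two_ne_zero (hσ0 z0 hz0)
    have hlim := hQ'.div (hσt.add_const (σ z0)) h2
    have : HasDerivAt σ (deriv (fun z => (z - y) / (z - y')) z0 / (σ z0 + σ z0)) z0 := by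
      rw [hasDerivAt_iff_tendsto_slope]
      refine hlim.congr' ?_
      have e1 : ∀ᶠ z in 𝓝[≠] z0, z ∈ Cᶜ := nhdsWithin_le_nhds (hCo.mem_nhds hz0)
      have e2 : ∀ᶠ z in 𝓝[≠] z0, σ z + σ z0 ≠ 0 := (hσt.add_const (σ z0)).eventually_ne h2
      filter_upwards [e1, e2, self_mem_nhdsWithin] with z h1 h2 h3
      simp only [Pi.div_apply, slope_def_field]
      rw [← hσ2 z h1, ← hσ2 z0 hz0]
      have h4 : z - z0 ≠ 0 := sub_ne_zero.2 h3
      field_simp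
      ring
    exact this.differentiableAt
  have hσ1 : ∀ z ∉ C, σ z ^ 2 ≠ 1 := by
    intro z hz h
    rw [hσ2 z hz, div_eq_one_iff_eq (hne0 _ hyC' _ hz)] at h
    apply hne
    linear_combination -h
  have hσp : ∀ z ∉ C, σ z + 1 ≠ 0 := by
    intro z hz h
    apply hσ1 z hz
    linear_combination (σ z - 1) * h
  have hσm : ∀ z ∉ C, σ z - 1 ≠ 0 := by
    intro z hz h
    apply hσ1 z hz
    linear_combination (σ z + 1) * h
  refine ⟨fun z => (σ z - 1) / (σ z + 1), ?_, ?_, ?_, ?_, ?_⟩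
  · exact (hσd.sub_const 1).div (hσd.add_const 1) hσp
  · exact fun z hz => div_ne_zero (hσm z hz) (hσp z hz)
  · intro z hz
    set f := (σ z - 1) / (σ z + 1) with hf
    have hf0 : f ≠ 0 := div_ne_zero (hσm z hz) (hσp z hz)
    have hyy : y' - y ≠ 0 := sub_ne_zero.2 (Ne.symm hne)
    have e : f + f⁻¹ = 2 * (2 * z - y - y') / (y' - y) := by
      have q := hσ2 z hz
      have d1 := hne0 _ hyC' _ hz
      rw [eq_div_iff d1] at q
      rw [hf, inv_div, div_add_div _ _ (hσp z hz) (hσm z hz), div_eq_div_iff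
        (mul_ne_zero (hσp z hz) (hσm z hz)) hyy]
      linear_combination (-4) * q
    rcases le_or_gt ‖f‖ 1 with h | h
    · have := norm_nonneg (2 * (2 * z - y - y') / (y' - y))
      linarith
    · have h1 : ‖f⁻¹‖ ≤ 1 := by rw [norm_inv]; exact inv_le_one_of_one_le₀ h.le
      have h2 : f = 2 * (2 * z - y - y') / (y' - y) - f⁻¹ := by rw [← e]; ring
      calc ‖f‖ = ‖2 * (2 * z - y - y') / (y' - y) - f⁻¹‖ := by rw [← h2]
        _ ≤ _ := norm_sub_le _ _
        _ ≤ _ := by linarith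
  · intro z hz
    have hzC : z ∉ C := fun h => lt_irrefl _ (hz z h)
    have hd := hne0 _ hyC' _ hzC
    have hre : ∀ τ : unitInterval, 0 < ((z - γ (t' + (τ : ℝ) * (t - t'))) / (z - y')).re := by
      intro τ
      have h1 : (z - γ (t' + (τ : ℝ) * (t - t'))) / (z - y') =
          1 - (γ (t' + (τ : ℝ) * (t - t')) - y') / (z - y') := by
        field_simp; ring
      have h2 : ‖(γ (t' + (τ : ℝ) * (t - t')) - y') / (z - y')‖ < 1 := by
        rw [norm_div, div_lt_one (norm_pos_iff.2 hd)]
        exact hz _ ⟨_, hPm τ, rfl⟩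
      have h3 := (Complex.re_le_norm _).trans_lt h2
      rw [h1, Complex.sub_re, Complex.one_re]
      linarith
    have hcst := aux_const (S := (univ : Set unitInterval)) isPreconnected_univ
      (f := fun τ => G (τ, ⟨z, hzC⟩) - Complex.log ((z - γ (t' + (τ : ℝ) * (t - t'))) / (z - y')))
      (by
        apply ContinuousOn.sub
        · exact Continuous.continuousOn (by fun_prop)
        · apply ContinuousOn.clog
          · exact ((continuous_const.sub hP).div_const _).continuousOn
          · exact fun τ _ => Or.inl (hre τ))
      (by
        intro τ _
        have h0 : (z - γ (t' + (τ : ℝ) * (t - t'))) / (z - y') ≠ 0 :=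
          div_ne_zero (hne0 _ ⟨_, hPm τ, rfl⟩ _ hzC) hd
        rw [Complex.exp_sub, hGe, Complex.exp_log h0]
        exact div_self h0) (mem_univ 1) (mem_univ 0)
    rw [hG0] at hcst
    simp only [Icc.coe_zero, zero_mul, add_zero, Icc.coe_one, one_mul, add_sub_cancel] at hcst
    rw [div_self hd, Complex.log_one, sub_zero, sub_eq_zero] at hcst
    have h1 := hre 1
    simp only [Icc.coe_one, one_mul, add_sub_cancel] at h1
    have hzC' : z ∈ Cᶜ := hzC
    have hσr : 0 < (σ z).re := by
      simp only [σ, hzC', dif_pos]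
      rw [hcst, Complex.exp_re]
      apply mul_pos (Real.exp_pos _)
      have := Complex.abs_arg_lt_pi_div_two_iff.2 (Or.inl h1)
      rw [abs_lt] at this
      have e : (Complex.log ((z - γ t) / (z - y')) / 2).im = Complex.arg ((z - γ t) / (z - y')) / 2 := by
        rw [← Complex.log_im]; simp
      rw [e]
      exact Real.cos_pos_of_mem_Ioo ⟨by linarith [Real.pi_pos], by linarith [Real.pi_pos]⟩
    rw [norm_div, div_lt_one (norm_pos_iff.2 (hσp z hzC))]
    rw [← sq_lt_sq₀ (norm_nonneg _) (norm_nonneg _), ← Complex.normSq_eq_norm_sq,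
      ← Complex.normSq_eq_norm_sq, Complex.normSq_apply, Complex.normSq_apply]
    simp
    nlinarith
  · have hQ : Tendsto (fun z => (z - y) / (z - y')) (𝓝[Cᶜ] y) (𝓝 0) := by
      have : ContinuousAt (fun z => (z - y) / (z - y')) y :=
        ContinuousAt.div (by fun_prop) (by fun_prop) (sub_ne_zero.2 hne)
      have := this.tendsto
      simp only [sub_self, zero_div] at this
      exact this.mono_left nhdsWithin_le_nhds
    have hσt : Tendsto σ (𝓝[Cᶜ] y) (𝓝 0) := by
      rw [tendsto_zero_iff_norm_tendsto_zero]
      have h1 : Tendsto (fun z => Real.sqrt ‖(z - y) / (z - y')‖) (𝓝[Cᶜ] y) (𝓝 0) := by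
        simpa [Function.comp_def] using ((Real.continuous_sqrt.tendsto _).comp hQ.norm)
      refine h1.congr' ?_
      filter_upwards [self_mem_nhdsWithin] with z hz
      rw [← hσ2 z hz, norm_pow, Real.sqrt_sq (norm_nonneg _)]
    have := ((hσt.sub_const 1).div (hσt.add_const 1) (by norm_num)).norm
    simpa using this


def AuxCls (γ : ℝ → ℂ) (c : ℂ) (ρ p q : ℝ) (x : ℂ) (M ε : ℝ) (F : ℂ → ℂ) : Prop :=
  DifferentiableOn ℂ F (auxV γ c ρ p q x) ∧ (∀ z ∈ auxV γ c ρ p q x, ‖F z‖ ≤ M) ∧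
  ContinuousOn F (closure (auxV γ c ρ p q x) ∩ ball c ρ) ∧
  ∀ t ∈ Icc p q, γ t ∈ closure (auxV γ c ρ p q x) ∩ ball c ρ → ‖F (γ t)‖ ≤ ε

def AuxPt (γ : ℝ → ℂ) (c : ℂ) (ρ p q : ℝ) (x : ℂ) (α : ℂ) : Prop :=
  ∃ N ∈ 𝓝 α, ∀ M η : ℝ, 0 < η → ∃ ε > 0, ∀ F, AuxCls γ c ρ p q x M ε F →
    ∀ z ∈ N ∩ auxV γ c ρ p q x, ‖F z‖ ≤ η

theorem aux_small {U N : Set ℂ} (hU : IsOpen U) (hb : Bornology.IsBounded U) {f : ℂ → ℂ}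
    (hf : DifferentiableOn ℂ f U) {m κ κ1 : ℝ} (hm : ∀ z ∈ U, ‖f z‖ ≤ m) (hm0 : 0 ≤ m)
    (hκ : 0 ≤ κ) (hκ1 : κ < κ1) (hN : ∀ z ∈ N ∩ U, κ1 ≤ ‖f z‖) (M η : ℝ) (hη : 0 < η) :
    ∃ ε > 0, ∀ F : ℂ → ℂ, DifferentiableOn ℂ F U → (∀ z ∈ U, ‖F z‖ ≤ M) →
      (∀ ζ ∈ frontier U, (∀ κ' > κ, ∀ᶠ z in 𝓝[U] ζ, ‖f z‖ ≤ κ') ∨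
      (∀ ε' > ε, ∀ᶠ z in 𝓝[U] ζ, ‖F z‖ ≤ ε')) → ∀ z ∈ N ∩ U, ‖F z‖ ≤ η := by
  have hkp : 0 < κ1 := hκ.trans_lt hκ1
  have hlim : Tendsto (fun n : ℕ => (κ / κ1) ^ n * M) atTop (𝓝 (0 * M)) :=
    (tendsto_pow_atTop_nhds_zero_of_lt_one (div_nonneg hκ hkp.le)
      ((div_lt_one hkp).2 hκ1)).mul_const M
  rw [zero_mul] at hlim
  obtain ⟨n, hn⟩ := (hlim.eventually (gt_mem_nhds hη)).exists
  have hκn : 0 < κ1 ^ n := pow_pos hkp n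
  have hmn : 0 < (m + 1) ^ n := by positivity
  refine ⟨η * κ1 ^ n / (m + 1) ^ n, by positivity, ?_⟩
  intro F hF hM hbd z hz
  have h1 := aux_two hU hb hf hF hM hm hm0 hκ hbd n z hz.2
  have h2 : κ1 ^ n * ‖F z‖ ≤ ‖f z‖ ^ n * ‖F z‖ :=
    mul_le_mul_of_nonneg_right (pow_le_pow_left₀ hkp.le (hN z hz) n) (norm_nonneg _)
  have h3 : κ ^ n * M ≤ η * κ1 ^ n := by
    rw [div_pow, div_mul_eq_mul_div, div_lt_iff₀ hκn] at hn
    exact hn.le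
  have h4 : m ^ n * (η * κ1 ^ n / (m + 1) ^ n) ≤ η * κ1 ^ n := by
    rw [← mul_div_assoc, div_le_iff₀ hmn, mul_comm]
    exact mul_le_mul_of_nonneg_left (pow_le_pow_left₀ hm0 (by linarith) n) (by positivity)
  have h5 : κ1 ^ n * ‖F z‖ ≤ κ1 ^ n * η := by
    rw [mul_comm _ η]
    exact h2.trans (h1.trans (max_le h3 h4))
  exact le_of_mul_le_mul_left h5 hκn

theorem auxV_open {γ : ℝ → ℂ} {c : ℂ} {ρ p q : ℝ} {x : ℂ} (hγ : ContinuousOn γ (Icc p q)) :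
    IsOpen (auxV γ c ρ p q x) :=
  (isOpen_ball.sdiff (isCompact_Icc.image_of_continuousOn hγ).isClosed).connectedComponentIn

theorem auxV_sub (γ : ℝ → ℂ) (c : ℂ) (ρ p q : ℝ) (x : ℂ) :
    auxV γ c ρ p q x ⊆ ball c ρ \ γ '' Icc p q := connectedComponentIn_subset _ _

theorem auxPt_bdry {γ : ℝ → ℂ} {c : ℂ} {ρ p q : ℝ} {x : ℂ} (hγ : ContinuousOn γ (Icc p q))
    (hinj : InjOn γ (Icc p q)) (hpq : p < q) {t : ℝ} (ht : t ∈ Icc p q)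
    (hy : γ t ∈ closure (auxV γ c ρ p q x) ∩ ball c ρ) : AuxPt γ c ρ p q x (γ t) := by
  set V := auxV γ c ρ p q x with hV
  have hVs := auxV_sub γ c ρ p q x
  have hVo : IsOpen V := auxV_open hγ
  obtain ⟨r, hr, hrs⟩ := Metric.isOpen_iff.1 isOpen_ball (γ t) hy.2
  obtain ⟨δ, hδ, hδs⟩ := Metric.continuousWithinAt_iff.1 (hγ t ht) (r / 3) (by positivity)
  obtain ⟨t', ht', htne, htd⟩ : ∃ t' ∈ Icc p q, t' ≠ t ∧ |t' - t| < δ := by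
    rcases lt_or_ge t q with h | h
    · refine ⟨min q (t + δ / 2), ⟨le_min hpq.le (by linarith [ht.1]), min_le_left _ _⟩,
        (lt_min h (by linarith)).ne', ?_⟩
      have h1 : t < min q (t + δ / 2) := lt_min h (by linarith)
      have h2 := min_le_right q (t + δ / 2)
      rw [abs_of_pos (by linarith)]; linarith
    · have h' : p < t := hpq.trans_le h
      have h1 : max p (t - δ / 2) < t := max_lt h' (by linarith)
      have h2 := le_max_right p (t - δ / 2)
      refine ⟨max p (t - δ / 2), ⟨le_max_left _ _, by linarith [ht.2]⟩, h1.ne, ?_⟩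
      rw [abs_of_neg (by linarith)]; linarith
  have hsub : uIcc t' t ⊆ Icc p q := by
    rw [uIcc]; exact Icc_subset_Icc (le_inf ht'.1 ht.1) (sup_le ht'.2 ht.2)
  set C := γ '' uIcc t' t with hC
  have hCr : ∀ w ∈ C, ‖w - γ t‖ < r / 3 := by
    rintro _ ⟨s, hs, rfl⟩
    have := hδs (hsub hs) (by
      rw [Real.dist_eq]
      have h1 := abs_sub_right_of_mem_uIcc hs
      rw [abs_sub_comm t t'] at h1
      rw [abs_sub_comm]
      exact h1.trans_lt htd)
    rwa [dist_eq_norm] at this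
  have hCΓ : C ⊆ γ '' Icc p q := image_mono hsub
  have hVC : V ⊆ Cᶜ := fun z hz h => (hVs hz).2 (hCΓ h)
  have hCo : IsOpen Cᶜ :=
    (isCompact_uIcc.image_of_continuousOn (hγ.mono hsub)).isClosed.isOpen_compl
  obtain ⟨f, hfd, hf0, hfb, hf1, hft⟩ := aux_barrier (hγ.mono hsub)
    (fun h => htne (hinj ht' ht h.symm))
  have hsph : ∀ z ∈ sphere c ρ, z ∉ C ∧ ‖f z‖ < 1 := by
    intro z hz
    have h1 : r ≤ ‖z - γ t‖ := by
      by_contra! h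
      have : z ∈ ball c ρ := hrs (by rwa [mem_ball, dist_eq_norm])
      rw [mem_ball] at this
      rw [mem_sphere] at hz
      linarith
    have h2 := hCr (γ t') ⟨t', left_mem_uIcc, rfl⟩
    have h3 : ‖z - γ t‖ ≤ ‖z - γ t'‖ + ‖γ t' - γ t‖ := norm_sub_le_norm_sub_add_norm_sub _ _ _
    refine ⟨fun h => ?_, hf1 z fun w hw => ?_⟩
    · linarith [hCr z h]
    · have h4 := hCr w hw
      have h5 : ‖w - γ t'‖ ≤ ‖w - γ t‖ + ‖γ t - γ t'‖ := norm_sub_le_norm_sub_add_norm_sub _ _ _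
      rw [norm_sub_rev (γ t) (γ t')] at h5
      linarith
  have hρ : 0 < ρ := pos_of_mem_ball hy.2
  have hfs : ContinuousOn (fun z => ‖f z‖) (sphere c ρ) :=
    (hfd.continuousOn.mono fun z hz => (hsph z hz).1).norm
  obtain ⟨ζ0, hζ0, hmax⟩ := (isCompact_sphere c ρ).exists_isMaxOn
    (NormedSpace.sphere_nonempty.2 hρ.le) hfs
  have hκ1 : ‖f ζ0‖ < 1 := (hsph ζ0 hζ0).2
  obtain ⟨κ1, hκa, hκb⟩ := exists_between hκ1
  obtain ⟨N, hN, hNs⟩ := mem_nhdsWithin_iff_exists_mem_nhds_inter.1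
    (hft.eventually (lt_mem_nhds hκb))
  obtain ⟨m, hm⟩ := (isCompact_closedBall c ρ).exists_bound_of_continuousOn
    (f := fun z => 2 * (2 * z - γ t - γ t') / (γ t' - γ t)) (Continuous.continuousOn (by fun_prop))
  have hmV : ∀ z ∈ V, ‖f z‖ ≤ |m| + 1 := by
    intro z hz
    have h1 := hfb z (hVC hz)
    have h2 := hm z (ball_subset_closedBall (hVs hz).1)
    linarith [le_abs_self m]
  have hVb : Bornology.IsBounded V := isBounded_ball.subset (hVs.trans sdiff_subset)
  refine ⟨N, hN, ?_⟩
  intro M η hη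
  obtain ⟨ε, hε, hall⟩ := aux_small (N := N) hVo hVb (hfd.mono hVC) hmV (by positivity)
    (norm_nonneg _) hκa (fun z hz => le_of_lt (hNs ⟨hz.1, hVC hz.2⟩)) M η hη
  refine ⟨ε, hε, fun F hF => hall F hF.1 hF.2.1 ?_⟩
  intro ζ hζ
  rw [hVo.frontier_eq] at hζ
  by_cases hζb : ζ ∈ ball c ρ
  · right
    intro ε' hε'
    rcases aux_closureV hγ ⟨hζ.1, hζb⟩ with h | ⟨s, hs, rfl⟩
    · exact absurd h hζ.2
    · have h1 := hF.2.2.2 s hs ⟨hζ.1, hζb⟩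
      have h2 := (hF.2.2.1 (γ s) ⟨hζ.1, hζb⟩).norm
      have h3 := h2.tendsto.eventually (gt_mem_nhds (h1.trans_lt hε'))
      have hle : 𝓝[V] (γ s) ≤ 𝓝[closure V ∩ ball c ρ] (γ s) :=
        nhdsWithin_mono _ fun z hz => ⟨subset_closure hz, (hVs hz).1⟩
      have h4 : ∀ᶠ z in 𝓝[V] (γ s), ‖F z‖ < ε' := hle h3
      exact h4.mono fun z hz => le_of_lt hz
  · left
    intro κ' hκ'
    have hcl : ζ ∈ closedBall c ρ :=
      closure_minimal (hVs.trans (sdiff_subset.trans ball_subset_closedBall)) isClosed_closedBall hζ.1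
    have hsp : ζ ∈ sphere c ρ := by
      rw [mem_sphere]
      rw [mem_closedBall] at hcl
      rw [mem_ball, not_lt] at hζb
      exact le_antisymm hcl hζb
    have h1 : ‖f ζ‖ ≤ ‖f ζ0‖ := hmax hsp
    have h2 : ContinuousAt (fun z => ‖f z‖) ζ :=
      ((hfd.continuousOn ζ (hsph ζ hsp).1).continuousAt (hCo.mem_nhds (hsph ζ hsp).1)).norm
    have h3 := h2.tendsto.eventually (gt_mem_nhds (h1.trans_lt hκ'))
    have h4 : ∀ᶠ z in 𝓝[V] ζ, ‖f z‖ < κ' := nhdsWithin_le_nhds h3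
    exact h4.mono fun z hz => le_of_lt hz

theorem auxPt_step {γ : ℝ → ℂ} {c : ℂ} {ρ p q : ℝ} {x : ℂ} (hγ : ContinuousOn γ (Icc p q))
    {α : ℂ} (hα : α ∈ auxV γ c ρ p q x) (hcl : α ∈ closure {β | AuxPt γ c ρ p q x β}) :
    AuxPt γ c ρ p q x α := by
  set V := auxV γ c ρ p q x with hV
  have hVo : IsOpen V := auxV_open hγ
  obtain ⟨R4, hR4, hRs⟩ := Metric.isOpen_iff.1 hVo α hα
  obtain ⟨R, hR, hR'⟩ : ∃ R > 0, 4 * R = R4 := ⟨R4 / 4, by positivity, by ring⟩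
  obtain ⟨α', ⟨N, hN, hNall⟩, hd⟩ := Metric.mem_closure_iff.1 hcl R hR
  obtain ⟨r2, hr2, hr2s⟩ := Metric.mem_nhds_iff.1 hN
  obtain ⟨r, hr, hrR, hrr⟩ : ∃ r > 0, r < R ∧ 2 * r ≤ r2 :=
    ⟨min (R / 2) (r2 / 2), by positivity, by linarith [min_le_left (R / 2) (r2 / 2)],
      by linarith [min_le_right (R / 2) (r2 / 2)]⟩
  set U := ball α' (3 * R) \ closedBall α' r with hU
  have hUo : IsOpen U := isOpen_ball.sdiff isClosed_closedBall
  have hUV : U ⊆ V := by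
    intro z hz
    apply hRs
    have := hz.1
    rw [mem_ball] at this ⊢
    have h2 := dist_triangle z α' α
    rw [dist_comm α' α] at h2
    linarith
  have hUd : ∀ z ∈ U, r < ‖z - α'‖ := by
    intro z hz
    have := hz.2
    rwa [mem_closedBall, not_le, dist_eq_norm] at this
  have hfd : ∀ z, z ≠ α' → DifferentiableAt ℂ (fun z : ℂ => (r : ℂ) / (z - α')) z := by
    intro z hz
    have : z - α' ≠ 0 := sub_ne_zero.2 hz
    fun_prop (disch := assumption)
  have hfn : ∀ z : ℂ, ‖(r : ℂ) / (z - α')‖ = r / ‖z - α'‖ := by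
    intro z
    rw [norm_div, Complex.norm_real, Real.norm_of_nonneg hr.le]
  refine ⟨ball α R, ball_mem_nhds _ hR, ?_⟩
  intro M η hη
  obtain ⟨ε0, hε0, hall⟩ := aux_small (U := U) (N := ball α R) hUo
    (isBounded_ball.subset sdiff_subset) (f := fun z => (r : ℂ) / (z - α'))
    (m := 1) (κ := r / (3 * R)) (κ1 := r / (2 * R))
    (fun z hz => (hfd z (by
      rintro rfl
      have := hUd z hz
      simp at this; linarith)).differentiableWithinAt)
    (fun z hz => by
      rw [hfn, div_le_one (hr.trans (hUd z hz))]
      exact (hUd z hz).le) zero_le_one (by positivity)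
    (by apply div_lt_div_of_pos_left hr (by positivity); linarith)
    (fun z hz => by
      have h1 := hz.1
      rw [mem_ball] at h1
      have h2 := dist_triangle z α α'
      rw [dist_eq_norm z α'] at h2
      rw [hfn]
      exact div_le_div_of_nonneg_left hr.le (hr.trans (hUd z hz.2)) (by linarith)) M η hη
  obtain ⟨ε, hε, hF1⟩ := hNall M (min ε0 η) (lt_min hε0 hη)
  refine ⟨ε, hε, fun F hF => ?_⟩
  have hF2 := hF1 F hF
  have key := hall F (hF.1.mono hUV) (fun z hz => hF.2.1 z (hUV hz)) (by
    intro ζ hζ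
    have h1 : ζ ∈ sphere α' (3 * R) ∪ ball α' (2 * r) := by
      rw [hUo.frontier_eq] at hζ
      have h2 : dist ζ α' ≤ 3 * R := closure_minimal
        (show U ⊆ closedBall α' (3 * R) from sdiff_subset.trans ball_subset_closedBall)
        isClosed_closedBall hζ.1
      by_cases h3 : dist ζ α' ≤ r
      · right; rw [mem_ball]; linarith
      · left
        rw [mem_sphere]
        by_contra h4
        exact hζ.2 ⟨mem_ball.2 (lt_of_le_of_ne h2 h4), fun h => h3 (mem_closedBall.1 h)⟩
    rcases h1 with h1 | h1
    · left
      intro κ' hκ'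
      rw [mem_sphere, dist_eq_norm] at h1
      have h2 : ContinuousAt (fun z : ℂ => ‖(r : ℂ) / (z - α')‖) ζ := (hfd ζ (by
        rintro rfl
        simp at h1; linarith)).continuousAt.norm
      have h5 : ‖(r : ℂ) / (ζ - α')‖ < κ' := by rw [hfn, h1]; exact hκ'
      have h3 := h2.tendsto.eventually (gt_mem_nhds h5)
      have h4 : ∀ᶠ z in 𝓝[U] ζ, ‖(r : ℂ) / (z - α')‖ < κ' := nhdsWithin_le_nhds h3
      exact h4.mono fun z hz => le_of_lt hz
    · right
      intro ε' hε'
      filter_upwards [nhdsWithin_le_nhds (isOpen_ball.mem_nhds h1), self_mem_nhdsWithin] with z hz hzU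
      exact (hF2 z ⟨hr2s (ball_subset_ball hrr hz), hUV hzU⟩).trans ((min_le_left _ _).trans hε'.le))
  intro z hz
  by_cases hzr : dist z α' ≤ r
  · refine (hF2 z ⟨hr2s ?_, hz.2⟩).trans (min_le_right _ _)
    rw [mem_ball]; linarith
  · refine key z ⟨hz.1, ?_, fun h => hzr (mem_closedBall.1 h)⟩
    have h1 := hz.1
    rw [mem_ball] at h1 ⊢
    have h2 := dist_triangle z α α'
    linarith

theorem auxPt_all {I : Set ℝ} {γ : ℝ → ℂ} {c : ℂ} {ρ p q : ℝ} {x : ℂ}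
    (hγ : ContinuousOn γ (Icc p q)) (hg : AuxGood I γ c ρ p q x) :
    ∀ z ∈ closure (auxV γ c ρ p q x) ∩ ball c ρ, AuxPt γ c ρ p q x z := by
  obtain ⟨hI, hinj, Ω, s1, s2, hJ, hΩV, hs, hps, hsq, hfr, hB⟩ := hg
  have hpq : p < q := by linarith
  have hb : ∀ t ∈ Icc p q, γ t ∈ closure (auxV γ c ρ p q x) ∩ ball c ρ → AuxPt γ c ρ p q x (γ t) :=
    fun t ht h => auxPt_bdry hγ hinj hpq ht h
  have hV : auxV γ c ρ p q x ⊆ {z | AuxPt γ c ρ p q x z} := by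
    have hGo : IsOpen {z | AuxPt γ c ρ p q x z} := by
      rw [isOpen_iff_mem_nhds]
      rintro z ⟨N, hN, h⟩
      filter_upwards [eventually_mem_nhds_iff.2 hN] with w hw
      exact ⟨N, hw, h⟩
    have h1 : γ s1 ∈ closure (auxV γ c ρ p q x) ∩ ball c ρ :=
      ⟨closure_mono hΩV (frontier_subset_closure (hfr ⟨s1, ⟨le_rfl, hs.le⟩, rfl⟩)),
        hB ⟨s1, ⟨le_rfl, hs.le⟩, rfl⟩⟩
    have h2 := hb s1 ⟨hps, by linarith⟩ h1
    obtain ⟨w, hw1, hw2⟩ := mem_closure_iff_nhds.1 h1.1 _ (hGo.mem_nhds h2)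
    refine IsPreconnected.subset_of_closure_inter_subset isPreconnected_connectedComponentIn hGo
      ⟨w, hw2, hw1⟩ ?_
    rintro z ⟨hz1, hz2⟩
    exact auxPt_step hγ hz2 hz1
  intro z hz
  rcases aux_closureV hγ hz with h | ⟨t, ht, rfl⟩
  · exact hV h
  · exact hb t ht hz


theorem auxPt_cl {I : Set ℝ} {γ : ℝ → ℂ} {c : ℂ} {ρ p q : ℝ} {x : ℂ}
    (hγ : ContinuousOn γ (Icc p q)) (hg : AuxGood I γ c ρ p q x) {z : ℂ}
    (hz : z ∈ closure (auxV γ c ρ p q x) ∩ ball c ρ) :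
    ∃ N ∈ 𝓝 z, ∀ M η : ℝ, 0 < η → ∃ ε > 0, ∀ F, AuxCls γ c ρ p q x M ε F →
      ∀ w ∈ N ∩ (closure (auxV γ c ρ p q x) ∩ ball c ρ), ‖F w‖ ≤ η := by
  obtain ⟨N, hN, hall⟩ := auxPt_all hγ hg z hz
  refine ⟨interior N, interior_mem_nhds.2 hN, fun M η hη => ?_⟩
  obtain ⟨ε, hε, h⟩ := hall M η hη
  refine ⟨ε, hε, fun F hF w hw => ?_⟩
  have hVs := auxV_sub γ c ρ p q x
  have hc : ContinuousWithinAt F (interior N ∩ auxV γ c ρ p q x) w :=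
    (hF.2.2.1 w hw.2).mono fun v hv => ⟨subset_closure hv.2, (hVs hv.2).1⟩
  have hcl : w ∈ closure (interior N ∩ auxV γ c ρ p q x) :=
    isOpen_interior.inter_closure ⟨hw.1, hw.2.1⟩
  have := hc.mem_closure_image hcl
  have h2 : F '' (interior N ∩ auxV γ c ρ p q x) ⊆ closedBall 0 η := by
    rintro _ ⟨v, hv, rfl⟩
    rw [mem_closedBall_zero_iff]
    exact h F hF v ⟨interior_subset hv.1, hv.2⟩
  exact mem_closedBall_zero_iff.1 (closure_minimal h2 isClosed_closedBall this)

theorem auxCls_zero {I : Set ℝ} {γ : ℝ → ℂ} {c : ℂ} {ρ p q : ℝ} {x : ℂ}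
    (hγ : ContinuousOn γ (Icc p q)) (hg : AuxGood I γ c ρ p q x) {M : ℝ} {F : ℂ → ℂ}
    (hF : AuxCls γ c ρ p q x M 0 F) : ∀ z ∈ auxV γ c ρ p q x, F z = 0 := by
  intro z hz
  obtain ⟨N, hN, hall⟩ := auxPt_cl hγ hg (z := z) ⟨subset_closure hz, (auxV_sub _ _ _ _ _ _ hz).1⟩
  rw [← norm_le_zero_iff]
  apply le_of_forall_pos_le_add
  intro η hη
  obtain ⟨ε, hε, h⟩ := hall M η hη
  rw [zero_add]
  exact h F ⟨hF.1, hF.2.1, hF.2.2.1, fun t ht h => (hF.2.2.2 t ht h).trans hε.le⟩ z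
    ⟨mem_of_mem_nhds hN, subset_closure hz, (auxV_sub _ _ _ _ _ _ hz).1⟩

theorem aux_uniq {I : Set ℝ} {γ : ℝ → ℂ} {c : ℂ} {ρ p q : ℝ} {x : ℂ}
    (hγ : ContinuousOn γ (Icc p q)) (hg : AuxGood I γ c ρ p q x) {M1 M2 : ℝ} {f1 f2 : ℂ → ℂ}
    {l a : ℂ} (hl : l ∈ auxV γ c ρ p q x)
    (h1 : AuxE γ c ρ p q x M1 f1) (h2 : AuxE γ c ρ p q x M2 f2)
    (h : ∀ t ∈ Icc p q, f1 (γ t) - f2 (γ t) = a / (γ t - l)) : a = 0 := by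
  obtain ⟨F1, hd1, hb1, hc1, he1⟩ := h1
  obtain ⟨F2, hd2, hb2, hc2, he2⟩ := h2
  have hVs := auxV_sub γ c ρ p q x
  have hz : AuxCls γ c ρ p q x (2 * ρ * (M1 + M2) + ‖a‖) 0 (fun z => (z - l) * (F1 z - F2 z) - a) := by
    refine ⟨?_, ?_, ?_, ?_⟩
    · exact ((differentiableOn_id.sub_const l).mul (hd1.sub hd2)).sub_const a
    · intro z hz
      have e1 : ‖z - l‖ ≤ 2 * ρ := by
        rw [← dist_eq_norm]
        have h3 := mem_ball.1 (hVs hz).1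
        have h4 := mem_ball.1 (hVs hl).1
        have h5 := dist_triangle_right z l c
        linarith
      have e2 : ‖F1 z - F2 z‖ ≤ M1 + M2 :=
        (norm_sub_le _ _).trans (add_le_add (hb1 z hz) (hb2 z hz))
      calc _ ≤ ‖(z - l) * (F1 z - F2 z)‖ + ‖a‖ := norm_sub_le _ _
        _ ≤ _ := by
          rw [norm_mul]
          have := mul_le_mul e1 e2 (norm_nonneg _) ((norm_nonneg _).trans e1)
          linarith
    · exact ((continuousOn_id.sub continuousOn_const).mul (hc1.sub hc2)).sub continuousOn_const
    · intro t ht htV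
      have hne : γ t - l ≠ 0 := fun h0 => (hVs hl).2 (sub_eq_zero.1 h0 ▸ ⟨t, ht, rfl⟩)
      show ‖(γ t - l) * (F1 (γ t) - F2 (γ t)) - a‖ ≤ 0
      rw [he1 t ht htV, he2 t ht htV, h t ht, mul_div_cancel₀ _ hne, sub_self, norm_zero]
  have := auxCls_zero hγ hg hz l hl
  simpa using this

theorem aux_closed {I : Set ℝ} {γ : ℝ → ℂ} {c : ℂ} {ρ p q : ℝ} {x : ℂ}
    (hγ : ContinuousOn γ (Icc p q)) (hg : AuxGood I γ c ρ p q x) {M : ℝ} {f : ℂ → ℂ}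
    (h : ∀ ε > 0, ∃ f', AuxE γ c ρ p q x M f' ∧ ∀ t ∈ Icc p q, ‖f' (γ t) - f (γ t)‖ ≤ ε) :
    AuxE γ c ρ p q x M f := by
  set V := auxV γ c ρ p q x with hV
  have hVs : V ⊆ ball c ρ \ γ '' Icc p q := auxV_sub γ c ρ p q x
  have hVS : V ⊆ closure V ∩ ball c ρ := fun z hz => ⟨subset_closure hz, (hVs hz).1⟩
  choose g hgE hgd using fun n : ℕ => h (1 / ((n : ℝ) + 1)) (by positivity)
  choose F hFd hFb hFc hFe using hgE
  have hcls : ∀ n0 n m : ℕ, n0 ≤ n → n0 ≤ m →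
      AuxCls γ c ρ p q x (M + M) (2 * (1 / ((n0 : ℝ) + 1))) (fun z => F n z - F m z) := by
    intro n0 n m hn hm
    refine ⟨(hFd n).sub (hFd m), fun z hz => (norm_sub_le _ _).trans
      (add_le_add (hFb n z hz) (hFb m z hz)), (hFc n).sub (hFc m), fun t ht htV => ?_⟩
    show ‖F n (γ t) - F m (γ t)‖ ≤ _
    rw [hFe n t ht htV, hFe m t ht htV]
    have e1 := (hgd n t ht).trans (Nat.one_div_le_one_div hn)
    have e2 := (hgd m t ht).trans (Nat.one_div_le_one_div hm)
    rw [norm_sub_rev] at e2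
    have e3 := norm_sub_le_norm_sub_add_norm_sub (g n (γ t)) (f (γ t)) (g m (γ t))
    linarith
  have hloc : ∀ z ∈ closure V ∩ ball c ρ, ∃ N ∈ 𝓝 z, ∀ η > 0, ∃ n0 : ℕ, ∀ n ≥ n0, ∀ m ≥ n0,
      ∀ w ∈ N ∩ (closure V ∩ ball c ρ), ‖F n w - F m w‖ ≤ η := by
    intro z hz
    obtain ⟨N, hN, hall⟩ := auxPt_cl hγ hg hz
    refine ⟨N, hN, fun η hη => ?_⟩
    obtain ⟨ε, hε, hε2⟩ := hall (M + M) η hη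
    obtain ⟨n0, hn0⟩ := exists_nat_one_div_lt (half_pos hε)
    refine ⟨n0, fun n hn m hm w hw => ?_⟩
    have hh := hcls n0 n m hn hm
    exact hε2 _ ⟨hh.1, hh.2.1, hh.2.2.1, fun t ht htV => (hh.2.2.2 t ht htV).trans (by linarith)⟩ w hw
  have hpt : ∀ z ∈ closure V ∩ ball c ρ, ∃ v, Tendsto (fun n => F n z) atTop (𝓝 v) := by
    intro z hz
    obtain ⟨N, hN, hall⟩ := hloc z hz
    apply cauchySeq_tendsto_of_complete
    rw [Metric.cauchySeq_iff]
    intro ε hε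
    obtain ⟨n0, hn0⟩ := hall (ε / 2) (by positivity)
    refine ⟨n0, fun n hn m hm => ?_⟩
    rw [dist_eq_norm]
    linarith [hn0 n hn m hm z ⟨mem_of_mem_nhds hN, hz⟩]
  choose! G hG using hpt
  have hunif : TendstoLocallyUniformlyOn F G atTop (closure V ∩ ball c ρ) := by
    rw [Metric.tendstoLocallyUniformlyOn_iff]
    intro ε hε z hz
    obtain ⟨N, hN, hall⟩ := hloc z hz
    obtain ⟨n0, hn0⟩ := hall (ε / 2) (by positivity)
    refine ⟨N ∩ (closure V ∩ ball c ρ), inter_mem (nhdsWithin_le_nhds hN) self_mem_nhdsWithin, ?_⟩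
    filter_upwards [eventually_ge_atTop n0] with n hn w hw
    have hlim : Tendsto (fun m => ‖F m w - F n w‖) atTop (𝓝 ‖G w - F n w‖) :=
      ((hG w hw.2).sub_const _).norm
    rw [dist_eq_norm]
    have := le_of_tendsto hlim ((eventually_ge_atTop n0).mono fun m hm => hn0 m hm n hn w hw)
    linarith
  refine ⟨G, ?_, ?_, ?_, ?_⟩
  · exact (hunif.mono hVS).differentiableOn (Eventually.of_forall hFd) (auxV_open hγ)
  · intro z hz
    exact le_of_tendsto (hG z (hVS hz)).norm (Eventually.of_forall fun n => hFb n z hz)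
  · exact hunif.continuousOn (Eventually.of_forall hFc).frequently
  · intro t ht htV
    refine tendsto_nhds_unique (hG _ htV) ?_
    have e : (fun n => F n (γ t)) = fun n => g n (γ t) := funext fun n => hFe n t ht htV
    rw [e, tendsto_iff_norm_sub_tendsto_zero]
    exact squeeze_zero (fun n => norm_nonneg _) (fun n => hgd n t ht)
      tendsto_one_div_add_atTop_nhds_zero_nat


theorem aux_three {a b c : ℝ} (hab : a ≠ b) (hbc : b ≠ c) (hac : a ≠ c) (P : ℝ → ℝ → ℝ → Prop)
    (h : ∀ x y z, x < y → y < z → (x ∈ ({a, b, c} : Set ℝ)) → (y ∈ ({a, b, c} : Set ℝ)) →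
      (z ∈ ({a, b, c} : Set ℝ)) → P x y z) : ∃ x y z, P x y z := by
  rcases lt_or_gt_of_ne hab with h1 | h1 <;> rcases lt_or_gt_of_ne hbc with h2 | h2 <;>
    rcases lt_or_gt_of_ne hac with h3 | h3
  · exact ⟨a, b, c, h _ _ _ h1 h2 (by simp) (by simp) (by simp)⟩
  · exact ⟨a, b, c, h _ _ _ h1 h2 (by simp) (by simp) (by simp)⟩
  · exact ⟨a, c, b, h _ _ _ h3 h2 (by simp) (by simp) (by simp)⟩
  · exact ⟨c, a, b, h _ _ _ h3 h1 (by simp) (by simp) (by simp)⟩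
  · exact ⟨b, a, c, h _ _ _ h1 h3 (by simp) (by simp) (by simp)⟩
  · exact ⟨b, c, a, h _ _ _ h2 h3 (by simp) (by simp) (by simp)⟩
  · exact ⟨c, b, a, h _ _ _ h2 h1 (by simp) (by simp) (by simp)⟩
  · exact ⟨c, b, a, h _ _ _ h2 h1 (by simp) (by simp) (by simp)⟩

theorem aux_no_ball {γ : ℝ → ℂ} {a b : ℝ} (hγ : ContinuousOn γ (Icc a b))
    (hinj : InjOn γ (Icc a b)) {z : ℂ} {R : ℝ} (hR : 0 < R) : ¬ ball z R ⊆ γ '' Icc a b := by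
  intro hsub
  set g := Function.invFunOn γ (Icc a b) with hg
  have hgc : ContinuousOn g (γ '' Icc a b) := aux_inv isCompact_Icc hγ hinj
  have hgr : ∀ w ∈ ball z R, γ (g w) = w := fun w hw => Function.invFunOn_eq (hsub hw)
  have hgi : ∀ v ∈ ball z R, ∀ w ∈ ball z R, g v = g w → v = w := by
    intro v hv w hw h
    rw [← hgr v hv, ← hgr w hw, h]
  have key : ∀ u ∈ ball z R, ∀ v ∈ ball z R, ∀ w ∈ ball z R, g u < g v → g v < g w → False := by
    intro u hu v hv w hw h1 h2
    have hpre : IsPreconnected (g '' (ball z R \ {v})) :=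
      (aux_ball_diff_conn z v R).image g (hgc.mono (sdiff_subset.trans hsub))
    have := hpre.ordConnected.out ⟨u, ⟨hu, fun h => by rw [mem_singleton_iff.1 h] at h1; exact lt_irrefl _ h1⟩, rfl⟩
      ⟨w, ⟨hw, fun h => by rw [mem_singleton_iff.1 h] at h2; exact lt_irrefl _ h2⟩, rfl⟩ ⟨h1.le, h2.le⟩
    obtain ⟨y, hy, hye⟩ := this
    exact hy.2 (hgi y hy.1 v hv hye)
  have m0 : z ∈ ball z R := mem_ball_self hR
  have m1 : z + (R / 2 : ℝ) ∈ ball z R := by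
    rw [mem_ball, dist_eq_norm, add_sub_cancel_left, Complex.norm_real, Real.norm_of_nonneg (by positivity)]
    linarith
  have m2 : z + (R / 3 : ℝ) ∈ ball z R := by
    rw [mem_ball, dist_eq_norm, add_sub_cancel_left, Complex.norm_real, Real.norm_of_nonneg (by positivity)]
    linarith
  have n1 : g z ≠ g (z + (R / 2 : ℝ)) := fun h => by
    have := hgi _ m0 _ m1 h
    simp at this; exact hR.ne' this
  have n2 : g (z + (R / 2 : ℝ)) ≠ g (z + (R / 3 : ℝ)) := fun h => by
    have := hgi _ m1 _ m2 h
    have h2 : (R / 2 : ℝ) = R / 3 := by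
      have := add_left_cancel this
      exact_mod_cast this
    linarith
  have n3 : g z ≠ g (z + (R / 3 : ℝ)) := fun h => by
    have := hgi _ m0 _ m2 h
    simp at this; exact hR.ne' this
  have hmem : ∀ x ∈ ({g z, g (z + (R / 2 : ℝ)), g (z + (R / 3 : ℝ))} : Set ℝ), ∃ u ∈ ball z R, g u = x := by
    intro x hx
    rcases hx with rfl | rfl | rfl
    exacts [⟨_, m0, rfl⟩, ⟨_, m1, rfl⟩, ⟨_, m2, rfl⟩]
  obtain ⟨x, y, w, h⟩ := aux_three n1 n2 n3 (fun _ _ _ => False) (by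
    intro x y w h1 h2 hx hy hw
    obtain ⟨u, hu, rfl⟩ := hmem x hx
    obtain ⟨v, hv, rfl⟩ := hmem y hy
    obtain ⟨w', hw', rfl⟩ := hmem w hw
    exact key u hu v hv w' hw' h1 h2)
  exact h

theorem aux_nb {I : Set ℝ} (hI : I.OrdConnected) {t : ℝ} (ht : t ∈ I) {ε : ℝ} (hε : 0 < ε) :
    ∃ a b, Icc a b ⊆ I ∧ Icc a b ∈ 𝓝[I] t ∧ Icc a b ⊆ Ioo (t - ε) (t + ε) := by
  obtain ⟨a, haI, hat, hae, ha⟩ : ∃ a ∈ I, a ≤ t ∧ t - ε < a ∧ Ici a ∈ 𝓝[I] t := by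
    by_cases h : ∃ u ∈ I, u < t
    · obtain ⟨u, hu, hut⟩ := h
      have h1 : max u (t - ε / 2) < t := max_lt hut (by linarith)
      exact ⟨max u (t - ε / 2), hI.out hu ht ⟨le_max_left _ _, h1.le⟩, h1.le,
        lt_max_of_lt_right (by linarith), nhdsWithin_le_nhds (Ici_mem_nhds h1)⟩
    · push Not at h
      exact ⟨t, ht, le_rfl, by linarith, mem_of_superset self_mem_nhdsWithin fun u hu => h u hu⟩
  obtain ⟨b, hbI, hbt, hbe, hb⟩ : ∃ b ∈ I, t ≤ b ∧ b < t + ε ∧ Iic b ∈ 𝓝[I] t := by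
    by_cases h : ∃ u ∈ I, t < u
    · obtain ⟨u, hu, hut⟩ := h
      have h1 : t < min u (t + ε / 2) := lt_min hut (by linarith)
      exact ⟨min u (t + ε / 2), hI.out ht hu ⟨h1.le, min_le_left _ _⟩, h1.le,
        min_lt_of_right_lt (by linarith), nhdsWithin_le_nhds (Iic_mem_nhds h1)⟩
    · push Not at h
      exact ⟨t, ht, le_rfl, by linarith, mem_of_superset self_mem_nhdsWithin fun u hu => h u hu⟩
  refine ⟨a, b, hI.out haI hbI, by rw [← Ici_inter_Iic]; exact inter_mem ha hb, ?_⟩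
  intro s hs
  exact ⟨by linarith [hs.1], by linarith [hs.2]⟩

theorem aux_off {I : Set ℝ} (hI : I.OrdConnected) {γ : ℝ → ℂ} (hγ : ContinuousOn γ I)
    (hloc : LocallyInjOn γ I) {V : Set ℂ} (hV : IsOpen V) (hne : V.Nonempty) :
    ∃ l ∈ V, l ∉ γ '' I := by
  have h1 : ∀ t : ℝ, ∃ a b, t ∈ I → Icc a b ⊆ I ∧ Icc a b ∈ 𝓝[I] t ∧ InjOn γ (Icc a b) := by
    intro t
    by_cases ht : t ∈ I
    · obtain ⟨ε, hε, hinj⟩ := hloc t ht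
      obtain ⟨a, b, hab, hn, hs⟩ := aux_nb hI ht hε
      exact ⟨a, b, fun _ => ⟨hab, hn, hinj.mono (subset_inter hab hs)⟩⟩
    · exact ⟨0, 0, fun h => absurd h ht⟩
  choose a b hab using h1
  obtain ⟨T, hTI, hTc, hcov⟩ := TopologicalSpace.countable_cover_nhdsWithin
    (f := fun t => Icc (a t) (b t)) (s := I) (fun t ht => (hab t ht).2.1)
  have hdense : Dense (⋂ t ∈ T, (γ '' Icc (a t) (b t))ᶜ) := by
    apply dense_biInter_of_isOpen _ hTc
    · intro t ht
      have h := hab t (hTI ht)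
      rw [← interior_eq_empty_iff_dense_compl]
      by_contra hne
      obtain ⟨z, hz⟩ := nonempty_iff_ne_empty.2 hne
      obtain ⟨R, hR, hRs⟩ := Metric.mem_nhds_iff.1 (mem_interior_iff_mem_nhds.1 hz)
      exact aux_no_ball (hγ.mono h.1) h.2.2 hR hRs
    · intro t ht
      exact (isCompact_Icc.image_of_continuousOn (hγ.mono (hab t (hTI ht)).1)).isClosed.isOpen_compl
  obtain ⟨l, hl1, hl2⟩ := hdense.inter_open_nonempty V hV hne
  refine ⟨l, hl1, ?_⟩
  rintro ⟨s, hs, rfl⟩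
  obtain ⟨t, ht, hst⟩ := mem_iUnion₂.1 (hcov hs)
  exact mem_iInter₂.1 hl2 t ht ⟨s, hst, rfl⟩

theorem aux_exh {I : Set ℝ} (hI : I.OrdConnected) :
    ∃ K : ℕ → Set ℝ, (∀ n, IsCompact (K n)) ∧ (∀ n, K n ⊆ I) ∧ Monotone K ∧
      ∀ L ⊆ I, IsCompact L → ∃ n, L ⊆ K n := by
  have : WeaklyLocallyCompactSpace I := by
    refine ⟨fun t => ?_⟩
    obtain ⟨a, b, hab, hn, -⟩ := aux_nb hI t.2 one_pos
    refine ⟨(↑) ⁻¹' Icc a b, ?_, ?_⟩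
    · rw [Subtype.isCompact_iff, Subtype.image_preimage_coe, inter_eq_right.2 hab]
      exact isCompact_Icc
    · exact preimage_coe_mem_nhds_subtype.2 hn
  let E := CompactExhaustion.choice I
  refine ⟨fun n => (↑) '' E n, fun n => (E.isCompact n).image continuous_subtype_val, ?_, ?_, ?_⟩
  · rintro n _ ⟨t, -, rfl⟩
    exact t.2
  · intro m n hmn
    exact image_mono (E.subset hmn)
  · intro L hL hLc
    have : IsCompact ((↑) ⁻¹' L : Set I) := by
      rw [Subtype.isCompact_iff, Subtype.image_preimage_coe, inter_eq_right.2 hL]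
      exact hLc
    obtain ⟨n, hn⟩ := E.exists_superset_of_isCompact this
    exact ⟨n, fun t ht => ⟨⟨t, hL ht⟩, hn ht, rfl⟩⟩


theorem aux_series {I : Set ℝ} (hI : I.OrdConnected) (hU : UniqueDiffOn ℝ I) {k : ℕ∞}
    {u : ℕ → ℝ → ℂ} (hu : ∀ n, ContDiffOn ℝ k (u n) I)
    (hsum : ∀ j : ℕ, (j : ℕ∞) ≤ k → ∀ L ⊆ I, IsCompact L → ∃ C : ℕ → ℝ, Summable C ∧
      ∀ n, ∀ t ∈ L, ‖iteratedDerivWithin j (u n) I t‖ ≤ C n) :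
    ContDiffOn ℝ k (fun t => ∑' n, u n t) I := by
  have hcont : ∀ j : ℕ, (j : ℕ∞) ≤ k →
      ContinuousOn (fun t => ∑' n, iteratedDerivWithin j (u n) I t) I := by
    intro j hj t ht
    obtain ⟨a, b, hab, hn, -⟩ := aux_nb hI ht one_pos
    obtain ⟨C, hC, hCb⟩ := hsum j hj _ hab isCompact_Icc
    have h1 : ContinuousOn (fun t => ∑' n, iteratedDerivWithin j (u n) I t) (Icc a b) :=
      continuousOn_tsum (fun n => ((hu n).continuousOn_iteratedDerivWithin
        (by exact_mod_cast hj) hU).mono hab) hC hCb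
    exact (h1 t (mem_of_mem_nhdsWithin ht hn)).mono_of_mem_nhdsWithin hn
  have hder : ∀ j : ℕ, ((j + 1 : ℕ) : ℕ∞) ≤ k → ∀ t ∈ I,
      HasDerivWithinAt (fun t => ∑' n, iteratedDerivWithin j (u n) I t)
        (∑' n, iteratedDerivWithin (j + 1) (u n) I t) I t := by
    intro j hj t ht
    have hj' : (j : ℕ∞) < k := lt_of_lt_of_le (by exact_mod_cast Nat.lt_succ_self j) hj
    obtain ⟨a, b, hab, hn, -⟩ := aux_nb hI ht one_pos
    have htab : t ∈ Icc a b := mem_of_mem_nhdsWithin ht hn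
    obtain ⟨C, hC, hCb⟩ := hsum (j + 1) hj _ hab isCompact_Icc
    obtain ⟨C0, hC0, hC0b⟩ := hsum j hj'.le _ hab isCompact_Icc
    have hd : ∀ n, ∀ s ∈ I, HasDerivWithinAt (iteratedDerivWithin j (u n) I)
        (iteratedDerivWithin (j + 1) (u n) I s) I s := by
      intro n s hs
      rw [iteratedDerivWithin_succ]
      exact ((hu n).differentiableOn_iteratedDerivWithin (by exact_mod_cast hj') hU s hs).hasDerivWithinAt
    rw [hasDerivWithinAt_iff_tendsto_slope]
    have hsl : ∀ s ∈ Icc a b, slope (fun t => ∑' n, iteratedDerivWithin j (u n) I t) t s =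
        ∑' n, slope (iteratedDerivWithin j (u n) I) t s := by
      intro s hs
      simp only [slope_def_module]
      rw [← Summable.tsum_sub, tsum_const_smul'']
      · exact Summable.of_norm_bounded hC0 fun n => hC0b n s hs
      · exact Summable.of_norm_bounded hC0 fun n => hC0b n t htab
    have hnb : ∀ᶠ s in 𝓝[I \ {t}] t, s ∈ Icc a b := nhdsWithin_mono t sdiff_subset hn
    refine Tendsto.congr' (hnb.mono fun s hs => (hsl s hs).symm) ?_
    refine tendsto_tsum_of_dominated_convergence hC (fun n => ?_) ?_
    · exact hasDerivWithinAt_iff_tendsto_slope.1 (hd n t ht)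
    · filter_upwards [hnb, self_mem_nhdsWithin] with s hs hs2 n
      have h1 := Convex.norm_image_sub_le_of_norm_hasDerivWithin_le
        (fun y hy => (hd n y (hab hy)).mono hab) (hCb n) (convex_Icc a b) htab hs
      rw [slope_def_module, norm_smul, norm_inv]
      have h2 : 0 < ‖s - t‖ := norm_pos_iff.2 (sub_ne_zero.2 hs2.2)
      rw [inv_mul_le_iff₀ h2, mul_comm]
      exact h1
  have heq : ∀ j : ℕ, (j : ℕ∞) ≤ k → ∀ t ∈ I, iteratedDerivWithin j (fun t => ∑' n, u n t) I t =
      ∑' n, iteratedDerivWithin j (u n) I t := by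
    intro j
    induction j with
    | zero => intro _ t _; simp only [iteratedDerivWithin_zero]
    | succ j ih =>
      intro hj t ht
      have hj' : (j : ℕ∞) ≤ k := le_trans (by exact_mod_cast Nat.le_succ j) hj
      rw [iteratedDerivWithin_succ, derivWithin_congr (ih hj') (ih hj' t ht)]
      exact (hder j hj t ht).derivWithin (hU t ht)
  apply contDiffOn_of_continuousOn_differentiableOn_deriv
  · intro j hj
    have hj' : (j : ℕ∞) ≤ k := by exact_mod_cast hj
    exact (hcont j hj').congr (heq j hj')
  · intro j hj
    have hj' : (j : ℕ∞) < k := by exact_mod_cast hj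
    intro t ht
    exact ((hder j (by exact_mod_cast Order.add_one_le_of_lt hj') t ht).differentiableWithinAt).congr
      (heq j hj'.le) (heq j hj'.le t ht)


theorem aux_ck_nhds {k : ℕ∞} {I : Set ℝ} {γ : ℝ → ℂ} (f : CkGamma k I γ) {L : Set ℝ} (hL : L ⊆ I)
    (hLc : IsCompact L) {ε : ℝ} (hε : 0 < ε) :
    {g : CkGamma k I γ | ∀ t ∈ L, ‖g.1 (γ t) - f.1 (γ t)‖ ≤ ε} ∈ @nhds _ (ckTop k I γ) f := by
  let _ := ckTop k I γ
  have hc : Continuous (fun (f : CkGamma k I γ) (j : ℕ) =>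
      UniformOnFun.ofFun {K : Set ↥I | IsCompact K}
        (fun t : ↥I => if (j : ℕ∞) ≤ k then
            iteratedDerivWithin j (fun s => f.1 (γ s)) I (t : ℝ) else 0)) :=
    continuous_induced_dom
  have h0 := ((continuous_apply 0).comp hc).tendsto f
  rw [UniformOnFun.tendsto_iff_tendstoUniformlyOn] at h0
  have hK : IsCompact ((↑) ⁻¹' L : Set I) := by
    rw [Subtype.isCompact_iff, Subtype.image_preimage_coe, inter_eq_right.2 hL]
    exact hLc
  have h1 := Metric.tendstoUniformlyOn_iff.1 (h0 _ hK) ε hε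
  filter_upwards [h1] with g hg t ht
  have h2 := hg ⟨t, hL ht⟩ ht
  simp [dist_eq_norm] at h2
  rw [norm_sub_rev]
  exact h2.le

theorem aux_ck_tendsto {k : ℕ∞} {I : Set ℝ} (hU : UniqueDiffOn ℝ I) {γ : ℝ → ℂ}
    (f : CkGamma k I γ) {h : ℂ → ℂ} (hh : ContDiffOn ℝ k (fun t => h (γ t)) I)
    (g : ℕ → CkGamma k I γ) (hg : ∀ m : ℕ, (g m).1 = fun z => f.1 z + (((1 / ((m : ℝ) + 1) : ℝ)) : ℂ) * h z) :
    Tendsto g atTop (@nhds _ (ckTop k I γ) f) := by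
  let _ := ckTop k I γ
  have hn : 𝓝 f = comap (fun (f : CkGamma k I γ) (j : ℕ) =>
      UniformOnFun.ofFun {K : Set ↥I | IsCompact K}
        (fun t : ↥I => if (j : ℕ∞) ≤ k then
            iteratedDerivWithin j (fun s => f.1 (γ s)) I (t : ℝ) else 0)) (𝓝 _) :=
    nhds_induced _ _
  rw [hn, tendsto_comap_iff, tendsto_pi_nhds]
  intro j
  rw [UniformOnFun.tendsto_iff_tendstoUniformlyOn]
  intro K hK
  by_cases hj : (j : ℕ∞) ≤ k
  · have hKc : IsCompact ((↑) '' K : Set ℝ) := IsCompact.image hK continuous_subtype_val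
    obtain ⟨B, hB⟩ := hKc.exists_bound_of_continuousOn
      ((hh.continuousOn_iteratedDerivWithin (m := j) (by exact_mod_cast hj) hU).mono (by
        rintro _ ⟨t, -, rfl⟩; exact t.2))
    rw [Metric.tendstoUniformlyOn_iff]
    intro ε hε
    have hl : Tendsto (fun m : ℕ => 1 / ((m : ℝ) + 1) * |B|) atTop (𝓝 (0 * |B|)) :=
      tendsto_one_div_add_atTop_nhds_zero_nat.mul_const _
    rw [zero_mul] at hl
    filter_upwards [hl.eventually (gt_mem_nhds hε)] with m hm t ht
    have e : iteratedDerivWithin j (fun s => (g m).1 (γ s)) I (t : ℝ) =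
        iteratedDerivWithin j (fun s => f.1 (γ s)) I t +
          (((1 / ((m : ℝ) + 1) : ℝ)) : ℂ) * iteratedDerivWithin j (fun s => h (γ s)) I t := by
      rw [hg m]
      have c1 : ContDiffWithinAt ℝ j (fun s => f.1 (γ s)) I t := (f.2.of_le (by exact_mod_cast hj)) t t.2
      have c2 : ContDiffWithinAt ℝ j (fun s => h (γ s)) I t := (hh.of_le (by exact_mod_cast hj)) t t.2
      rw [← iteratedDerivWithin_const_mul t.2 hU _ c2]
      exact iteratedDerivWithin_fun_add t.2 hU c1 (contDiffWithinAt_const.mul c2)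
    simp only [Function.comp_apply, UniformOnFun.toFun_ofFun, if_pos hj, dist_eq_norm]
    rw [e, sub_add_cancel_left, norm_neg, norm_mul, Complex.norm_real,
      Real.norm_of_nonneg (by positivity)]
    refine lt_of_le_of_lt (mul_le_mul_of_nonneg_left ?_ (by positivity)) hm
    exact (hB t ⟨t, ht, rfl⟩).trans (le_abs_self B)
  · simp only [Function.comp_def, if_neg hj]
    rw [Metric.tendstoUniformlyOn_iff]
    intro ε hε
    filter_upwards with m t ht
    simpa using hε



theorem aux_pert {I : Set ℝ} (hI : I.OrdConnected) (hU : UniqueDiffOn ℝ I) {k : ℕ∞} {γ : ℝ → ℂ}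
    (hγ : ContDiffOn ℝ k γ I) (lam : ℕ → ℂ) (hlam : ∀ n, lam n ∉ γ '' I) :
    ∃ c : ℕ → ℝ, (∀ n, 0 < c n) ∧
      (∀ L ⊆ I, IsCompact L → ∃ C : ℕ → ℝ, Summable C ∧ ∀ n, ∀ t ∈ L,
        ‖(c n : ℂ) * (1 / (γ t - lam n))‖ ≤ C n) ∧
      ∀ x : ℕ → unitInterval,
        ContDiffOn ℝ k (fun t => ∑' n, ((x n : ℝ) : ℂ) * ((c n : ℂ) * (1 / (γ t - lam n)))) I := by
  obtain ⟨K, hKc, hKI, hKm, hKex⟩ := aux_exh hI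
  have hg : ∀ n, ContDiffOn ℝ k (fun t => 1 / (γ t - lam n)) I := by
    intro n
    simp only [one_div]
    exact (hγ.sub contDiffOn_const).inv (fun t ht h => hlam n ⟨t, ht, sub_eq_zero.1 h⟩)
  have hB : ∀ (n j : ℕ) (L : Set ℝ), ∃ B : ℝ, 0 ≤ B ∧ ((j : ℕ∞) ≤ k → L ⊆ I → IsCompact L → ∀ t ∈ L,
      ‖iteratedDerivWithin j (fun t => 1 / (γ t - lam n)) I t‖ ≤ B) := by
    intro n j L
    by_cases h : (j : ℕ∞) ≤ k ∧ L ⊆ I ∧ IsCompact L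
    · obtain ⟨B, hB⟩ := h.2.2.exists_bound_of_continuousOn
        (((hg n).continuousOn_iteratedDerivWithin (m := j) (by exact_mod_cast h.1) hU).mono h.2.1)
      exact ⟨|B|, abs_nonneg _, fun _ _ _ t ht => (hB t ht).trans (le_abs_self B)⟩
    · exact ⟨0, le_rfl, fun h1 h2 h3 => absurd ⟨h1, h2, h3⟩ h⟩
  choose B hB0 hB using hB
  have hS0 : ∀ n, 0 ≤ ∑ j ∈ Finset.range (n + 1), B n j (K n) := fun n =>
    Finset.sum_nonneg fun j _ => hB0 n j _
  set c : ℕ → ℝ := fun n => (1 / 2) ^ n / (1 + ∑ j ∈ Finset.range (n + 1), B n j (K n)) with hc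
  have hc0 : ∀ n, 0 < c n := fun n => by
    have := hS0 n
    simp only [hc]; positivity
  have hcb : ∀ n j, j ≤ n → c n * B n j (K n) ≤ (1 / 2) ^ n := by
    intro n j hj
    have h1 : B n j (K n) ≤ ∑ j ∈ Finset.range (n + 1), B n j (K n) :=
      Finset.single_le_sum (f := fun j => B n j (K n)) (fun j _ => hB0 n j _)
        (Finset.mem_range.2 (by omega))
    have := hS0 n
    simp only [hc]
    rw [div_mul_eq_mul_div, div_le_iff₀ (by positivity)]
    exact mul_le_mul_of_nonneg_left (by linarith) (by positivity)
  have hmain : ∀ j : ℕ, (j : ℕ∞) ≤ k → ∀ L ⊆ I, IsCompact L → ∃ C : ℕ → ℝ, Summable C ∧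
      ∀ n, ∀ t ∈ L, c n * ‖iteratedDerivWithin j (fun t => 1 / (γ t - lam n)) I t‖ ≤ C n := by
    intro j hj L hL hLc
    obtain ⟨N, hN⟩ := hKex L hL hLc
    refine ⟨fun n => (1 / 2) ^ n + if n < max N j then c n * B n j L else 0, ?_, ?_⟩
    · refine Summable.add (summable_geometric_of_lt_one (by norm_num) (by norm_num)) ?_
      refine summable_of_ne_finset_zero (s := Finset.range (max N j)) fun n hn => ?_
      rw [if_neg (by simpa using hn)]
    · intro n t ht
      by_cases hn : n < max N j
      · simp only [if_pos hn]
        have h1 := mul_le_mul_of_nonneg_left (hB n j L hj hL hLc t ht) (hc0 n).le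
        have h2 : (0 : ℝ) ≤ (1 / 2) ^ n := by positivity
        linarith
      · simp only [if_neg hn, add_zero]
        push Not at hn
        have h1 : t ∈ K n := hKm ((le_max_left N j).trans hn) (hN ht)
        exact (mul_le_mul_of_nonneg_left (hB n j (K n) hj (hKI n) (hKc n) t h1) (hc0 n).le).trans
          (hcb n j ((le_max_right N j).trans hn))
  refine ⟨c, hc0, ?_, ?_⟩
  · intro L hL hLc
    obtain ⟨C, hC, hCb⟩ := hmain 0 (by simp) L hL hLc
    refine ⟨C, hC, fun n t ht => ?_⟩
    have := hCb n t ht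
    rw [iteratedDerivWithin_zero] at this
    rwa [norm_mul, Complex.norm_real, Real.norm_of_nonneg (hc0 n).le]
  · intro x
    refine aux_series hI hU (fun n => contDiffOn_const.mul (contDiffOn_const.mul (hg n))) ?_
    intro j hj L hL hLc
    obtain ⟨C, hC, hCb⟩ := hmain j hj L hL hLc
    refine ⟨C, hC, fun n t ht => ?_⟩
    have c2 : ContDiffWithinAt ℝ j (fun t => 1 / (γ t - lam n)) I t :=
      ((hg n).of_le (by exact_mod_cast hj)) t (hL ht)
    rw [iteratedDerivWithin_const_mul (hL ht) hU _ (contDiffWithinAt_const.mul c2),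
      iteratedDerivWithin_const_mul (hL ht) hU _ c2, norm_mul, norm_mul, Complex.norm_real,
      Complex.norm_real, Real.norm_of_nonneg (hc0 n).le, Real.norm_of_nonneg (x n).2.1]
    refine le_trans ?_ (hCb n t ht)
    exact mul_le_of_le_one_left (by have := hc0 n; positivity) (x n).2.2

theorem aux_density {I : Set ℝ} {γ : ℝ → ℂ} (hγ : ContinuousOn γ I) (f : ℂ → ℂ)
    (d : ℕ → ℂ × ℝ × ℝ × ℝ × ℂ)
    (hd : ∀ n, AuxGood I γ (d n).1 (d n).2.1 (d n).2.2.1 (d n).2.2.2.1 (d n).2.2.2.2)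
    (lam : ℕ → ℂ)
    (hlam : ∀ n, lam n ∈ auxV γ (d n).1 (d n).2.1 (d n).2.2.1 (d n).2.2.2.1 (d n).2.2.2.2)
    {c : ℕ → ℝ} (hc0 : ∀ n, 0 < c n)
    (hcb : ∀ L ⊆ I, IsCompact L → ∃ C : ℕ → ℝ, Summable C ∧ ∀ n, ∀ t ∈ L,
        ‖(c n : ℂ) * (1 / (γ t - lam n))‖ ≤ C n) :
    ∃ x : ℕ → unitInterval, ∀ (m n M : ℕ),
      ¬ AuxE γ (d n).1 (d n).2.1 (d n).2.2.1 (d n).2.2.2.1 (d n).2.2.2.2 M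
        (fun z => f z + ((1 / ((m : ℝ) + 1) : ℝ) : ℂ) *
          ∑' i, ((x i : ℝ) : ℂ) * ((c i : ℂ) * (1 / (z - lam i)))) := by
  set Z : ℕ × ℕ × ℕ → Set (ℕ → unitInterval) := fun i => {x |
      AuxE γ (d i.2.1).1 (d i.2.1).2.1 (d i.2.1).2.2.1 (d i.2.1).2.2.2.1 (d i.2.1).2.2.2.2 i.2.2
        (fun z => f z + ((1 / ((i.1 : ℝ) + 1) : ℝ) : ℂ) *
          ∑' i, ((x i : ℝ) : ℂ) * ((c i : ℂ) * (1 / (z - lam i))))} with hZ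
  have hZm : ∀ m n M x, x ∈ Z (m, n, M) ↔
      AuxE γ (d n).1 (d n).2.1 (d n).2.2.1 (d n).2.2.2.1 (d n).2.2.2.2 M
        (fun z => f z + ((1 / ((m : ℝ) + 1) : ℝ) : ℂ) *
          ∑' i, ((x i : ℝ) : ℂ) * ((c i : ℂ) * (1 / (z - lam i)))) := fun _ _ _ _ => Iff.rfl
  have hsm : ∀ t ∈ I, Summable fun i => ‖(c i : ℂ) * (1 / (γ t - lam i))‖ := by
    intro t ht
    obtain ⟨C, hC, hCb⟩ := hcb {t} (singleton_subset_iff.2 ht) isCompact_singleton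
    exact Summable.of_nonneg_of_le (fun i => norm_nonneg _) (fun i => hCb i t rfl) hC
  have hsx : ∀ t ∈ I, ∀ x : ℕ → unitInterval,
      Summable fun i => ((x i : ℝ) : ℂ) * ((c i : ℂ) * (1 / (γ t - lam i))) := by
    intro t ht x
    refine Summable.of_norm_bounded (hsm t ht) fun i => ?_
    rw [norm_mul, Complex.norm_real, Real.norm_of_nonneg (x i).2.1]
    exact mul_le_of_le_one_left (norm_nonneg _) (x i).2.2
  have hdiff : ∀ t ∈ I, ∀ x y : ℕ → unitInterval,
      (∑' i, ((x i : ℝ) : ℂ) * ((c i : ℂ) * (1 / (γ t - lam i)))) -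
      (∑' i, ((y i : ℝ) : ℂ) * ((c i : ℂ) * (1 / (γ t - lam i)))) =
      ∑' i, (((x i : ℝ) - (y i : ℝ) : ℝ) : ℂ) * ((c i : ℂ) * (1 / (γ t - lam i))) := by
    intro t ht x y
    rw [← (hsx t ht x).tsum_sub (hsx t ht y)]
    congr 1
    ext i
    push_cast
    ring
  have hclosed : ∀ i, IsClosed (Z i) := by
    rintro ⟨m, n, M⟩
    have hgd := hd n
    apply isClosed_of_closure_subset
    intro x hx
    rw [hZm]
    apply aux_closed (hγ.mono hgd.1) hgd
    intro ε hε
    obtain ⟨C, hC, hCb⟩ := hcb _ hgd.1 isCompact_Icc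
    have hC0 : ∀ i, 0 ≤ |C i| := fun i => abs_nonneg _
    have hC' : Summable fun i => |C i| := hC.abs
    have hcont : Continuous fun y : ℕ → unitInterval => ∑' i, |(y i : ℝ) - (x i : ℝ)| * |C i| := by
      refine continuous_tsum (fun i => by fun_prop) hC' fun i y => ?_
      rw [norm_mul, Real.norm_eq_abs, Real.norm_eq_abs, abs_abs, abs_abs]
      refine mul_le_of_le_one_left (hC0 i) ?_
      rw [abs_le]
      constructor <;> linarith [(y i).2.1, (y i).2.2, (x i).2.1, (x i).2.2]
    have hsC : ∀ y : ℕ → unitInterval, Summable fun i => |(y i : ℝ) - (x i : ℝ)| * |C i| := by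
      intro y
      refine Summable.of_nonneg_of_le (fun i => by positivity) (fun i => ?_) hC'
      refine mul_le_of_le_one_left (hC0 i) ?_
      rw [abs_le]
      constructor <;> linarith [(y i).2.1, (y i).2.2, (x i).2.1, (x i).2.2]
    have hopen : IsOpen {y : ℕ → unitInterval | ∑' i, |(y i : ℝ) - (x i : ℝ)| * |C i| < ε} :=
      isOpen_lt hcont continuous_const
    obtain ⟨y, hy1, hy2⟩ := mem_closure_iff.1 hx _ hopen (by simpa using hε)
    refine ⟨_, (hZm _ _ _ _).1 hy2, fun t ht => ?_⟩
    have htI := hgd.1 ht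
    rw [add_sub_add_left_eq_sub, ← mul_sub, hdiff t htI y x, norm_mul, Complex.norm_real,
      Real.norm_of_nonneg (by positivity)]
    have h1 : ‖∑' i, (((y i : ℝ) - (x i : ℝ) : ℝ) : ℂ) * ((c i : ℂ) * (1 / (γ t - lam i)))‖ ≤
        ∑' i, |(y i : ℝ) - (x i : ℝ)| * |C i| := by
      refine tsum_of_norm_bounded (hsC y).hasSum fun i => ?_
      rw [norm_mul, Complex.norm_real, Real.norm_eq_abs]
      exact mul_le_mul_of_nonneg_left ((hCb i t ht).trans (le_abs_self _)) (abs_nonneg _)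
    have h2 : 1 / ((m : ℝ) + 1) ≤ 1 := by
      rw [div_le_one (by positivity)]
      linarith [Nat.cast_nonneg (α := ℝ) m]
    have h3 : ∑' i, |(y i : ℝ) - (x i : ℝ)| * |C i| < ε := hy1
    exact (mul_le_of_le_one_left (norm_nonneg _) h2).trans (h1.trans h3.le)
  have hZint : ∀ i, interior (Z i) = ∅ := by
    rintro ⟨m, n, M⟩
    have hgd := hd n
    by_contra hne
    obtain ⟨x, hx⟩ := nonempty_iff_ne_empty.2 hne
    have hup : Continuous fun s : unitInterval => Function.update x n s :=
      continuous_const.update n continuous_id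
    have hev : ∀ᶠ s in 𝓝[≠] (x n), Function.update x n s ∈ interior (Z (m, n, M)) := by
      apply nhdsWithin_le_nhds
      apply hup.continuousAt.preimage_mem_nhds
      apply isOpen_interior.mem_nhds
      simpa using hx
    obtain ⟨s, hs1, hs2⟩ := (hev.and self_mem_nhdsWithin).exists
    have e1 := (hZm _ _ _ _).1 (interior_subset hs1)
    have e2 := (hZm _ _ _ _).1 (interior_subset hx)
    have := aux_uniq (hγ.mono hgd.1) hgd (hlam n) e1 e2
      (a := ((1 / ((m : ℝ) + 1) : ℝ) : ℂ) * ((((s : ℝ) - (x n : ℝ) : ℝ) : ℂ) * (c n : ℂ))) (by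
        intro t ht
        have htI := hgd.1 ht
        rw [add_sub_add_left_eq_sub, ← mul_sub, hdiff t htI, tsum_eq_single n]
        · simp only [Function.update_self]
          ring
        · intro i hi
          simp [Function.update_of_ne hi])
    have hm1 : (1 / ((m : ℝ) + 1)) ≠ 0 := by positivity
    have hs3 : (s : ℝ) - (x n : ℝ) ≠ 0 := sub_ne_zero.2 fun h => hs2 (Subtype.ext h)
    have h4 : (1 / ((m : ℝ) + 1)) * (((s : ℝ) - (x n : ℝ)) * c n) = 0 := by exact_mod_cast this
    exact mul_ne_zero hm1 (mul_ne_zero hs3 (hc0 n).ne') h4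
  have hdense : Dense (⋂ i, (Z i)ᶜ) :=
    dense_iInter_of_isOpen (fun i => (hclosed i).isOpen_compl)
      (fun i => interior_eq_empty_iff_dense_compl.1 (hZint i))
  obtain ⟨x, hx⟩ := hdense.nonempty
  exact ⟨x, fun m n M h => mem_iInter.1 hx (m, n, M) h⟩

theorem aux_main
    (l k : ℕ∞) (hkl : k ≤ l) (I : Set ℝ) (hI : I.OrdConnected)
    (γ : ℝ → ℂ) (hloc : LocallyInjOn γ I) (hγ : ContDiffOn ℝ l γ I) :
    @Dense (CkGamma k I γ) (ckTop k I γ) {f | ¬ SomewhereOneSidedHolExt I γ f.1} ∧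
    @IsGδ (CkGamma k I γ) (ckTop k I γ) {f | ¬ SomewhereOneSidedHolExt I γ f.1} := by
  have hγc : ContinuousOn γ I := hγ.continuousOn
  have hγk : ContDiffOn ℝ k γ I := hγ.of_le (by exact_mod_cast hkl)
  let D := {d : ℕ × ℚ × ℚ × ℚ × ℕ // AuxGood I γ (TopologicalSpace.denseSeq ℂ d.1) d.2.1 d.2.2.1
    d.2.2.2.1 (TopologicalSpace.denseSeq ℂ d.2.2.2.2)}
  let E : D → ℕ → (ℂ → ℂ) → Prop := fun d M f => AuxE γ (TopologicalSpace.denseSeq ℂ d.1.1) d.1.2.1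
    d.1.2.2.1 d.1.2.2.2.1 (TopologicalSpace.denseSeq ℂ d.1.2.2.2.2) M f
  have hiff : ∀ f : ℂ → ℂ, SomewhereOneSidedHolExt I γ f ↔ ∃ i : D × ℕ, E i.1 i.2 f := by
    intro f
    constructor
    · intro h
      obtain ⟨i, ρ, p, q, j, M, hg, hE⟩ := aux_top hI hγc hloc h
      exact ⟨(⟨(i, ρ, p, q, j), hg⟩, M), hE⟩
    · rintro ⟨⟨d, M⟩, hE⟩
      exact aux_top_conv d.2 hE
  constructor
  · by_cases hD : Nonempty D
    · obtain ⟨e, he⟩ := exists_surjective_nat D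
      have hU : UniqueDiffOn ℝ I := by
        obtain ⟨d⟩ := hD
        obtain ⟨hsub, -, -, s1, s2, -, -, hs, h1, h2, -, -⟩ := d.2
        refine uniqueDiffOn_convex hI.convex ⟨(s1 + s2) / 2, ?_⟩
        apply interior_mono hsub
        rw [interior_Icc]
        constructor <;> linarith
      have hl : ∀ n, ∃ lm ∈ auxV γ (TopologicalSpace.denseSeq ℂ (e n).1.1) (e n).1.2.1
          (e n).1.2.2.1 (e n).1.2.2.2.1 (TopologicalSpace.denseSeq ℂ (e n).1.2.2.2.2), lm ∉ γ '' I := by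
        intro n
        have hg := (e n).2
        obtain ⟨hsub, -, Ω, -, -, hJ, hΩ, -⟩ := hg
        exact aux_off hI hγc hloc (auxV_open (hγc.mono hsub)) (hJ.2.1.nonempty.mono hΩ)
      choose lam hlam1 hlam2 using hl
      obtain ⟨c, hc0, hcb, hcd⟩ := aux_pert hI hU hγk lam hlam2
      let _ := ckTop k I γ
      intro f
      obtain ⟨x, hx⟩ := aux_density hγc f.1 (fun n => (TopologicalSpace.denseSeq ℂ (e n).1.1,
        ((e n).1.2.1 : ℝ), ((e n).1.2.2.1 : ℝ), ((e n).1.2.2.2.1 : ℝ),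
        TopologicalSpace.denseSeq ℂ (e n).1.2.2.2.2)) (fun n => (e n).2) lam hlam1 hc0 hcb
      let g : ℕ → CkGamma k I γ := fun m => ⟨fun z => f.1 z + ((1 / ((m : ℝ) + 1) : ℝ) : ℂ) *
          ∑' i, ((x i : ℝ) : ℂ) * ((c i : ℂ) * (1 / (z - lam i))),
          f.2.add (contDiffOn_const.mul (hcd x))⟩
      have ht : Tendsto g atTop (𝓝 f) := aux_ck_tendsto hU f (hcd x) g (fun m => rfl)
      refine mem_closure_of_tendsto ht (Eventually.of_forall fun m => ?_)
      show ¬ SomewhereOneSidedHolExt I γ (g m).1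
      rw [hiff]
      rintro ⟨⟨d, M⟩, hE⟩
      obtain ⟨n, rfl⟩ := he d
      exact hx m n M hE
    · have : {f : CkGamma k I γ | ¬ SomewhereOneSidedHolExt I γ f.1} = univ := by
        ext f
        simp only [mem_setOf_eq, mem_univ, iff_true]
        rw [hiff]
        rintro ⟨i, -⟩
        exact hD ⟨i.1⟩
      rw [this]
      let _ := ckTop k I γ
      exact dense_univ
  · let _ := ckTop k I γ
    have : {f : CkGamma k I γ | ¬ SomewhereOneSidedHolExt I γ f.1} =
        ⋂ i : D × ℕ, {f : CkGamma k I γ | E i.1 i.2 f.1}ᶜ := by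
      ext f
      simp only [mem_iInter, mem_compl_iff, mem_setOf_eq]
      rw [hiff, not_exists]
    rw [this]
    refine IsGδ.iInter_of_isOpen fun i => IsClosed.isOpen_compl (self := ?_)
    apply isClosed_of_closure_subset
    intro f hf
    have hgd := i.1.2
    refine aux_closed (hγc.mono hgd.1) hgd fun ε hε => ?_
    obtain ⟨f', h1, h2⟩ := mem_closure_iff_nhds.1 hf _ (aux_ck_nhds f hgd.1 isCompact_Icc hε)
    exact ⟨f'.1, h2, h1⟩

end AuxProof

/-- Let `k ≤ l` in `{0,1,2,...} ∪ {∞}`, `I ⊆ ℝ` an interval and `γ : I → ℂ` locally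
injective of class `C^l` on `I`. The class of nowhere one-sided holomorphically
extendable functions `f ∈ C^k(γ)` is a dense and `Gδ` subset of `C^k(γ)`. -/
theorem nowhereOneSidedHolExt_dense_Gdelta
    (l k : ℕ∞) (hkl : k ≤ l) (I : Set ℝ) (hI : I.OrdConnected)
    (γ : ℝ → ℂ) (hloc : LocallyInjOn γ I) (hγ : ContDiffOn ℝ l γ I) :
    @Dense (CkGamma k I γ) (ckTop k I γ) {f | ¬ SomewhereOneSidedHolExt I γ f.1} ∧
    @IsGδ (CkGamma k I γ) (ckTop k I γ) {f | ¬ SomewhereOneSidedHolExt I γ f.1} := by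
  exact aux_main l k hkl I hI γ hloc hγ
end

section
/- Let p ∈ {0,1,2,...} ∪ {∞}, let Ω ⊆ ℂ be an open and bounded set, let L be a compact subset of Ω, and set G = Ω∖L. Suppose there exists a function f0 ∈ A^p(G) for which there exists no F0 ∈ A^p(Ω) with F0 = f0 on G. Then the set of functions f ∈ A^p(G) for which there exists no F ∈ A^p(Ω) with F = f on G is a dense and Gδ subset of A^p(G). -/
open Set Metric

/-- `f` belongs to `A^p(U)`: `f` is holomorphic on `U` and, for every integer
`j ≤ p`, the derivative `f⁽ʲ⁾` extends continuously to the closure of `U` in `ℂ`. -/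
def MemAp (p : ℕ∞) (U : Set ℂ) (f : ℂ → ℂ) : Prop :=
  DifferentiableOn ℂ f U ∧
    ∀ j : ℕ, (j : ℕ∞) ≤ p →
      ∃ g : ℂ → ℂ, ContinuousOn g (closure U) ∧ Set.EqOn g (iteratedDeriv j f) U

/-- The space `A^p(U)` as a type. -/
def ApSpace (p : ℕ∞) (U : Set ℂ) : Type :=
  {f : ℂ → ℂ // MemAp p U f}

/-- The topology of `A^p(U)` for bounded `U`: uniform convergence on the closure of
`U` of (the continuous extensions of) all derivatives `f⁽ʲ⁾`, `j ≤ p`; by density of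
`U` in its closure this is the topology of uniform convergence on `U` of the
derivatives `f⁽ʲ⁾`, `j ≤ p`. -/
noncomputable def apTop (p : ℕ∞) (U : Set ℂ) : TopologicalSpace (ApSpace p U) :=
  TopologicalSpace.induced
    (fun f => fun j : ℕ =>
      UniformFun.ofFun
        (fun z : ↥U => if (j : ℕ∞) ≤ p then iteratedDeriv j f.1 (z : ℂ) else 0))
    inferInstance


/-- `f ∈ A^p(G)` admits no extension in `A^p(Ω)`: there is no `F ∈ A^p(Ω)` with
`F = f` on `G`. -/
def NoApExtension (p : ℕ∞) (Ω G : Set ℂ) (f : ℂ → ℂ) : Prop :=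
  ¬ ∃ F : ℂ → ℂ, MemAp p Ω F ∧ Set.EqOn F f G

theorem memAp_of_extension {p : ℕ∞} {Ω L : Set ℂ} (hΩo : IsOpen Ω) (hL : IsCompact L)
    (hLΩ : L ⊆ Ω) {f F : ℂ → ℂ} (hf : MemAp p (Ω \ L) f) (hF : DifferentiableOn ℂ F Ω)
    (hE : Set.EqOn F f (Ω \ L)) : MemAp p Ω F := by
  classical
  have hGo : IsOpen (Ω \ L) := hΩo.sdiff hL.isClosed
  refine ⟨hF, fun j hj => ?_⟩
  obtain ⟨g, hg, hge⟩ := hf.2 j hj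
  have hEj := hE.iteratedDeriv_of_isOpen hGo j
  have hcont : ContinuousOn (iteratedDeriv j F) Ω := by
    have h := (hF.analyticOnNhd hΩo).iterated_deriv j
    rw [iteratedDeriv_eq_iterate]
    exact h.continuousOn
  refine ⟨fun z => if z ∈ Ω then iteratedDeriv j F z else g z, ?_, fun z hz => by simp [hz]⟩
  intro z hz
  by_cases hzΩ : z ∈ Ω
  · have h1 : ContinuousAt (iteratedDeriv j F) z := hcont.continuousAt (hΩo.mem_nhds hzΩ)
    refine (h1.congr ?_).continuousWithinAt
    filter_upwards [hΩo.mem_nhds hzΩ] with w hw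
    simp [hw]
  · have hzL : z ∈ Lᶜ := fun h => hzΩ (hLΩ h)
    have hLn : Lᶜ ∈ nhds z := hL.isClosed.isOpen_compl.mem_nhds hzL
    have hsub : closure Ω ∩ Lᶜ ⊆ closure (Ω \ L) := by
      rw [sdiff_eq]
      exact hL.isClosed.isOpen_compl.closure_inter
    have h1 : ContinuousWithinAt g (closure Ω ∩ Lᶜ) z :=
      (hg z (hsub ⟨hz, hzL⟩)).mono hsub
    have h2 : ContinuousWithinAt g (closure Ω) z :=
      (continuousWithinAt_inter hLn).1 h1
    refine h2.congr_of_eventuallyEq ?_ (by simp [hzΩ])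
    filter_upwards [mem_nhdsWithin_of_mem_nhds hLn] with w hw
    by_cases hwΩ : w ∈ Ω
    · simp only [hwΩ, if_true]
      rw [hEj ⟨hwΩ, hw⟩, hge ⟨hwΩ, hw⟩]
    · simp [hwΩ]

theorem norm_le_of_le_on_diff {Ω L : Set ℂ} (hΩo : IsOpen Ω) (hL : IsCompact L)
    (hLΩ : L ⊆ Ω) {F : ℂ → ℂ} (hF : DifferentiableOn ℂ F Ω) {C : ℝ}
    (hC : ∀ z ∈ Ω \ L, ‖F z‖ ≤ C) : ∀ z ∈ Ω, ‖F z‖ ≤ C := by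
  intro z hz
  by_cases hzL : z ∈ L
  · obtain ⟨U, hUo, hLU, hUΩ, hUc⟩ := exists_open_between_and_isCompact_closure hL hΩo hLΩ
    refine Complex.norm_le_of_forall_mem_frontier_norm_le (U := U)
      (hUc.isBounded.subset subset_closure) (hF.mono hUΩ).diffContOnCl ?_
      (subset_closure (hLU hzL))
    intro w hw
    rw [hUo.frontier_eq] at hw
    exact hC w ⟨hUΩ hw.1, fun h => hw.2 (hLU h)⟩
  · exact hC z ⟨hz, hzL⟩

theorem exists_extension_of_approx {Ω L : Set ℂ} (hΩo : IsOpen Ω) (hL : IsCompact L)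
    (hLΩ : L ⊆ Ω) {f : ℂ → ℂ}
    (h : ∀ ε > (0 : ℝ), ∃ F : ℂ → ℂ, DifferentiableOn ℂ F Ω ∧ ∀ z ∈ Ω \ L, ‖F z - f z‖ ≤ ε) :
    ∃ F : ℂ → ℂ, DifferentiableOn ℂ F Ω ∧ Set.EqOn F f (Ω \ L) := by
  choose! Φ hd hΦ using h
  let F : ℕ → ℂ → ℂ := fun n => Φ (1 / ((n : ℝ) + 1))
  have hpos : ∀ n : ℕ, (0 : ℝ) < 1 / ((n : ℝ) + 1) := fun n => by positivity
  have hlim := tendsto_one_div_add_atTop_nhds_zero_nat (𝕜 := ℝ)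
  have hdiff : ∀ n m, ∀ z ∈ Ω, ‖F n z - F m z‖ ≤ 1 / ((n : ℝ) + 1) + 1 / ((m : ℝ) + 1) := by
    intro n m
    refine norm_le_of_le_on_diff (F := fun z => F n z - F m z) hΩo hL hLΩ
      ((hd _ (hpos n)).sub (hd _ (hpos m))) ?_
    intro z hz
    have h1 := hΦ _ (hpos n) z hz
    have h2 := hΦ _ (hpos m) z hz
    calc ‖F n z - F m z‖ = ‖(F n z - f z) - (F m z - f z)‖ := by congr 1; ring
      _ ≤ ‖F n z - f z‖ + ‖F m z - f z‖ := norm_sub_le _ _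
      _ ≤ _ := add_le_add h1 h2
  have hcau : UniformCauchySeqOn F Filter.atTop Ω := by
    rw [Metric.uniformCauchySeqOn_iff]
    intro ε hε
    obtain ⟨N, hN⟩ := Filter.eventually_atTop.1 (hlim.eventually (gt_mem_nhds (half_pos hε)))
    refine ⟨N, fun m hm n hn z hz => ?_⟩
    rw [dist_eq_norm]
    have := hdiff m n z hz
    have h1 := hN m hm
    have h2 := hN n hn
    linarith
  have hpt : ∀ z ∈ Ω, ∃ y, Filter.Tendsto (fun n => F n z) Filter.atTop (nhds y) :=
    fun z hz => cauchySeq_tendsto_of_complete (hcau.cauchySeq hz)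
  choose! G hG using hpt
  have hunif := hcau.tendstoUniformlyOn_of_tendsto hG
  refine ⟨G, hunif.tendstoLocallyUniformlyOn.differentiableOn
    (Filter.Eventually.of_forall fun n => hd _ (hpos n)) hΩo, fun z hz => ?_⟩
  refine tendsto_nhds_unique (hG z hz.1) ?_
  rw [tendsto_iff_norm_sub_tendsto_zero]
  exact squeeze_zero (fun _ => norm_nonneg _) (fun n => hΦ _ (hpos n) z hz) hlim

theorem apTop_tendsto_iff {p : ℕ∞} {U : Set ℂ} {ι : Type} {l : Filter ι}
    (u : ι → ApSpace p U) (f : ApSpace p U) :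
    Filter.Tendsto u l (@nhds _ (apTop p U) f) ↔
      ∀ j : ℕ, (j : ℕ∞) ≤ p → ∀ ε > (0 : ℝ), ∀ᶠ i in l, ∀ z ∈ U,
        ‖iteratedDeriv j f.1 z - iteratedDeriv j (u i).1 z‖ < ε := by
  unfold apTop
  rw [nhds_induced, Filter.tendsto_comap_iff, tendsto_pi_nhds]
  refine forall_congr' fun j => ?_
  rw [UniformFun.tendsto_iff_tendstoUniformly, Metric.tendstoUniformly_iff]
  by_cases hj : (j : ℕ∞) ≤ p
  · simp [hj, dist_eq_norm, UniformFun.toFun, UniformFun.ofFun]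
  · simp only [hj, false_imp_iff, iff_true]
    intro ε hε
    refine Filter.Eventually.of_forall fun i z => ?_
    simpa [UniformFun.toFun, UniformFun.ofFun, hj] using hε

theorem iteratedDeriv_add_mul {U : Set ℂ} (hU : IsOpen U) {f g : ℂ → ℂ}
    (hf : DifferentiableOn ℂ f U) (hg : DifferentiableOn ℂ g U) (c : ℂ) (j : ℕ) :
    ∀ z ∈ U, iteratedDeriv j (fun z => f z + c * g z) z =
      iteratedDeriv j f z + c * iteratedDeriv j g z := by
  intro z hz
  have h1 : ContDiffAt ℂ j f z := (hf.contDiffOn hU).contDiffAt (hU.mem_nhds hz)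
  have h2 : ContDiffAt ℂ j g z := (hg.contDiffOn hU).contDiffAt (hU.mem_nhds hz)
  rw [iteratedDeriv_fun_add h1 (contDiffAt_const.mul h2), iteratedDeriv_const_mul_field]

theorem memAp_add_mul {p : ℕ∞} {U : Set ℂ} (hU : IsOpen U) {f g : ℂ → ℂ}
    (hf : MemAp p U f) (hg : MemAp p U g) (c : ℂ) : MemAp p U (fun z => f z + c * g z) := by
  refine ⟨hf.1.add (hg.1.const_mul c), fun j hj => ?_⟩
  obtain ⟨a, ha, hae⟩ := hf.2 j hj
  obtain ⟨b, hb, hbe⟩ := hg.2 j hj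
  refine ⟨fun z => a z + c * b z, ha.add (continuousOn_const.mul hb), fun z hz => ?_⟩
  simp only [iteratedDeriv_add_mul hU hf.1 hg.1 c j z hz, hae hz, hbe hz]

/-- Let `p ∈ {0,1,2,...} ∪ {∞}`, `Ω ⊆ ℂ` open and bounded, `L ⊆ Ω` compact and
`G = Ω \ L`. If some `f0 ∈ A^p(G)` admits no extension `F0 ∈ A^p(Ω)` with `F0 = f0`
on `G`, then the set of `f ∈ A^p(G)` admitting no extension `F ∈ A^p(Ω)` with
`F = f` on `G` is a dense and `Gδ` subset of `A^p(G)`. -/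
theorem noApExtension_dense_Gdelta
    (p : ℕ∞) (Ω : Set ℂ) (hΩo : IsOpen Ω) (hΩb : Bornology.IsBounded Ω)
    (L : Set ℂ) (hL : IsCompact L) (hLΩ : L ⊆ Ω)
    (f0 : ℂ → ℂ) (hf0 : MemAp p (Ω \ L) f0)
    (hne : NoApExtension p Ω (Ω \ L) f0) :
    @Dense (ApSpace p (Ω \ L)) (apTop p (Ω \ L))
      {f | NoApExtension p Ω (Ω \ L) f.1} ∧
    @IsGδ (ApSpace p (Ω \ L)) (apTop p (Ω \ L))
      {f | NoApExtension p Ω (Ω \ L) f.1} := by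
  classical
  have hGo : IsOpen (Ω \ L) := hΩo.sdiff hL.isClosed
  letI : TopologicalSpace (ApSpace p (Ω \ L)) := apTop p (Ω \ L)
  constructor
  · intro f
    by_cases hfE : NoApExtension p Ω (Ω \ L) f.1
    · exact subset_closure hfE
    have hfE' : ∃ F : ℂ → ℂ, MemAp p Ω F ∧ Set.EqOn F f.1 (Ω \ L) := not_not.1 hfE
    obtain ⟨F, hF, hFe⟩ := hfE'
    let c : ℕ → ℂ := fun n => 1 / ((n : ℂ) + 1)
    have hc0 : ∀ n, c n ≠ 0 := fun n => one_div_ne_zero (Nat.cast_add_one_ne_zero n)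
    have hlim : Filter.Tendsto c Filter.atTop (nhds 0) :=
      tendsto_one_div_add_atTop_nhds_zero_nat (𝕜 := ℂ)
    let u : ℕ → ApSpace p (Ω \ L) := fun n =>
      ⟨fun z => f.1 z + c n * f0 z, memAp_add_mul hGo f.2 hf0 (c n)⟩
    have hu : Filter.Tendsto u Filter.atTop (nhds f) := by
      refine (apTop_tendsto_iff u f).2 fun j hj ε hε => ?_
      obtain ⟨g, hg, hge⟩ := hf0.2 j hj
      have hK : IsCompact (closure (Ω \ L)) := (hΩb.subset sdiff_subset).isCompact_closure
      obtain ⟨C, hC⟩ := hK.exists_bound_of_continuousOn hg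
      have h1 : Filter.Tendsto (fun n => ‖c n‖ * (|C| + 1)) Filter.atTop (nhds 0) := by
        simpa using hlim.norm.mul_const (|C| + 1)
      filter_upwards [h1.eventually (gt_mem_nhds hε)] with n hn z hz
      refine lt_of_le_of_lt ?_ hn
      have h2 := hC z (subset_closure hz)
      rw [hge hz] at h2
      have h3 := iteratedDeriv_add_mul hGo f.2.1 hf0.1 (c n) j z hz
      change ‖iteratedDeriv j f.1 z - iteratedDeriv j (fun z => f.1 z + c n * f0 z) z‖ ≤ _
      rw [h3, sub_add_cancel_left, norm_neg, norm_mul]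
      have := le_abs_self C
      gcongr
      linarith
    refine mem_closure_of_tendsto hu (Filter.Eventually.of_forall fun n => ?_)
    rintro ⟨H, hH, hHe⟩
    refine hne ⟨fun z => (c n)⁻¹ * (H z - F z), ?_, ?_⟩
    · refine memAp_of_extension hΩo hL hLΩ hf0 ((hH.1.sub hF.1).const_mul _) ?_
      intro z hz
      have h1 : H z = f.1 z + c n * f0 z := hHe hz
      have := hc0 n
      simp only [h1, hFe hz]
      field_simp
      ring
    · intro z hz
      have h1 : H z = f.1 z + c n * f0 z := hHe hz
      have := hc0 n
      simp only [h1, hFe hz]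
      field_simp
      ring
  · refine IsOpen.isGδ ?_
    rw [← isClosed_compl_iff]
    refine isClosed_of_closure_subset fun f hf => ?_
    have hgoal : ∃ F : ℂ → ℂ, MemAp p Ω F ∧ Set.EqOn F f.1 (Ω \ L) := by
      suffices h : ∃ F : ℂ → ℂ, DifferentiableOn ℂ F Ω ∧ Set.EqOn F f.1 (Ω \ L) by
        obtain ⟨F, hF, hFe⟩ := h
        exact ⟨F, memAp_of_extension hΩo hL hLΩ f.2 hF hFe, hFe⟩
      refine exists_extension_of_approx hΩo hL hLΩ fun ε hε => ?_
      have h1 := (apTop_tendsto_iff (fun g : ApSpace p (Ω \ L) => g) f).1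
        Filter.tendsto_id 0 (by simp) ε hε
      obtain ⟨g, hg, hgE⟩ := mem_closure_iff_nhds.1 hf _ h1
      have hgE' : ∃ F : ℂ → ℂ, MemAp p Ω F ∧ Set.EqOn F g.1 (Ω \ L) := not_not.1 hgE
      obtain ⟨F, hF, hFe⟩ := hgE'
      refine ⟨F, hF.1, fun z hz => ?_⟩
      have h2 : ‖iteratedDeriv 0 f.1 z - iteratedDeriv 0 g.1 z‖ < ε := hg z hz
      rw [iteratedDeriv_zero, iteratedDeriv_zero] at h2
      rw [hFe hz, norm_sub_rev]
      exact h2.le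
    exact fun hno => hno hgoal
end
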